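/- arXiv:1810.00920 — 4 statements merged into one kernel-verified Lean document; each statement's English description precedes it below -/
import Mathlib

section
/- Let n ≥ 2k > 0 and let F be an intersecting family of k-element subsets of [n]. Then |F| ≤ C(n-1, k-1). Moreover, if n > 2k, equality holds only if F consists of all k-sets containing some fixed element. -/
open Finset

namespace EKR

variable {α : Type} [DecidableEq α]

/-- Upper bound, transported from `Fin n`. -/
theorem bound (V : Finset α) (k : ℕ) (hV : 2 * k ≤ V.card) (F : Finset (Finset α))
    (hF : F ⊆ V.powersetCard k) (hint : ∀ A ∈ F, ∀ B ∈ F, (A ∩ B).Nonempty) :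
    F.card ≤ (V.card - 1).choose (k - 1) := by
  classical
  let e : V ≃ Fin V.card := V.equivFin
  let g : Finset α → Finset (Fin V.card) := fun A => univ.filter (fun i => ((e.symm i : V) : α) ∈ A)
  have hg : ∀ A, ∀ x (hx : x ∈ V), e ⟨x, hx⟩ ∈ g A ↔ x ∈ A := by
    intro A x hx
    simp [g]
  have hsub : ∀ A ∈ F, A ⊆ V ∧ A.card = k := fun A hA => mem_powersetCard.1 (hF hA)
  have hinj : Set.InjOn g F := by
    intro A hA B hB hAB
    ext x
    by_cases hx : x ∈ V
    · rw [← hg A x hx, ← hg B x hx, hAB]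
    · exact ⟨fun h => absurd ((hsub A hA).1 h) hx, fun h => absurd ((hsub B hB).1 h) hx⟩
  rw [← card_image_of_injOn hinj]
  apply Finset.erdos_ko_rado
  · intro A' hA' B' hB' hd
    simp only [coe_image, Set.mem_image, mem_coe] at hA' hB'
    obtain ⟨A, hA, rfl⟩ := hA'
    obtain ⟨B, hB, rfl⟩ := hB'
    obtain ⟨x, hx⟩ := hint A hA B hB
    rw [mem_inter] at hx
    have hxV := (hsub A hA).1 hx.1
    exact (Finset.disjoint_left.1 hd) ((hg A x hxV).2 hx.1) ((hg B x hxV).2 hx.2)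
  · intro A' hA'
    simp only [coe_image, Set.mem_image, mem_coe] at hA'
    obtain ⟨A, hA, rfl⟩ := hA'
    rw [← (hsub A hA).2]
    apply card_bij (fun i _ => ((e.symm i : V) : α))
    · intro i hi
      simpa [g] using hi
    · intro i _ j _ h
      exact e.symm.injective (Subtype.ext h)
    · intro x hx
      have hxV := (hsub A hA).1 hx
      exact ⟨e ⟨x, hxV⟩, (hg A x hxV).2 hx, by simp⟩
  · omega

/-- Size of a star. -/
theorem card_star (V : Finset α) (k : ℕ) (hk : 0 < k) (x : α) (hx : x ∈ V) :
    ((V.powersetCard k).filter (fun S => x ∈ S)).card = (V.card - 1).choose (k - 1) := by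
  have h1 := card_filter_add_card_filter_not (s := V.powersetCard k) (fun S => x ∈ S)
  have h2 : (V.powersetCard k).filter (fun S => ¬ x ∈ S) = (V.erase x).powersetCard k := by
    ext S
    simp only [mem_filter, mem_powersetCard, subset_erase]
    tauto
  rw [h2, card_powersetCard, card_powersetCard, card_erase_of_mem hx] at h1
  obtain ⟨n, hn⟩ : ∃ n, V.card = n + 1 := ⟨V.card - 1, by have := card_pos.2 ⟨x, hx⟩; omega⟩
  obtain ⟨j, rfl⟩ : ∃ j, k = j + 1 := ⟨k - 1, by omega⟩
  rw [hn, Nat.choose_succ_succ'] at h1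
  rw [hn]
  simp only [Nat.add_sub_cancel] at h1 ⊢
  omega

theorem star_eq (V : Finset α) (k : ℕ) (hk : 0 < k) (x : α) (hx : x ∈ V) (F : Finset (Finset α))
    (hF : F ⊆ V.powersetCard k) (hc : F.card = (V.card - 1).choose (k - 1))
    (hs : ∀ A ∈ F, x ∈ A) : F = (V.powersetCard k).filter (fun S => x ∈ S) := by
  apply eq_of_subset_of_card_le
  · intro A hA
    exact mem_filter.2 ⟨hF hA, hs A hA⟩
  · rw [card_star V k hk x hx, hc]

/-- Connectivity of Kneser graphs. -/
theorem kneser (W : Finset α) (r : ℕ) (hW : 2 * r < W.card) (P : Finset α → Prop)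
    (hP : ∀ S ∈ W.powersetCard r, ∀ T ∈ W.powersetCard r, Disjoint S T → P S → P T)
    (T0 : Finset α) (hT0 : T0 ∈ W.powersetCard r) (hPT : P T0) :
    ∀ d, ∀ T ∈ W.powersetCard r, (T \ T0).card = d → P T := by
  intro d
  induction d with
  | zero =>
    intro T hT hd
    rw [mem_powersetCard] at hT hT0
    have h1 : T ⊆ T0 := by
      rw [card_eq_zero, sdiff_eq_empty_iff_subset] at hd
      exact hd
    have : T = T0 := eq_of_subset_of_card_le h1 (by omega)
    rwa [this]
  | succ d ih =>
    intro T hT hd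
    have hT' := mem_powersetCard.1 hT
    have hT0' := mem_powersetCard.1 hT0
    obtain ⟨a, ha⟩ : (T \ T0).Nonempty := card_pos.1 (by omega)
    have hcc : (T0 \ T).card = (T \ T0).card := by
      have := card_sdiff_add_card_inter T T0
      have h2 := card_sdiff_add_card_inter T0 T
      rw [inter_comm] at h2
      omega
    obtain ⟨b, hb⟩ : (T0 \ T).Nonempty := card_pos.1 (by omega)
    rw [mem_sdiff] at ha hb
    have hbe : b ∉ T.erase a := fun h => hb.2 (mem_of_mem_erase h)
    have hT1 : insert b (T.erase a) ∈ W.powersetCard r := by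
      rw [mem_powersetCard]
      constructor
      · intro y hy
        rcases mem_insert.1 hy with rfl | hy
        · exact hT0'.1 hb.1
        · exact hT'.1 (mem_of_mem_erase hy)
      · rw [card_insert_of_notMem hbe, card_erase_add_one ha.1, hT'.2]
    have hd1 : (insert b (T.erase a) \ T0).card = d := by
      have : insert b (T.erase a) \ T0 = (T \ T0).erase a := by
        ext y
        simp only [mem_sdiff, mem_insert, mem_erase]
        grind
      rw [this, card_erase_of_mem (mem_sdiff.2 ha), hd]
      rfl
    have hP1 := ih _ hT1 hd1
    have hbT : insert b T ⊆ W := insert_subset (hT0'.1 hb.1) hT'.1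
    obtain ⟨U, hU, hUc⟩ := exists_subset_card_eq (s := W \ insert b T) (n := r) (by
      rw [card_sdiff_of_subset hbT, card_insert_of_notMem hb.2]; omega)
    have hUm : U ∈ W.powersetCard r := mem_powersetCard.2 ⟨hU.trans sdiff_subset, hUc⟩
    have hUd : Disjoint U (insert b T) := disjoint_of_subset_left hU sdiff_disjoint
    have hPU : P U := hP _ hT1 _ hUm
      (disjoint_of_subset_left (insert_subset_insert b (erase_subset _ _)) hUd.symm) hP1
    exact hP _ hUm _ hT (disjoint_of_subset_right (subset_insert _ _) hUd) hPU

/-- The shift of a set. -/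
def sh (i m : α) (F : Finset (Finset α)) (A : Finset α) : Finset α :=
  if m ∈ A ∧ i ∉ A ∧ insert i (A.erase m) ∉ F then insert i (A.erase m) else A

theorem sh_injOn (i m : α) (F : Finset (Finset α)) : Set.InjOn (sh i m F) F := by
  intro A hA B hB h
  rw [mem_coe] at hA hB
  unfold sh at h
  split_ifs at h with h1 h2 h2
  · have hi : ∀ y, y ∈ insert i (A.erase m) ↔ y ∈ insert i (B.erase m) := fun y => by rw [h]
    ext y
    have := hi y
    simp only [mem_insert, mem_erase] at this
    grind
  · rw [h] at h1; exact absurd hB h1.2.2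
  · rw [← h] at h2; exact absurd hA h2.2.2
  · exact h

theorem sh_int (i m : α) (F : Finset (Finset α))
    (hint : ∀ A ∈ F, ∀ B ∈ F, (A ∩ B).Nonempty) :
    ∀ A ∈ F.image (sh i m F), ∀ B ∈ F.image (sh i m F), (A ∩ B).Nonempty := by
  have key : ∀ A ∈ F, ∀ B ∈ F, (m ∈ A ∧ i ∉ A ∧ insert i (A.erase m) ∉ F) →
      ¬ (m ∈ B ∧ i ∉ B ∧ insert i (B.erase m) ∉ F) → (insert i (A.erase m) ∩ B).Nonempty := by
    intro A hA B hB h1 h2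
    by_cases hiB : i ∈ B
    · exact ⟨i, by simp [hiB]⟩
    by_cases hmB : m ∈ B
    · have hB' : insert i (B.erase m) ∈ F := by
        by_contra h; exact h2 ⟨hmB, hiB, h⟩
      obtain ⟨y, hy⟩ := hint A hA _ hB'
      refine ⟨y, ?_⟩
      simp only [mem_inter, mem_insert, mem_erase] at hy ⊢
      grind
    · obtain ⟨y, hy⟩ := hint A hA _ hB
      refine ⟨y, ?_⟩
      simp only [mem_inter, mem_insert, mem_erase] at hy ⊢
      grind
  intro A' hA' B' hB'
  obtain ⟨A, hA, rfl⟩ := mem_image.1 hA'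
  obtain ⟨B, hB, rfl⟩ := mem_image.1 hB'
  unfold sh
  split_ifs with h1 h2 h2
  · exact ⟨i, by simp⟩
  · exact key A hA B hB h1 h2
  · rw [inter_comm]; exact key B hB A hA h2 h1
  · exact hint A hA B hB

theorem sh_sub (i m : α) (F : Finset (Finset α)) (V : Finset α) (k : ℕ) (hi : i ∈ V)
    (hF : F ⊆ V.powersetCard k) : F.image (sh i m F) ⊆ V.powersetCard k := by
  intro A' hA'
  obtain ⟨A, hA, rfl⟩ := mem_image.1 hA'
  unfold sh
  split_ifs with h1
  · have hA2 := mem_powersetCard.1 (hF hA)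
    rw [mem_powersetCard]
    constructor
    · exact insert_subset hi ((erase_subset _ _).trans hA2.1)
    · rw [card_insert_of_notMem (fun h => h1.2.1 (mem_of_mem_erase h)), card_erase_add_one h1.1,
        hA2.2]
  · exact hF hA

/-- If all sets `insert i T` belong to an intersecting family whose sets all meet `{i, m}`,
then it is a star at `i`. -/
theorem star_of_all (V : Finset α) (r : ℕ) (i m : α) (hi : i ∈ V) (hm : m ∈ V) (him : i ≠ m)
    (hV : 2 * (r + 1) < V.card) (F : Finset (Finset α)) (hF : F ⊆ V.powersetCard (r + 1))
    (hint : ∀ A ∈ F, ∀ B ∈ F, (A ∩ B).Nonempty) (hor : ∀ A ∈ F, i ∈ A ∨ m ∈ A)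
    (hall : ∀ T ∈ ((V.erase i).erase m).powersetCard r, insert i T ∈ F) : ∀ A ∈ F, i ∈ A := by
  intro A hA
  by_contra hiA
  have hmA := (hor A hA).resolve_left hiA
  have hA2 := mem_powersetCard.1 (hF hA)
  have hsub : insert i A ⊆ V := insert_subset hi hA2.1
  obtain ⟨U, hU, hUc⟩ := exists_subset_card_eq (s := V \ insert i A) (n := r) (by
      rw [card_sdiff_of_subset hsub, card_insert_of_notMem hiA]; omega)
  have := hall U (by
    rw [mem_powersetCard]
    refine ⟨?_, hUc⟩
    intro y hy
    have := hU hy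
    simp only [mem_sdiff, mem_insert, mem_erase] at this ⊢
    grind)
  obtain ⟨y, hy⟩ := hint _ this A hA
  rw [mem_inter, mem_insert] at hy
  rcases hy with ⟨rfl | h, h2⟩
  · exact hiA h2
  · have := hU h
    simp only [mem_sdiff, mem_insert] at this
    grind

theorem unshift (V : Finset α) (r : ℕ) (i m : α) (hi : i ∈ V) (hm : m ∈ V) (him : i ≠ m)
    (hV : 2 * (r + 1) < V.card) (F : Finset (Finset α)) (hF : F ⊆ V.powersetCard (r + 1))
    (hint : ∀ A ∈ F, ∀ B ∈ F, (A ∩ B).Nonempty)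
    (hc : F.card = (V.card - 1).choose r) (x : α) (hx : x ∈ V)
    (hs : ∀ A ∈ F.image (sh i m F), x ∈ A) : ∃ x ∈ V, ∀ A ∈ F, x ∈ A := by
  have hs' : ∀ A ∈ F, x ∈ sh i m F A := fun A hA => hs _ (mem_image_of_mem _ hA)
  by_cases hxi : x = i
  · subst hxi
    have hor : ∀ A ∈ F, x ∈ A ∨ m ∈ A := by
      intro A hA
      have := hs' A hA
      unfold sh at this
      split_ifs at this with h1
      · exact Or.inr h1.1
      · exact Or.inl this
    have hfull := star_eq V (r + 1) (by omega) x hx (F.image (sh x m F))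
      (sh_sub x m F V _ hx hF) (by rw [card_image_of_injOn (sh_injOn x m F), hc]; rfl) hs
    have hcol : ∀ T ∈ ((V.erase x).erase m).powersetCard r, insert x T ∈ F ∨ insert m T ∈ F := by
      intro T hT
      rw [mem_powersetCard] at hT
      have hxT : x ∉ T := fun h => by simpa using hT.1 h
      have hmT : m ∉ T := fun h => by simpa using hT.1 h
      have h1 : insert x T ∈ F.image (sh x m F) := by
        rw [hfull, mem_filter, mem_powersetCard]
        refine ⟨⟨insert_subset hx (hT.1.trans ((erase_subset _ _).trans (erase_subset _ _))), ?_⟩,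
          mem_insert_self _ _⟩
        rw [card_insert_of_notMem hxT, hT.2]
      obtain ⟨A, hA, hAT⟩ := mem_image.1 h1
      unfold sh at hAT
      split_ifs at hAT with h2
      · right
        have : insert m T = A := by
          have hh : ∀ y, y ∈ insert x (A.erase m) ↔ y ∈ insert x T := fun y => by rw [hAT]
          ext y
          have := hh y
          simp only [mem_insert, mem_erase] at this ⊢
          grind
        rwa [this]
      · left; rwa [← hAT]
    have hWc : 2 * r < ((V.erase x).erase m).card := by
      rw [card_erase_of_mem (mem_erase.2 ⟨him.symm, hm⟩), card_erase_of_mem hx]; omega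
    have hP : ∀ S ∈ ((V.erase x).erase m).powersetCard r,
        ∀ T ∈ ((V.erase x).erase m).powersetCard r, Disjoint S T →
        insert x S ∈ F → insert x T ∈ F := by
      intro S hS T hT hd h
      refine (hcol T hT).resolve_right fun h2 => ?_
      obtain ⟨y, hy⟩ := hint _ h _ h2
      rw [mem_powersetCard] at hS hT
      have hxT : x ∉ T := fun h => by simpa using hT.1 h
      have hmS : m ∉ S := fun h => by simpa using hS.1 h
      have := fun hyS : y ∈ S => Finset.disjoint_left.1 hd hyS
      simp only [mem_inter, mem_insert] at hy
      grind
    by_cases hex : ∃ T0 ∈ ((V.erase x).erase m).powersetCard r, insert x T0 ∈ F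
    · obtain ⟨T0, hT0, h0⟩ := hex
      refine ⟨x, hx, star_of_all V r x m hx hm him hV F hF hint hor ?_⟩
      intro T hT
      exact kneser _ r hWc (fun T => insert x T ∈ F) hP T0 hT0 h0 _ T hT rfl
    · refine ⟨m, hm, star_of_all V r m x hm hx him.symm hV F hF hint
        (fun A hA => (hor A hA).symm) ?_⟩
      intro T hT
      rw [erase_right_comm] at hT
      exact (hcol T hT).resolve_left fun h => hex ⟨T, hT, h⟩
  · refine ⟨x, hx, fun A hA => ?_⟩
    have := hs' A hA
    unfold sh at this
    split_ifs at this with h1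
    · rw [mem_insert] at this
      exact mem_of_mem_erase (this.resolve_left hxi)
    · exact this

theorem uniq (r : ℕ) : ∀ (V : Finset α), 2 * (r + 1) < V.card → ∀ (F : Finset (Finset α)),
    F ⊆ V.powersetCard (r + 1) → (∀ A ∈ F, ∀ B ∈ F, (A ∩ B).Nonempty) →
    F.card = (V.card - 1).choose r → ∃ x ∈ V, ∀ A ∈ F, x ∈ A := by
  induction r with
  | zero =>
    intro V hV F hF hint hc
    rw [Nat.choose_zero_right, card_eq_one] at hc
    obtain ⟨A, rfl⟩ := hc
    have hA := mem_powersetCard.1 (hF (mem_singleton_self A))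
    obtain ⟨x, hx⟩ : A.Nonempty := card_pos.1 (by omega)
    exact ⟨x, hA.1 hx, fun B hB => by rw [mem_singleton.1 hB]; exact hx⟩
  | succ r ih =>
    intro V hV
    obtain ⟨m, hm⟩ : V.Nonempty := card_pos.1 (by omega)
    suffices H : ∀ d, ∀ (F : Finset (Finset α)), (F.filter (fun A => m ∈ A)).card = d →
        F ⊆ V.powersetCard (r + 1 + 1) → (∀ A ∈ F, ∀ B ∈ F, (A ∩ B).Nonempty) →
        F.card = (V.card - 1).choose (r + 1) → ∃ x ∈ V, ∀ A ∈ F, x ∈ A from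
      fun F => H _ F rfl
    intro d
    induction d using Nat.strong_induction_on with
    | _ d ihd =>
    intro F hd hF hint hc
    by_cases hsh : ∀ i ∈ V, ∀ A ∈ F, m ∈ A → i ∉ A → insert i (A.erase m) ∈ F
    · -- the family is shifted away from `m`
      have hWc : (V.erase m).card = V.card - 1 := card_erase_of_mem hm
      set L := (F.filter (fun A => m ∈ A)).image (fun A => A.erase m) with hL
      have hLc : L.card = (F.filter (fun A => m ∈ A)).card := by
        apply card_image_of_injOn
        intro A hA B hB h
        simp only [coe_filter, Set.mem_setOf_eq] at hA hB
        simp only at h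
        rw [← insert_erase hA.2, ← insert_erase hB.2, h]
      have hLs : L ⊆ (V.erase m).powersetCard (r + 1) := by
        intro B hB
        obtain ⟨A, hA, rfl⟩ := mem_image.1 hB
        rw [mem_filter] at hA
        have hA2 := mem_powersetCard.1 (hF hA.1)
        rw [mem_powersetCard, card_erase_of_mem hA.2, hA2.2]
        exact ⟨erase_subset_erase _ hA2.1, rfl⟩
      have hLi : ∀ A ∈ L, ∀ B ∈ L, (A ∩ B).Nonempty := by
        intro A' hA' B' hB'
        obtain ⟨A, hA, rfl⟩ := mem_image.1 hA'
        obtain ⟨B, hB, rfl⟩ := mem_image.1 hB'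
        rw [mem_filter] at hA hB
        have hA2 := mem_powersetCard.1 (hF hA.1)
        have hB2 := mem_powersetCard.1 (hF hB.1)
        obtain ⟨z, hz, hz2⟩ : ∃ z ∈ V, z ∉ A ∪ B := by
          apply exists_mem_notMem_of_card_lt_card
          have := card_union_le A B
          omega
        rw [mem_union, not_or] at hz2
        obtain ⟨y, hy⟩ := hint _ (hsh z hz A hA.1 hA.2 hz2.1) B hB.1
        refine ⟨y, ?_⟩
        simp only [mem_inter, mem_insert, mem_erase] at hy ⊢
        grind
      have hNs : F.filter (fun A => ¬ m ∈ A) ⊆ (V.erase m).powersetCard (r + 1 + 1) := by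
        intro A hA
        rw [mem_filter] at hA
        have hA2 := mem_powersetCard.1 (hF hA.1)
        rw [mem_powersetCard, subset_erase]
        exact ⟨⟨hA2.1, hA.2⟩, hA2.2⟩
      have hb1 := bound (V.erase m) (r + 1) (by omega) L hLs hLi
      have hb2 := bound (V.erase m) (r + 1 + 1) (by omega) _ hNs
        (fun A hA B hB => hint A (mem_filter.1 hA).1 B (mem_filter.1 hB).1)
      have hsum := card_filter_add_card_filter_not (s := F) (fun A => m ∈ A)
      have hpas : (V.card - 1).choose (r + 1)
          = (V.card - 1 - 1).choose r + (V.card - 1 - 1).choose (r + 1) := by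
        obtain ⟨q, hq⟩ : ∃ q, V.card - 1 = q + 1 := ⟨V.card - 2, by omega⟩
        rw [hq]; exact Nat.choose_succ_succ _ _
      simp only [Nat.add_sub_cancel, hWc] at hb1 hb2
      have hLeq : L.card = (V.card - 1 - 1).choose r := by omega
      obtain ⟨x, hx, hxs⟩ := ih (V.erase m) (by omega) L hLs hLi (by rw [hWc]; exact hLeq)
      have hfull := star_eq (V.erase m) (r + 1) (by omega) x hx L hLs
        (by rw [hWc]; exact hLeq) hxs
      have hx' := mem_erase.1 hx
      refine ⟨x, hx'.2, fun B hB => ?_⟩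
      by_cases hmB : m ∈ B
      · exact mem_of_mem_erase
          (hxs (B.erase m) (mem_image.2 ⟨B, mem_filter.2 ⟨hB, hmB⟩, rfl⟩))
      by_contra hxB
      have hB2 := mem_powersetCard.1 (hF hB)
      have hsub : insert m (insert x B) ⊆ V := insert_subset hm (insert_subset hx'.2 hB2.1)
      obtain ⟨U, hU, hUc⟩ := exists_subset_card_eq (s := V \ insert m (insert x B)) (n := r) (by
        have h1 := card_insert_le m (insert x B)
        have h2 := card_insert_le x B
        rw [card_sdiff_of_subset hsub]; omega)
      have hUmem : ∀ y ∈ U, y ∈ V ∧ y ≠ m ∧ y ≠ x ∧ y ∉ B := by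
        intro y hy
        have := hU hy
        simpa only [mem_sdiff, mem_insert, not_or] using this
      have hUL : insert x U ∈ L := by
        rw [hfull, mem_filter, mem_powersetCard]
        refine ⟨⟨insert_subset hx fun y hy => ?_, ?_⟩, mem_insert_self _ _⟩
        · exact mem_erase.2 ⟨(hUmem y hy).2.1, (hUmem y hy).1⟩
        · rw [card_insert_of_notMem (fun h => (hUmem x h).2.2.1 rfl), hUc]
      obtain ⟨A, hA, hAU⟩ := mem_image.1 hUL
      rw [mem_filter] at hA
      obtain ⟨y, hy⟩ := hint A hA.1 B hB
      rw [mem_inter] at hy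
      have hyU : y ∈ insert x U := by
        rw [← hAU]
        exact mem_erase.2 ⟨fun h => hmB (h ▸ hy.2), hy.1⟩
      rcases mem_insert.1 hyU with rfl | hyU
      · exact hxB hy.2
      · exact (hUmem y hyU).2.2.2 hy.2
    · push Not at hsh
      obtain ⟨i, hi, A, hA, hmA, hiA, hnot⟩ := hsh
      have him : i ≠ m := fun h => hiA (h ▸ hmA)
      have hlt : ((F.image (sh i m F)).filter (fun A => m ∈ A)).card < d := by
        rw [← hd]
        apply card_lt_card
        rw [ssubset_iff_of_subset]
        · refine ⟨A, mem_filter.2 ⟨hA, hmA⟩, fun h => ?_⟩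
          obtain ⟨B, hB, hBA⟩ := mem_image.1 (mem_filter.1 h).1
          unfold sh at hBA
          split_ifs at hBA with h1
          · exact hiA (hBA ▸ mem_insert_self _ _)
          · subst hBA; exact h1 ⟨hmA, hiA, hnot⟩
        · intro C hC
          rw [mem_filter] at hC ⊢
          obtain ⟨B, hB, rfl⟩ := mem_image.1 hC.1
          refine ⟨?_, hC.2⟩
          have h3 := hC.2
          unfold sh at h3 ⊢
          split_ifs at h3 ⊢ with h1
          · simp [him.symm] at h3
          · exact hB
      obtain ⟨x, hx, hxs⟩ := ihd _ hlt (F.image (sh i m F)) rfl (sh_sub i m F V _ hi hF)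
        (sh_int i m F hint) (by rw [card_image_of_injOn (sh_injOn i m F), hc])
      exact unshift V (r + 1) i m hi hm him hV F hF hint hc x hx hxs

end EKR


/-- Erdős–Ko–Rado theorem: an intersecting family of `k`-subsets of `[n] = {1,…,n}` with
`n ≥ 2k > 0` has size at most `C(n-1, k-1)`; moreover, for `n > 2k`, equality holds only for
the family of all `k`-sets containing a fixed element. -/
theorem erdos_ko_rado (n k : ℕ) (hk : 0 < k) (hnk : 2 * k ≤ n)
    (F : Finset (Finset ℕ)) (hF : F ⊆ (Finset.Icc 1 n).powersetCard k)
    (hint : ∀ A ∈ F, ∀ B ∈ F, (A ∩ B).Nonempty) :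
    F.card ≤ (n - 1).choose (k - 1) ∧
    (2 * k < n → F.card = (n - 1).choose (k - 1) →
      ∃ i ∈ Finset.Icc 1 n,
        F = ((Finset.Icc 1 n).powersetCard k).filter (fun S => i ∈ S)) := by
  have hcard : (Finset.Icc 1 n).card = n := by simp
  refine ⟨?_, fun hlt hc => ?_⟩
  · have := EKR.bound (Finset.Icc 1 n) k (by omega) F hF hint
    rwa [hcard] at this
  · obtain ⟨r, rfl⟩ : ∃ r, k = r + 1 := ⟨k - 1, by omega⟩
    obtain ⟨x, hx, hs⟩ := EKR.uniq r (Finset.Icc 1 n) (by omega) F hF hint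
      (by rw [hcard]; exact hc)
    exact ⟨x, hx, EKR.star_eq _ _ hk x hx F hF (by rw [hcard]; exact hc) hs⟩
end

section
/- Let n > 2k > 0 and let F ⊆ C([n],k) be an intersecting family. If Δ(F) ≤ C(n-1,k-1) - C(n-u-1,k-1) for some integer u with 3 ≤ u ≤ k, then |F| ≤ C(n-1,k-1) + C(n-u-1,n-k-1) - C(n-u-1,k-1). -/
open Finset

/-- The degree of an element `i` in a family `F`. -/
def deg (F : Finset (Finset ℕ)) (i : ℕ) : ℕ := (F.filter (fun S => i ∈ S)).card

/-- The maximal degree `Δ(F)` of a family `F ⊆ 2^[n]`. -/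
def maxDeg (n : ℕ) (F : Finset (Finset ℕ)) : ℕ := (Finset.Icc 1 n).sup (deg F)


lemma fbd_choose_le {y p q : ℕ} (hpq : p ≤ q) (h : p + q ≤ y) : y.choose p ≤ y.choose q := by
  have h1 := Nat.choose_mul (n := y) (k := q) (s := p) hpq
  have h2 : q.choose p ≤ (y - p).choose (q - p) := by
    rw [← Nat.choose_symm hpq]
    exact Nat.choose_le_choose _ (by omega)
  have h3 : 0 < (y - p).choose (q - p) := Nat.choose_pos (by omega)
  have h4 : y.choose p * (y - p).choose (q - p) ≤ y.choose q * (y - p).choose (q - p) := by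
    rw [← h1]; exact Nat.mul_le_mul_left _ h2
  exact Nat.le_of_mul_le_mul_right h4 h3

lemma fbd_lym {α : Type*} [DecidableEq α] (X : Finset α) (D : Finset (Finset α)) (r a : ℕ)
    (hD : D ⊆ X.powersetCard r) (har : a ≤ r) (hX : #X ≤ a + r) :
    #D ≤ #{T ∈ X.powersetCard a | ∃ S ∈ D, T ⊆ S} := by
  set E := {T ∈ X.powersetCard a | ∃ S ∈ D, T ⊆ S} with hE
  have key : #D * r.choose a ≤ #E * (#X - a).choose (r - a) := by
    apply card_mul_le_card_mul (fun S T => T ⊆ S)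
    · intro S hS
      have hS' := mem_powersetCard.1 (hD hS)
      rw [← hS'.2, ← card_powersetCard]
      apply card_le_card
      intro T hT
      have hT' := mem_powersetCard.1 hT
      rw [mem_bipartiteAbove, hE, mem_filter, mem_powersetCard]
      exact ⟨⟨⟨hT'.1.trans hS'.1, hT'.2⟩, S, hS, hT'.1⟩, hT'.1⟩
    · intro T hT
      have hT' := mem_powersetCard.1 (mem_filter.1 hT).1
      have : #(X \ T) = #X - a := by rw [card_sdiff_of_subset hT'.1, hT'.2]
      rw [← this, ← card_powersetCard]
      apply card_le_card_of_injOn (fun S => S \ T)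
      · intro S hS
        have hS' := (mem_bipartiteBelow _).1 (mem_coe.1 hS)
        have hS2 := mem_powersetCard.1 (hD hS'.1)
        rw [mem_coe, mem_powersetCard]
        exact ⟨sdiff_subset_sdiff hS2.1 le_rfl, by
          rw [card_sdiff_of_subset hS'.2, hS2.2, hT'.2]⟩
      · intro S hS S' hS' h
        have h1 := ((mem_bipartiteBelow _).1 (mem_coe.1 hS)).2
        have h2 := ((mem_bipartiteBelow _).1 (mem_coe.1 hS')).2
        rw [← sdiff_union_of_subset h1, ← sdiff_union_of_subset h2]
        simp only at h
        rw [h]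
  have h2 : (#X - a).choose (r - a) ≤ r.choose a := by
    rw [← Nat.choose_symm har]
    exact Nat.choose_le_choose _ (by omega)
  exact Nat.le_of_mul_le_mul_right (key.trans (Nat.mul_le_mul_left _ h2)) (Nat.choose_pos har)

lemma fbd_exists_initSeg (N r s : ℕ) (hs : s ≤ N.choose r) :
    ∃ C : Finset (Finset (Fin N)), Colex.IsInitSeg C r ∧ #C = s := by
  induction hs using Nat.decreasingInduction with
  | self =>
    refine ⟨(univ : Finset (Fin N)).powersetCard r, ⟨Set.sized_powersetCard _ _, ?_⟩, by simp⟩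
    intro s t _ h
    simp [h.2]
  | of_succ s hs ih =>
    obtain ⟨C, hC, hCs⟩ := ih
    have hne : C.Nonempty := by rw [← card_pos]; omega
    obtain ⟨M, hM, hMax⟩ := exists_max_image C (fun S => toColex S) hne
    refine ⟨C.erase M, ⟨fun S hS => hC.1 (mem_of_mem_erase hS), ?_⟩, by
      rw [card_erase_of_mem hM]; omega⟩
    intro S T hS hT
    refine mem_erase.2 ⟨?_, hC.2 (mem_of_mem_erase hS) hT⟩
    rintro rfl
    exact absurd (hMax S (mem_of_mem_erase hS)) (not_le.2 hT.1)

lemma fbd_initSeg_lt (N r x : ℕ) :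
    Colex.IsInitSeg (({i : Fin N | (i : ℕ) < x} : Finset (Fin N)).powersetCard r) r := by
  refine ⟨Set.sized_powersetCard _ _, ?_⟩
  rintro S T hS ⟨hT, hT2⟩
  rw [mem_powersetCard] at hS ⊢
  refine ⟨fun t ht => ?_, hT2⟩
  have hST : toColex (image Fin.val T) < toColex (image Fin.val S) := by
    rwa [Colex.toColex_image_lt_toColex_image Fin.val_strictMono]
  have := Colex.forall_lt_mono (a := x) hST.le (by
    intro b hb
    obtain ⟨c, hc, rfl⟩ := mem_image.1 hb
    simpa using hS.1 hc) t (mem_image_of_mem _ ht)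
  simpa using this

lemma fbd_card_lt (N x : ℕ) (hx : x ≤ N) : #({i : Fin N | (i : ℕ) < x} : Finset (Fin N)) = x := by
  rw [Fin.card_filter_val_lt]; omega

lemma fbd_kkx1 {N r a x : ℕ} (A : Finset (Finset (Fin N)))
    (hA : (A : Set (Finset (Fin N))).Sized r) (har : a ≤ r) (hx : x ≤ N) (hxa : x ≤ a + r)
    (hc : #A ≤ x.choose r) : #A ≤ #(Finset.shadow^[r - a] A) := by
  obtain ⟨C, hC, hCs⟩ := fbd_exists_initSeg N r (#A) (hc.trans (Nat.choose_le_choose _ hx))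
  refine le_trans ?_ (iterated_kk hA hCs.le hC)
  set X := ({i : Fin N | (i : ℕ) < x} : Finset (Fin N)) with hX
  have hXc : #X = x := fbd_card_lt N x hx
  have hsub : C ⊆ X.powersetCard r := by
    rcases hC.total (fbd_initSeg_lt N r x) with h | h
    · exact h
    · rw [eq_of_subset_of_card_le h (by rw [card_powersetCard, fbd_card_lt N x hx]; omega)]
  rw [← hCs]
  refine (fbd_lym X C r a hsub har (by omega)).trans (card_le_card ?_)
  intro T hT
  obtain ⟨hT1, S, hS, hTS⟩ := mem_filter.1 hT
  rw [mem_shadow_iterate_iff_exists_sdiff]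
  refine ⟨S, hS, hTS, ?_⟩
  rw [card_sdiff_of_subset hTS, (mem_powersetCard.1 hT1).2, hC.1 hS]

lemma fbd_kkx2 {N r a x : ℕ} (A : Finset (Finset (Fin N)))
    (hA : (A : Set (Finset (Fin N))).Sized r) (ha : 1 ≤ a) (har : a ≤ r) (hrx : r ≤ x)
    (hx : x + 1 ≤ N) (hxa : x + 2 ≤ a + r)
    (hc1 : x.choose r ≤ #A) (hc2 : #A ≤ (x + 1).choose r) :
    #A + x.choose a ≤ #(Finset.shadow^[r - a] A) + x.choose r := by
  obtain ⟨C, hC, hCs⟩ := fbd_exists_initSeg N r (#A) (hc2.trans (Nat.choose_le_choose _ hx))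
  refine le_trans ?_ (Nat.add_le_add_right (iterated_kk hA hCs.le hC) _)
  set X := ({i : Fin N | (i : ℕ) < x} : Finset (Fin N)) with hX
  set Y := ({i : Fin N | (i : ℕ) < x + 1} : Finset (Fin N)) with hY
  have hXc : #X = x := fbd_card_lt N x (by omega)
  have hYc : #Y = x + 1 := fbd_card_lt N (x + 1) (by omega)
  have hsub : C ⊆ Y.powersetCard r := by
    rcases hC.total (fbd_initSeg_lt N r (x + 1)) with h | h
    · exact h
    · rw [eq_of_subset_of_card_le h (by rw [card_powersetCard, fbd_card_lt N _ hx]; omega)]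
  have hsup : X.powersetCard r ⊆ C := by
    rcases hC.total (fbd_initSeg_lt N r x) with h | h
    · rw [eq_of_subset_of_card_le h
        (by rw [card_powersetCard, fbd_card_lt N _ (by omega)]; omega)]
    · exact h
  set z : Fin N := ⟨x, by omega⟩ with hz
  have hzX : z ∉ X := by simp [hX, hz]
  have hYX : ∀ i ∈ Y, i ≠ z → i ∈ X := by
    intro i hi hne
    simp only [hY, hX, mem_filter, mem_univ, true_and] at hi ⊢
    have : (i : ℕ) ≠ x := fun h => hne (Fin.ext h)
    omega
  set C1 := {S ∈ C | z ∈ S} with hC1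
  set D := C1.image (fun S => S.erase z) with hD
  have hDc : #D = #C1 := by
    apply card_image_of_injOn
    intro S hS T hT h
    have h1 := (mem_filter.1 (mem_coe.1 hS)).2
    have h2 := (mem_filter.1 (mem_coe.1 hT)).2
    rw [← insert_erase h1, ← insert_erase h2]
    simp only at h
    rw [h]
  have hC0 : {S ∈ C | z ∉ S} ⊆ X.powersetCard r := by
    intro S hS
    obtain ⟨hS, hzS⟩ := mem_filter.1 hS
    have := mem_powersetCard.1 (hsub hS)
    rw [mem_powersetCard]
    exact ⟨fun i hi => hYX i (this.1 hi) (fun h => hzS (h ▸ hi)), this.2⟩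
  have hC0c := card_le_card hC0
  rw [card_powersetCard, hXc] at hC0c
  have hsplit : #C1 + #{S ∈ C | z ∉ S} = #C := card_filter_add_card_filter_not (s := C) (fun S => z ∈ S)
  have hDs : D ⊆ X.powersetCard (r - 1) := by
    intro S hS
    obtain ⟨S, hS', rfl⟩ := mem_image.1 hS
    obtain ⟨hS, hzS⟩ := mem_filter.1 hS'
    have := mem_powersetCard.1 (hsub hS)
    rw [mem_powersetCard]
    refine ⟨fun i hi => ?_, by rw [card_erase_of_mem hzS, this.2]⟩
    exact hYX i (this.1 (mem_of_mem_erase hi)) (ne_of_mem_erase hi)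
  have hlym := fbd_lym X D (r - 1) (a - 1) hDs (by omega) (by omega)
  set E := {T ∈ X.powersetCard (a - 1) | ∃ S ∈ D, T ⊆ S} with hE
  have hEz : ∀ T ∈ E, z ∉ T := fun T hT h =>
    hzX ((mem_powersetCard.1 (mem_filter.1 hT).1).1 h)
  have hEi : #(E.image (insert z)) = #E := by
    apply card_image_of_injOn
    intro S hS T hT h
    rw [← erase_insert (hEz S hS), ← erase_insert (hEz T hT), h]
  have hdisj : Disjoint (X.powersetCard a) (E.image (insert z)) := by
    rw [Finset.disjoint_left]
    intro T hT hT2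
    obtain ⟨S, _, rfl⟩ := mem_image.1 hT2
    exact hzX ((mem_powersetCard.1 hT).1 (mem_insert_self _ _))
  have hfin : X.powersetCard a ∪ E.image (insert z) ⊆ Finset.shadow^[r - a] C := by
    intro T hT
    rw [mem_shadow_iterate_iff_exists_sdiff]
    rcases mem_union.1 hT with hT | hT
    · obtain ⟨hT1, hT2⟩ := mem_powersetCard.1 hT
      obtain ⟨S, hTS, hSX, hSc⟩ := exists_subsuperset_card_eq hT1 (n := r) (by omega) (by omega)
      exact ⟨S, hsup (mem_powersetCard.2 ⟨hSX, hSc⟩), hTS, by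
        rw [card_sdiff_of_subset hTS, hT2, hSc]⟩
    · obtain ⟨T, hT', rfl⟩ := mem_image.1 hT
      have hzT := hEz T hT'
      obtain ⟨hT1, S', hS', hTS⟩ := mem_filter.1 hT'
      obtain ⟨S, hS1, rfl⟩ := mem_image.1 hS'
      obtain ⟨hS, hzS⟩ := mem_filter.1 hS1
      have hss : insert z T ⊆ S := insert_subset hzS (hTS.trans (erase_subset _ _))
      refine ⟨S, hS, hss, ?_⟩
      rw [card_sdiff_of_subset hss, card_insert_of_notMem hzT, (mem_powersetCard.1 hT1).2,
        hC.1 hS]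
      omega
  have := card_le_card hfin
  rw [card_union_of_disjoint hdisj, card_powersetCard, hXc, hEi] at this
  omega

/-- Cross-intersecting families on `Fin N`: the family `A` avoids the iterated shadow. -/
lemma fbd_cross_fin {N a b : ℕ} (A B : Finset (Finset (Fin N)))
    (hA : (A : Set (Finset (Fin N))).Sized a) (hB : (B : Set (Finset (Fin N))).Sized b)
    (hab : a + b ≤ N) (hcr : ∀ S ∈ A, ∀ T ∈ B, ¬ Disjoint S T) :
    ∃ B' : Finset (Finset (Fin N)), (B' : Set (Finset (Fin N))).Sized (N - b) ∧ #B' = #B ∧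
      #A + #(Finset.shadow^[N - b - a] B') ≤ N.choose a := by
  have hs : ((B.compls : Finset (Finset (Fin N))) : Set (Finset (Fin N))).Sized (N - b) := by
    simpa using hB.compls
  refine ⟨B.compls, hs, card_compls _, ?_⟩
  have hd : Disjoint A (Finset.shadow^[N - b - a] B.compls) := by
    rw [Finset.disjoint_right]
    intro T hT hTA
    simp only [mem_shadow_iterate_iff_exists_sdiff, mem_compls] at hT
    obtain ⟨C, hC, hTC, _⟩ := hT
    exact hcr T hTA _ hC (disjoint_of_subset_left hTC disjoint_compl_right)
  rw [← card_union_of_disjoint hd]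
  have : A ∪ Finset.shadow^[N - b - a] B.compls ⊆ (univ : Finset (Fin N)).powersetCard a := by
    intro T hT
    rw [mem_powersetCard_univ]
    rcases mem_union.1 hT with h | h
    · exact hA h
    · have := hs.shadow_iterate (k := N - b - a) h
      omega
  simpa using card_le_card this

lemma fbd_transfer (S : Finset ℕ) (A : Finset (Finset ℕ)) (a : ℕ) (hA : A ⊆ S.powersetCard a) :
    #(univ.filter (fun T : Finset (Fin #S) => T.map (S.orderEmbOfFin rfl).toEmbedding ∈ A)) = #A ∧
    ((univ.filter (fun T : Finset (Fin #S) => T.map (S.orderEmbOfFin rfl).toEmbedding ∈ A) :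
      Finset (Finset (Fin #S))) : Set (Finset (Fin #S))).Sized a := by
  set A' : Finset (Finset (Fin #S)) :=
      univ.filter (fun T => T.map (S.orderEmbOfFin rfl).toEmbedding ∈ A) with hA'
  constructor
  · have : A'.image (fun T => T.map (S.orderEmbOfFin rfl).toEmbedding) = A := by
      ext T
      constructor
      · intro h
        obtain ⟨U, hU, rfl⟩ := mem_image.1 h
        exact (mem_filter.1 hU).2
      · intro hT
        have hTS := (mem_powersetCard.1 (hA hT)).1
        have : T ⊆ (univ : Finset (Fin #S)).map (S.orderEmbOfFin rfl).toEmbedding := by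
          rw [Finset.map_orderEmbOfFin_univ]; exact hTS
        obtain ⟨U, _, rfl⟩ := subset_map_iff.1 this
        exact mem_image.2 ⟨U, by simpa [A'] using hT, rfl⟩
    rw [← this, card_image_of_injective _ (Finset.map_injective _)]
  · intro T hT
    have := (mem_filter.1 (mem_coe.1 hT)).2
    have := (mem_powersetCard.1 (hA this)).2
    simpa using this

lemma fbd_cross {a b : ℕ} (S : Finset ℕ) (A B : Finset (Finset ℕ))
    (hA : A ⊆ S.powersetCard a) (hB : B ⊆ S.powersetCard b)
    (hab : a + b ≤ #S) (hcr : ∀ X ∈ A, ∀ Y ∈ B, (X ∩ Y).Nonempty) :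
    ∃ B' : Finset (Finset (Fin #S)), (B' : Set (Finset (Fin #S))).Sized (#S - b) ∧ #B' = #B ∧
      #A + #(Finset.shadow^[#S - b - a] B') ≤ (#S).choose a := by
  obtain ⟨h1, h2⟩ := fbd_transfer S A a hA
  obtain ⟨h3, h4⟩ := fbd_transfer S B b hB
  rw [← h1, ← h3]
  apply fbd_cross_fin _ _ h2 h4 hab
  intro X hX Y hY hd
  have := hcr _ (mem_filter.1 hX).2 _ (mem_filter.1 hY).2
  rw [← map_inter, map_nonempty] at this
  exact not_disjoint_iff_nonempty_inter.2 this hd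

lemma fbd_cross1 {a b x N : ℕ} (S : Finset ℕ) (hS : #S = N) (A B : Finset (Finset ℕ))
    (hA : A ⊆ S.powersetCard a) (hB : B ⊆ S.powersetCard b)
    (hab : a + b ≤ N) (hcr : ∀ X ∈ A, ∀ Y ∈ B, (X ∩ Y).Nonempty)
    (hx : x ≤ N) (hxa : x ≤ a + (N - b)) (hc : #B ≤ x.choose (N - b)) :
    #A + #B ≤ N.choose a := by
  subst hS
  obtain ⟨B', h1, h2, h3⟩ := fbd_cross S A B hA hB hab hcr
  have := fbd_kkx1 (a := a) B' h1 (by omega) hx hxa (by omega)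
  omega

lemma fbd_cross2 {a b x N : ℕ} (S : Finset ℕ) (hS : #S = N) (A B : Finset (Finset ℕ))
    (hA : A ⊆ S.powersetCard a) (hB : B ⊆ S.powersetCard b)
    (hab : a + b ≤ N) (hcr : ∀ X ∈ A, ∀ Y ∈ B, (X ∩ Y).Nonempty)
    (ha : 1 ≤ a) (hbx : N - b ≤ x)
    (hx : x + 1 ≤ N) (hxa : x + 2 ≤ a + (N - b)) (hc1 : x.choose (N - b) ≤ #B)
    (hc2 : #B ≤ (x + 1).choose (N - b)) :
    #A + #B + x.choose a ≤ N.choose a + x.choose (N - b) := by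
  subst hS
  obtain ⟨B', h1, h2, h3⟩ := fbd_cross S A B hA hB hab hcr
  have := fbd_kkx2 (a := a) B' h1 ha (by omega) hbx hx hxa (by omega) (by omega)
  omega

lemma fbd_mono {N k u : ℕ} (hu : 2 ≤ u) (huk : u + 1 ≤ k) (hN : 2 * k ≤ N + 1) :
    (N - u).choose (N - k) + (N - (u + 1)).choose (k - 1) ≤
      (N - (u + 1)).choose (N - k) + (N - u).choose (k - 1) := by
  obtain ⟨y, hy⟩ : ∃ y, N - u = y + 1 := ⟨N - u - 1, by omega⟩
  obtain ⟨p, hp⟩ : ∃ p, N - k = p + 1 := ⟨N - k - 1, by omega⟩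
  obtain ⟨q, hq⟩ : ∃ q, k - 1 = q + 1 := ⟨k - 2, by omega⟩
  have hy' : N - (u + 1) = y := by omega
  rw [hy, hp, hq, hy', Nat.choose_succ_succ, Nat.choose_succ_succ]
  have : y.choose p ≤ y.choose q := by
    rw [← Nat.choose_symm (n := y) (k := p) (by omega)]
    exact fbd_choose_le (by omega) (by omega)
  simp only [Nat.succ_eq_add_one]
  omega

lemma fbd_stepA {N k : ℕ} (S : Finset ℕ) (hS : #S = N) (A B : Finset (Finset ℕ))
    (hA : A ⊆ S.powersetCard (k - 1)) (hB : B ⊆ S.powersetCard k)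
    (hN : 2 * k ≤ N) (hcr : ∀ X ∈ A, ∀ Y ∈ B, (X ∩ Y).Nonempty)
    (hc2 : #B ≤ (N - 2).choose (N - k)) (u : ℕ) (hu : 3 ≤ u) (huk : u ≤ k)
    (hc1 : (N - u).choose (N - k) ≤ #B) :
    #A + #B + (N - u).choose (k - 1) ≤ N.choose (k - 1) + (N - u).choose (N - k) := by
  induction u, hu using Nat.le_induction with
  | base =>
    refine fbd_cross2 S hS A B hA hB (by omega) hcr (by omega) (by omega) (by omega) (by omega)
      hc1 ?_
    rwa [show N - 3 + 1 = N - 2 by omega]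
  | succ u hu ih =>
    by_cases h : (N - u).choose (N - k) ≤ #B
    · have := ih (by omega) h
      have := fbd_mono (N := N) (k := k) (u := u) (by omega) huk (by omega)
      omega
    · refine fbd_cross2 S hS A B hA hB (by omega) hcr (by omega) (by omega) (by omega) (by omega)
        hc1 ?_
      rw [show N - (u + 1) + 1 = N - u by omega]
      omega

lemma fbd_kat_base (G : Finset ℕ) (R : Finset (Finset ℕ)) (k m : ℕ) (hG : #G = k + m)
    (hm : k + 1 ≤ m) (hR : R ⊆ G.powersetCard k) :
    m * #R ≤ (k + 1) * #{T ∈ G.powersetCard (k + 1) | ∃ S ∈ R, Disjoint T S} := by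
  set E := {T ∈ G.powersetCard (k + 1) | ∃ S ∈ R, Disjoint T S} with hE
  have key : #R * m.choose (k + 1) ≤ #E * (m - 1).choose k := by
    apply card_mul_le_card_mul (fun S T => Disjoint T S)
    · intro S hS
      have hS' := mem_powersetCard.1 (hR hS)
      have : #(G \ S) = m := by rw [card_sdiff_of_subset hS'.1, hS'.2]; omega
      rw [← this, ← card_powersetCard]
      apply card_le_card
      intro T hT
      have hT' := mem_powersetCard.1 hT
      have hd : Disjoint T S := disjoint_of_subset_left hT'.1 sdiff_disjoint
      rw [mem_bipartiteAbove, hE, mem_filter, mem_powersetCard]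
      exact ⟨⟨⟨hT'.1.trans sdiff_subset, hT'.2⟩, S, hS, hd⟩, hd⟩
    · intro T hT
      have hT' := mem_powersetCard.1 (mem_filter.1 hT).1
      have : #(G \ T) = m - 1 := by rw [card_sdiff_of_subset hT'.1, hT'.2]; omega
      rw [← this, ← card_powersetCard]
      apply card_le_card
      intro S hS
      have hS' := (mem_bipartiteBelow _).1 hS
      have hS2 := mem_powersetCard.1 (hR hS'.1)
      rw [mem_powersetCard]
      exact ⟨subset_sdiff.2 ⟨hS2.1, hS'.2.symm⟩, hS2.2⟩
  have hpos : 0 < (m - 1).choose k := Nat.choose_pos (by omega)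
  have hid : m * (m - 1).choose k = m.choose (k + 1) * (k + 1) := by
    obtain ⟨p, rfl⟩ : ∃ p, m = p + 1 := ⟨m - 1, by omega⟩
    exact Nat.add_one_mul_choose_eq p k
  refine Nat.le_of_mul_le_mul_right (c := (m - 1).choose k) ?_ hpos
  calc m * #R * (m - 1).choose k = #R * (m * (m - 1).choose k) := by ring
    _ = (k + 1) * (#R * m.choose (k + 1)) := by rw [hid]; ring
    _ ≤ (k + 1) * (#E * (m - 1).choose k) := Nat.mul_le_mul_left _ key
    _ = _ := by ring

lemma fbd_katona (N : ℕ) : ∀ (s k t m a : ℕ) (R : Finset (Finset ℕ)),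
    R ⊆ (Ico s (s + N)).powersetCard k →
    (∀ S ∈ R, ∀ x ∈ S, ∀ y ∉ S, s ≤ y → y < x → insert y (S.erase x) ∈ R) →
    (∀ S ∈ R, ∀ T ∈ R, t ≤ #(S ∩ T)) →
    N = k + m → a + t = k + 1 → a ≤ m → t ≤ k →
    m * #R ≤ a * #{T ∈ (Ico s (s + N)).powersetCard a | ∃ S ∈ R, Disjoint T S} := by
  induction N with
  | zero => intros; omega
  | succ N ih =>
    intro s k t m a R hR hsh hint hN ha ham htk
    rcases Nat.eq_zero_or_pos t with rfl | ht
    · obtain rfl : a = k + 1 := by omega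
      exact fbd_kat_base _ R k m (by rw [Nat.card_Ico]; omega) ham hR
    have hIco : s + (N + 1) = s + 1 + N := by ring
    set NB := {T ∈ (Ico s (s + (N + 1))).powersetCard a | ∃ S ∈ R, Disjoint T S} with hNB
    set R1 := ({S ∈ R | s ∈ S}).image (fun S => S.erase s) with hR1
    set R0 := {S ∈ R | s ∉ S} with hR0
    have hR1c : #R1 = #{S ∈ R | s ∈ S} := by
      apply card_image_of_injOn
      intro S hS T hT h
      have h1 := (mem_filter.1 (mem_coe.1 hS)).2
      have h2 := (mem_filter.1 (mem_coe.1 hT)).2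
      rw [← insert_erase h1, ← insert_erase h2]
      simp only at h
      rw [h]
    have hsplit : #{S ∈ R | s ∈ S} + #R0 = #R :=
      card_filter_add_card_filter_not (s := R) (fun S => s ∈ S)
    have hmem1 : ∀ S, S ∈ R1 ↔ s ∉ S ∧ insert s S ∈ R := by
      intro S
      rw [hR1, mem_image]
      constructor
      · rintro ⟨T, hT, rfl⟩
        have := mem_filter.1 hT
        exact ⟨notMem_erase _ _, by rw [insert_erase this.2]; exact this.1⟩
      · rintro ⟨h1, h2⟩
        exact ⟨insert s S, mem_filter.2 ⟨h2, mem_insert_self _ _⟩, erase_insert h1⟩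
    have hsub : ∀ S ∈ R, ∀ x ∈ S, s ≤ x ∧ x < s + (N + 1) := fun S hS x hx =>
      mem_Ico.1 ((mem_powersetCard.1 (hR hS)).1 hx)
    have hcardR : ∀ S ∈ R, #S = k := fun S hS => (mem_powersetCard.1 (hR hS)).2
    -- part 1
    have h1 := ih (s + 1) (k - 1) (t - 1) m a R1 (by
        intro S hS
        obtain ⟨h1, h2⟩ := (hmem1 S).1 hS
        rw [mem_powersetCard]
        constructor
        · intro x hx
          have := hsub _ h2 x (mem_insert_of_mem hx)
          have : x ≠ s := fun h => h1 (h ▸ hx)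
          rw [mem_Ico]; omega
        · have := hcardR _ h2
          rw [card_insert_of_notMem h1] at this
          omega) (by
        intro S hS x hx y hy hsy hyx
        obtain ⟨h1, h2⟩ := (hmem1 S).1 hS
        rw [hmem1]
        have hxs : x ≠ s := fun h => h1 (h ▸ hx)
        have := hsh _ h2 x (mem_insert_of_mem hx) y (by
          rw [mem_insert]; push Not; exact ⟨by omega, hy⟩) (by omega) hyx
        constructor
        · rw [mem_insert, mem_erase]; push Not
          exact ⟨by omega, fun _ => h1⟩
        · rw [erase_insert_of_ne hxs.symm, Finset.insert_comm] at this
          exact this) (by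
        intro S hS T hT
        obtain ⟨h1, h2⟩ := (hmem1 S).1 hS
        obtain ⟨h3, h4⟩ := (hmem1 T).1 hT
        have := hint _ h2 _ h4
        rw [← insert_inter_distrib, card_insert_of_notMem (by
          rw [mem_inter]; exact fun h => h1 h.1)] at this
        omega) (by omega) (by omega) ham (by omega)
    rw [← hIco] at h1
    set NB1 := {T ∈ (Ico (s + 1) (s + (N + 1))).powersetCard a | ∃ S ∈ R1, Disjoint T S} with hNB1
    have hR0int : ∀ S ∈ R0, ∀ T ∈ R0, t + 1 ≤ #(S ∩ T) := by
      intro S hS T hT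
      obtain ⟨hS1, hS2⟩ := mem_filter.1 hS
      obtain ⟨hT1, hT2⟩ := mem_filter.1 hT
      have h := hint S hS1 T hT1
      have hne : (S ∩ T).Nonempty := card_pos.1 (by omega)
      obtain ⟨x, hx⟩ := hne
      obtain ⟨hxS, hxT⟩ := mem_inter.1 hx
      have hsx : s < x := lt_of_le_of_ne (hsub S hS1 x hxS).1 (fun h => hS2 (h ▸ hxS))
      have h' := hint _ (hsh S hS1 x hxS s hS2 le_rfl hsx) T hT1
      have heq : insert s (S.erase x) ∩ T = (S ∩ T).erase x := by
        rw [insert_inter_of_notMem hT2, erase_inter]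
      rw [heq, card_erase_of_mem hx] at h'
      omega
    -- part 0
    have h0 : ∃ NB0 : Finset (Finset ℕ), m * #R0 ≤ a * #NB0 ∧
        ∀ T ∈ NB0, s ∉ T ∧ insert s T ∈ NB := by
      by_cases htk' : t + 1 ≤ k
      · refine ⟨{T ∈ (Ico (s + 1) (s + 1 + N)).powersetCard (a - 1) | ∃ S ∈ R0, Disjoint T S},
          ?_, ?_⟩
        · have h0 := ih (s + 1) k (t + 1) (m - 1) (a - 1) R0 (by
            intro S hS
            obtain ⟨h1, h2⟩ := mem_filter.1 hS
            rw [mem_powersetCard]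
            refine ⟨fun x hx => ?_, hcardR S h1⟩
            have := hsub _ h1 x hx
            have : x ≠ s := fun h => h2 (h ▸ hx)
            rw [mem_Ico]; omega) (by
            intro S hS x hx y hy hsy hyx
            obtain ⟨h1, h2⟩ := mem_filter.1 hS
            refine mem_filter.2 ⟨hsh S h1 x hx y hy (by omega) hyx, ?_⟩
            rw [mem_insert, mem_erase]; push Not
            exact ⟨by omega, fun _ => h2⟩) hR0int (by omega) (by omega) (by omega) htk'
          set q := #{T ∈ (Ico (s + 1) (s + 1 + N)).powersetCard (a - 1) | ∃ S ∈ R0, Disjoint T S}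
          obtain ⟨a', rfl⟩ : ∃ a', a = a' + 2 := ⟨a - 2, by omega⟩
          obtain ⟨m', rfl⟩ : ∃ m', m = m' + 2 := ⟨m - 2, by omega⟩
          have e1 : a' + 2 - 1 = a' + 1 := rfl
          have e2 : m' + 2 - 1 = m' + 1 := rfl
          rw [e1, e2] at h0
          refine le_of_mul_le_mul_left (a := a' + 1) ?_ (by omega)
          have hA : (a' + 1) * (m' + 2) ≤ (a' + 2) * (m' + 1) := by nlinarith
          calc (a' + 1) * ((m' + 2) * #R0) = ((a' + 1) * (m' + 2)) * #R0 := by ring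
            _ ≤ ((a' + 2) * (m' + 1)) * #R0 := Nat.mul_le_mul_right _ hA
            _ = (a' + 2) * ((m' + 1) * #R0) := by ring
            _ ≤ (a' + 2) * ((a' + 1) * q) := Nat.mul_le_mul_left _ h0
            _ = _ := by ring
        · intro T hT
          obtain ⟨hT1, S, hS, hTS⟩ := mem_filter.1 hT
          obtain ⟨hT2, hT3⟩ := mem_powersetCard.1 hT1
          obtain ⟨hS1, hS2⟩ := mem_filter.1 hS
          have hsT : s ∉ T := fun h => by
            have := mem_Ico.1 (hT2 h); omega
          refine ⟨hsT, mem_filter.2 ⟨mem_powersetCard.2 ⟨?_, ?_⟩, S, hS1, ?_⟩⟩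
          · intro x hx
            rcases mem_insert.1 hx with rfl | hx
            · rw [mem_Ico]; omega
            · have := mem_Ico.1 (hT2 hx)
              rw [mem_Ico]; omega
          · rw [card_insert_of_notMem hsT]; omega
          · rw [disjoint_insert_left]; exact ⟨hS2, hTS⟩
      · have : R0 = ∅ := by
          rw [eq_empty_iff_forall_notMem]
          intro S hS
          have h := hR0int S hS S hS
          rw [inter_self, hcardR S (mem_filter.1 hS).1] at h
          omega
        exact ⟨∅, by simp [this], by simp⟩
    obtain ⟨NB0, h0, hNB0⟩ := h0
    have hi : #(NB0.image (insert s)) = #NB0 := by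
      apply card_image_of_injOn
      intro S hS T hT h
      rw [← erase_insert (hNB0 S hS).1, ← erase_insert (hNB0 T hT).1, h]
    have hd : Disjoint NB1 (NB0.image (insert s)) := by
      rw [Finset.disjoint_left]
      intro T hT hT2
      obtain ⟨S, _, rfl⟩ := mem_image.1 hT2
      have := (mem_powersetCard.1 (mem_filter.1 hT).1).1 (mem_insert_self s S)
      rw [mem_Ico] at this
      omega
    have hfin : NB1 ∪ NB0.image (insert s) ⊆ NB := by
      intro T hT
      rcases mem_union.1 hT with hT | hT
      · obtain ⟨hT1, S, hS, hTS⟩ := mem_filter.1 hT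
        obtain ⟨hT2, hT3⟩ := mem_powersetCard.1 hT1
        have hsT : s ∉ T := fun h => by
          have := mem_Ico.1 (hT2 h); omega
        refine mem_filter.2 ⟨mem_powersetCard.2 ⟨?_, hT3⟩, _, ((hmem1 S).1 hS).2, ?_⟩
        · exact hT2.trans (Ico_subset_Ico_left (by omega))
        · rw [disjoint_insert_right]; exact ⟨hsT, hTS⟩
      · obtain ⟨S, hS, rfl⟩ := mem_image.1 hT
        exact (hNB0 S hS).2
    have hc := card_le_card hfin
    rw [card_union_of_disjoint hd, hi] at hc
    calc m * #R = m * #R1 + m * #R0 := by rw [← hsplit, hR1c]; ring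
      _ ≤ a * #NB1 + a * #NB0 := Nat.add_le_add h1 h0
      _ = a * (#NB1 + #NB0) := by ring
      _ ≤ a * #NB := Nat.mul_le_mul_left _ hc

/-- The elementary shift. -/
def fbdShiftMap (i j : ℕ) (F : Finset (Finset ℕ)) (S : Finset ℕ) : Finset ℕ :=
  if j ∈ S ∧ i ∉ S ∧ insert i (S.erase j) ∉ F then insert i (S.erase j) else S

lemma fbd_shift_injOn (i j : ℕ) (F : Finset (Finset ℕ)) :
    Set.InjOn (fbdShiftMap i j F) F := by
  intro S hS T hT h
  unfold fbdShiftMap at h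
  split_ifs at h with h1 h2 h2
  · have e1 : S = insert j ((insert i (S.erase j)).erase i) := by
      rw [erase_insert (by simp [h1.2.1]), insert_erase h1.1]
    have e2 : T = insert j ((insert i (T.erase j)).erase i) := by
      rw [erase_insert (by simp [h2.2.1]), insert_erase h2.1]
    rw [e1, e2, h]
  · exact absurd (h ▸ hT) h1.2.2
  · exact absurd (h.symm ▸ hS) h2.2.2
  · exact h

lemma fbd_shift_inter (i j : ℕ) (hij : i ≠ j) (F : Finset (Finset ℕ))
    (hint : ∀ A ∈ F, ∀ B ∈ F, (A ∩ B).Nonempty) :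
    ∀ A ∈ F.image (fbdShiftMap i j F), ∀ B ∈ F.image (fbdShiftMap i j F), (A ∩ B).Nonempty := by
  -- a moved set meets an unmoved one
  have key : ∀ S ∈ F, ∀ T ∈ F, (j ∈ S ∧ i ∉ S ∧ insert i (S.erase j) ∉ F) →
      ¬ (j ∈ T ∧ i ∉ T ∧ insert i (T.erase j) ∉ F) → (insert i (S.erase j) ∩ T).Nonempty := by
    intro S hS T hT h1 h2
    by_cases hiT : i ∈ T
    · exact ⟨i, by simp [hiT]⟩
    by_cases hjT : j ∈ T
    · have h3 : insert i (T.erase j) ∈ F := by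
        by_contra h; exact h2 ⟨hjT, hiT, h⟩
      obtain ⟨x, hx⟩ := hint S hS _ h3
      simp only [mem_inter, mem_insert, mem_erase] at hx
      refine ⟨x, ?_⟩
      simp only [mem_inter, mem_insert, mem_erase]
      rcases hx.2 with rfl | h
      · exact absurd hx.1 h1.2.1
      · exact ⟨Or.inr ⟨h.1, hx.1⟩, h.2⟩
    · obtain ⟨x, hx⟩ := hint S hS T hT
      rw [mem_inter] at hx
      refine ⟨x, ?_⟩
      simp only [mem_inter, mem_insert, mem_erase]
      exact ⟨Or.inr ⟨fun h => hjT (h ▸ hx.2), hx.1⟩, hx.2⟩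
  intro A hA B hB
  obtain ⟨S, hS, rfl⟩ := mem_image.1 hA
  obtain ⟨T, hT, rfl⟩ := mem_image.1 hB
  unfold fbdShiftMap
  split_ifs with h1 h2 h2
  · exact ⟨i, by simp⟩
  · exact key S hS T hT h1 h2
  · rw [inter_comm]; exact key T hT S hS h2 h1
  · exact hint S hS T hT

lemma fbd_link {k : ℕ} (G : Finset ℕ) (i : ℕ)
    (F : Finset (Finset ℕ)) (hF : F ⊆ G.powersetCard k)
    (hint : ∀ A ∈ F, ∀ B ∈ F, (A ∩ B).Nonempty) :
    ∃ A B : Finset (Finset ℕ), A ⊆ (G.erase i).powersetCard (k - 1) ∧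
      B ⊆ (G.erase i).powersetCard k ∧ (∀ X ∈ A, ∀ Y ∈ B, (X ∩ Y).Nonempty) ∧
      #A + #B = #F ∧ B = {S ∈ F | i ∉ S} := by
  refine ⟨({S ∈ F | i ∈ S}).image (fun S => S.erase i), {S ∈ F | i ∉ S}, ?_, ?_, ?_, ?_, rfl⟩
  · intro S hS
    obtain ⟨T, hT, rfl⟩ := mem_image.1 hS
    obtain ⟨h1, h2⟩ := mem_filter.1 hT
    obtain ⟨h3, h4⟩ := mem_powersetCard.1 (hF h1)
    exact mem_powersetCard.2 ⟨erase_subset_erase _ h3, by rw [card_erase_of_mem h2, h4]⟩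
  · intro S hS
    obtain ⟨h1, h2⟩ := mem_filter.1 hS
    obtain ⟨h3, h4⟩ := mem_powersetCard.1 (hF h1)
    exact mem_powersetCard.2 ⟨subset_erase.2 ⟨h3, h2⟩, h4⟩
  · intro X hX Y hY
    obtain ⟨T, hT, rfl⟩ := mem_image.1 hX
    obtain ⟨h1, h2⟩ := mem_filter.1 hT
    obtain ⟨h3, h4⟩ := mem_filter.1 hY
    obtain ⟨x, hx⟩ := hint T h1 Y h3
    rw [mem_inter] at hx
    refine ⟨x, ?_⟩
    rw [mem_inter, mem_erase]
    exact ⟨⟨fun h => h4 (h ▸ hx.2), hx.1⟩, hx.2⟩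
  · rw [card_image_of_injOn]
    · exact card_filter_add_card_filter_not (s := F) (fun S => i ∈ S)
    · intro S hS T hT h
      have h1 := (mem_filter.1 (mem_coe.1 hS)).2
      have h2 := (mem_filter.1 (mem_coe.1 hT)).2
      rw [← insert_erase h1, ← insert_erase h2]
      simp only at h
      rw [h]

lemma fbd_stepA' {n k u : ℕ} (hnk : 2 * k < n) (hu3 : 3 ≤ u) (huk : u ≤ k)
    (F : Finset (Finset ℕ)) (hF : F ⊆ (Icc 1 n).powersetCard k)
    (hint : ∀ A ∈ F, ∀ B ∈ F, (A ∩ B).Nonempty) (i : ℕ) (hi : i ∈ Icc 1 n)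
    (hc2 : #{S ∈ F | i ∉ S} ≤ (n - 3).choose (k - 2))
    (hc1 : (n - u - 1).choose (n - k - 1) ≤ #{S ∈ F | i ∉ S}) :
    #F + (n - u - 1).choose (k - 1) ≤ (n - 1).choose (k - 1) + (n - u - 1).choose (n - k - 1) := by
  obtain ⟨A, B, hA, hB, hcr, hc, hBF⟩ := fbd_link (Icc 1 n) i F hF hint
  rw [← hBF] at hc1 hc2
  have hG : #((Icc 1 n).erase i) = n - 1 := by rw [card_erase_of_mem hi]; simp
  have e1 : n - u - 1 = n - 1 - u := by omega
  have e2 : n - k - 1 = n - 1 - k := by omega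
  rw [e1, e2] at hc1 ⊢
  rw [← hc]
  refine fbd_stepA _ hG A B hA hB (by omega) hcr ?_ u hu3 huk hc1
  refine hc2.trans (le_of_eq ?_)
  rw [← Nat.choose_symm (by omega)]
  congr 1 <;> omega

lemma fbd_M {n k u : ℕ} (hnk : 2 * k < n) (hu : 2 ≤ u) (huk : u ≤ k) :
    (n - 2).choose (k - 2) + 2 * (n - 3).choose (k - 2) + (n - u - 1).choose (k - 1) ≤
      (n - 1).choose (k - 1) + (n - u - 1).choose (n - k - 1) := by
  induction u, hu using Nat.le_induction with
  | base =>
    obtain ⟨p, rfl⟩ : ∃ p, n = p + 3 := ⟨n - 3, by omega⟩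
    obtain ⟨q, rfl⟩ : ∃ q, k = q + 2 := ⟨k - 2, by omega⟩
    have h1 : p.choose (p + 3 - (q + 2) - 1) = p.choose q := by
      rw [← Nat.choose_symm (n := p) (k := q) (by omega)]
      congr 1; omega
    have e1 : p + 3 - 2 = p + 1 := rfl
    have e2 : p + 3 - 3 = p := rfl
    have e3 : p + 3 - 2 - 1 = p := rfl
    have e4 : p + 3 - 1 = p + 2 := rfl
    have e5 : q + 2 - 2 = q := rfl
    have e6 : q + 2 - 1 = q + 1 := rfl
    rw [e3, h1, e1, e2, e4, e5, e6, Nat.choose_succ_succ (p + 1) q, Nat.choose_succ_succ p q]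
    simp only [Nat.succ_eq_add_one]
    omega
  | succ u hu ih =>
    have h1 := ih (by omega)
    have h2 := fbd_mono (N := n - 1) (k := k) (u := u) hu huk (by omega)
    rw [show n - 1 - u = n - u - 1 by omega, show n - 1 - k = n - k - 1 by omega,
      show n - 1 - (u + 1) = n - (u + 1) - 1 by omega] at h2
    omega

lemma fbd_shifted {n k : ℕ} (hk : 3 ≤ k) (hnk : 2 * k < n)
    (F : Finset (Finset ℕ)) (hF : F ⊆ (Icc 1 n).powersetCard k)
    (hint : ∀ A ∈ F, ∀ B ∈ F, (A ∩ B).Nonempty)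
    (hsh : ∀ S ∈ F, ∀ x ∈ S, ∀ y ∉ S, 1 ≤ y → y < x → insert y (S.erase x) ∈ F)
    (hg : (n - 3).choose (k - 2) ≤ #{S ∈ F | 1 ∉ S}) :
    #F ≤ (n - 2).choose (k - 2) + 2 * (n - 3).choose (k - 2) := by
  obtain ⟨A, B, hA, hB, hcr, hc, hBF⟩ := fbd_link (Icc 1 n) 1 F hF hint
  have hG : (Icc 1 n).erase 1 = Ico 2 (2 + (n - 1)) := by
    ext x; simp only [mem_erase, mem_Icc, mem_Ico]; omega
  rw [hG] at hA hB
  rw [← hBF] at hg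
  have hkat := fbd_katona (n - 1) 2 k 2 (n - 1 - k) (k - 1) B hB (by
      intro S hS x hx y hy h2 hyx
      rw [hBF] at hS ⊢
      obtain ⟨h1, h3⟩ := mem_filter.1 hS
      refine mem_filter.2 ⟨hsh S h1 x hx y hy (by omega) hyx, ?_⟩
      rw [mem_insert, mem_erase]; push Not
      exact ⟨by omega, fun _ => h3⟩) (by
      intro S hS T hT
      have hSs := (mem_powersetCard.1 (hB hS)).1
      rw [hBF] at hS hT
      obtain ⟨hS1, hS2⟩ := mem_filter.1 hS
      obtain ⟨hT1, hT2⟩ := mem_filter.1 hT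
      obtain ⟨x, hx⟩ := hint S hS1 T hT1
      obtain ⟨hxS, hxT⟩ := mem_inter.1 hx
      have hx2 := (mem_Ico.1 (hSs hxS)).1
      have h' := hint _ (hsh S hS1 x hxS 1 hS2 le_rfl (by omega)) T hT1
      have heq : insert 1 (S.erase x) ∩ T = (S ∩ T).erase x := by
        rw [insert_inter_of_notMem hT2, erase_inter]
      rw [heq] at h'
      have := card_pos.2 h'
      rw [card_erase_of_mem hx] at this
      omega) (by omega) (by omega) (by omega) (by omega)
  set E := {T ∈ (Ico 2 (2 + (n - 1))).powersetCard (k - 1) | ∃ S ∈ B, Disjoint T S} with hE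
  have hd : Disjoint A E := by
    rw [Finset.disjoint_right]
    intro T hT hTA
    obtain ⟨_, S, hS, hTS⟩ := mem_filter.1 hT
    exact not_disjoint_iff_nonempty_inter.2 (hcr T hTA S hS) hTS
  have hAE : #A + #E ≤ (n - 1).choose (k - 1) := by
    rw [← card_union_of_disjoint hd]
    have := card_le_card (union_subset hA (filter_subset (fun T => ∃ S ∈ B, Disjoint T S) _))
    rw [card_powersetCard, Nat.card_Ico] at this
    rwa [show 2 + (n - 1) - 2 = n - 1 by omega] at this
  rw [← hc]
  obtain ⟨q, rfl⟩ : ∃ q, k = q + 2 := ⟨k - 2, by omega⟩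
  obtain ⟨d, rfl⟩ : ∃ d, n = 2 * q + 4 + d := ⟨n - 2 * q - 4, by omega⟩
  have e1 : 2 * q + 4 + d - 1 = 2 * q + 1 + d + 2 := by omega
  have e2 : 2 * q + 4 + d - 2 = 2 * q + 1 + d + 1 := by omega
  have e3 : 2 * q + 4 + d - 3 = 2 * q + 1 + d := by omega
  have e4 : q + 2 - 1 = q + 1 := rfl
  have e5 : q + 2 - 2 = q := rfl
  have e6 : 2 * q + 1 + d + 2 - (q + 2) = q + 1 + d := by omega
  rw [e1, e4] at hAE
  rw [e1, e4, e6] at hkat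
  rw [e3, e5] at hg
  rw [e2, e3, e5]
  have hch := Nat.choose_succ_right_eq (2 * q + 1 + d) q
  rw [show 2 * q + 1 + d - q = q + 1 + d by omega] at hch
  have hp1 := Nat.choose_succ_succ (2 * q + 1 + d + 1) q
  have hp2 := Nat.choose_succ_succ (2 * q + 1 + d) q
  simp only [Nat.succ_eq_add_one] at hp1 hp2
  rw [show 2 * q + 1 + d + 2 = 2 * q + 1 + d + 1 + 1 from rfl, hp1, hp2] at hAE
  generalize (2 * q + 1 + d).choose q = c at *
  generalize (2 * q + 1 + d).choose (q + 1) = c1 at *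
  generalize (2 * q + 1 + d + 1).choose q = c2 at *
  generalize #A = x at *
  generalize #B = y at *
  generalize #E = z at *
  have hdy : d * c ≤ d * y := Nat.mul_le_mul_left _ hg
  refine le_of_mul_le_mul_left (a := q + 1) ?_ (by omega)
  have h1 : (q + 1) * (x + z) ≤ (q + 1) * (c2 + (c + c1)) := Nat.mul_le_mul_left _ hAE
  nlinarith

lemma fbd_trace {n k i j : ℕ} (F : Finset (Finset ℕ)) (hF : F ⊆ (Icc 1 n).powersetCard k)
    (hint : ∀ A ∈ F, ∀ B ∈ F, (A ∩ B).Nonempty) :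
    ∃ tr : Finset ℕ → Finset (Finset ℕ),
      (∀ c, #(tr c) = #{S ∈ F | S ∩ {i, j} = c}) ∧
      (∀ c, tr c ⊆ (Icc 1 n \ {i, j}).powersetCard (k - #c)) ∧
      (∀ c c', Disjoint c c' → ∀ X ∈ tr c, ∀ Y ∈ tr c', (X ∩ Y).Nonempty) := by
  refine ⟨fun c => ({S ∈ F | S ∩ {i, j} = c}).image (fun S => S \ {i, j}), ?_, ?_, ?_⟩
  · intro c
    apply card_image_of_injOn
    intro S hS T hT h
    have h1 := (mem_filter.1 (mem_coe.1 hS)).2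
    have h2 := (mem_filter.1 (mem_coe.1 hT)).2
    simp only at h
    rw [← sdiff_union_inter S {i, j}, ← sdiff_union_inter T {i, j}, h, h1, h2]
  · intro c X hX
    obtain ⟨S, hS, rfl⟩ := mem_image.1 hX
    obtain ⟨h1, h2⟩ := mem_filter.1 hS
    obtain ⟨h3, h4⟩ := mem_powersetCard.1 (hF h1)
    refine mem_powersetCard.2 ⟨sdiff_subset_sdiff h3 le_rfl, ?_⟩
    have := card_sdiff_add_card_inter S {i, j}
    rw [h2, h4] at this
    omega
  · intro c c' hcc X hX Y hY
    obtain ⟨S, hS, rfl⟩ := mem_image.1 hX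
    obtain ⟨h1, h2⟩ := mem_filter.1 hS
    obtain ⟨T, hT, rfl⟩ := mem_image.1 hY
    obtain ⟨h3, h4⟩ := mem_filter.1 hT
    obtain ⟨x, hx⟩ := hint S h1 T h3
    obtain ⟨hxS, hxT⟩ := mem_inter.1 hx
    have hxD : x ∉ ({i, j} : Finset ℕ) := by
      intro h
      exact Finset.disjoint_left.1 hcc (h2 ▸ mem_inter.2 ⟨hxS, h⟩) (h4 ▸ mem_inter.2 ⟨hxT, h⟩)
    exact ⟨x, mem_inter.2 ⟨mem_sdiff.2 ⟨hxS, hxD⟩, mem_sdiff.2 ⟨hxT, hxD⟩⟩⟩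

lemma fbd_crossQ {N b : ℕ} (S : Finset ℕ) (hS : #S = N) (A B : Finset (Finset ℕ))
    (hA : A ⊆ S.powersetCard b) (hB : B ⊆ S.powersetCard b) (hb : 2 ≤ b)
    (hN : 2 * b ≤ N) (hcr : ∀ X ∈ A, ∀ Y ∈ B, (X ∩ Y).Nonempty)
    (hcA : (N - 2).choose (b - 2) ≤ #A) (hcB : (N - 2).choose (b - 2) ≤ #B) :
    #A + #B ≤ 2 * (N - 1).choose (b - 1) := by
  have e1 : (N - 2).choose (N - b) = (N - 2).choose (b - 2) := by
    rw [← Nat.choose_symm (n := N - 2) (k := b - 2) (by omega)]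
    congr 1; omega
  have e2 : (N - 2 + 1).choose (N - b) = (N - 1).choose (b - 1) := by
    rw [← Nat.choose_symm (n := N - 1) (k := b - 1) (by omega)]
    congr 1 <;> omega
  have hp : N.choose b + (N - 2).choose (b - 2) =
      2 * (N - 1).choose (b - 1) + (N - 2).choose b := by
    obtain ⟨p, rfl⟩ : ∃ p, N = p + 2 := ⟨N - 2, by omega⟩
    obtain ⟨q, rfl⟩ : ∃ q, b = q + 2 := ⟨b - 2, by omega⟩
    have h1 := Nat.choose_succ_succ (p + 1) (q + 1)
    have h2 := Nat.choose_succ_succ p (q + 1)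
    have h3 := Nat.choose_succ_succ p q
    simp only [Nat.succ_eq_add_one] at h1 h2 h3
    simp only [Nat.add_sub_cancel, show p + 2 - 1 = p + 1 from rfl,
      show q + 2 - 1 = q + 1 from rfl]
    rw [show p + 2 = p + 1 + 1 from rfl, show q + 2 = q + 1 + 1 from rfl]
    omega
  have main : ∀ A B : Finset (Finset ℕ), A ⊆ S.powersetCard b → B ⊆ S.powersetCard b →
      (∀ X ∈ A, ∀ Y ∈ B, (X ∩ Y).Nonempty) → (N - 2).choose (b - 2) ≤ #B →
      #B ≤ (N - 1).choose (b - 1) → #A + #B ≤ 2 * (N - 1).choose (b - 1) := by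
    intro A B hA hB hcr h1 h2
    have := fbd_cross2 (x := N - 2) S hS A B hA hB (by omega) hcr (by omega) (by omega) (by omega)
      (by omega) (by rw [e1]; exact h1) (by rw [e2]; exact h2)
    omega
  by_cases h : #B ≤ (N - 1).choose (b - 1)
  · exact main A B hA hB hcr hcB h
  · obtain ⟨B', hB', hBc⟩ := exists_subset_card_eq (not_le.1 h).le
    have hmono : (N - 2).choose (b - 2) ≤ (N - 1).choose (b - 1) := by
      obtain ⟨p, hp⟩ : ∃ p, N - 1 = p + 1 := ⟨N - 2, by omega⟩
      obtain ⟨q, hq⟩ : ∃ q, b - 1 = q + 1 := ⟨b - 2, by omega⟩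
      rw [hp, hq, Nat.choose_succ_succ, show N - 2 = p by omega, show b - 2 = q by omega]
      omega
    have h1 := main A B' hA (hB'.trans hB) (fun X hX Y hY => hcr X hX Y (hB' hY))
      (by omega) (by omega)
    have h2 := main B A hB hA (fun X hX Y hY => by
      rw [inter_comm]; exact hcr Y hY X hX) hcA (by omega)
    omega

lemma fbd_break {n k i j : ℕ} (hk : 3 ≤ k) (hnk : 2 * k < n) (hij : i ≠ j)
    (hi : i ∈ Icc 1 n) (hj : j ∈ Icc 1 n)
    (F : Finset (Finset ℕ)) (hF : F ⊆ (Icc 1 n).powersetCard k)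
    (hint : ∀ A ∈ F, ∀ B ∈ F, (A ∩ B).Nonempty)
    (hR : #{S ∈ F | i ∉ S ∧ j ∉ S} ≤ (n - 4).choose (k - 3))
    (hgi : (n - 3).choose (k - 2) ≤ #{S ∈ F | i ∉ S})
    (hgj : (n - 3).choose (k - 2) ≤ #{S ∈ F | j ∉ S}) :
    #F ≤ (n - 2).choose (k - 2) + 2 * (n - 3).choose (k - 2) := by
  obtain ⟨tr, h1, h2, h3⟩ := fbd_trace (i := i) (j := j) F hF hint
  have hG : #(Icc 1 n \ {i, j}) = n - 2 := by
    rw [card_sdiff_of_subset (by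
      intro x hx; rcases mem_insert.1 hx with rfl | hx
      · exact hi
      · rw [mem_singleton] at hx; exact hx ▸ hj), card_pair hij]
    simp
  have c0 : #(tr ∅) = #{S ∈ F | i ∉ S ∧ j ∉ S} := by
    rw [h1]; congr 1; apply filter_congr; intro S _
    rw [← disjoint_iff_inter_eq_empty, disjoint_insert_right, disjoint_singleton_right]
  have c1 : #(tr {i}) = #{S ∈ F | i ∈ S ∧ j ∉ S} := by
    rw [h1]; congr 1; apply filter_congr; intro S _
    constructor
    · intro h
      have a1 : i ∈ S ∩ {i, j} := by rw [h]; simp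
      have a2 : j ∉ S ∩ {i, j} := by rw [h]; simp [hij.symm]
      simp at a1 a2
      exact ⟨a1, a2⟩
    · rintro ⟨a1, a2⟩; rw [inter_insert_of_mem a1, inter_singleton_of_notMem a2]; rfl
  have c2 : #(tr {j}) = #{S ∈ F | i ∉ S ∧ j ∈ S} := by
    rw [h1]; congr 1; apply filter_congr; intro S _
    constructor
    · intro h
      have a1 : j ∈ S ∩ {i, j} := by rw [h]; simp
      have a2 : i ∉ S ∩ {i, j} := by rw [h]; simp [hij]
      simp at a1 a2
      exact ⟨a2, a1⟩
    · rintro ⟨a1, a2⟩; rw [inter_insert_of_notMem a1, inter_singleton_of_mem a2]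
  have c3 : #(tr {i, j}) = #{S ∈ F | i ∈ S ∧ j ∈ S} := by
    rw [h1]; congr 1; apply filter_congr; intro S _
    rw [inter_eq_right, insert_subset_iff, singleton_subset_iff]
  have s1 := card_filter_add_card_filter_not (s := F) (fun S => i ∈ S)
  have s2 := card_filter_add_card_filter_not (s := {S ∈ F | i ∈ S}) (fun S => j ∈ S)
  have s3 := card_filter_add_card_filter_not (s := {S ∈ F | i ∉ S}) (fun S => j ∈ S)
  have s4 := card_filter_add_card_filter_not (s := {S ∈ F | j ∉ S}) (fun S => i ∈ S)
  simp only [filter_filter] at s1 s2 s3 s4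
  have r1 : #{S ∈ F | j ∉ S ∧ i ∈ S} = #{S ∈ F | i ∈ S ∧ j ∉ S} := by simp only [and_comm]
  have r2 : #{S ∈ F | j ∉ S ∧ i ∉ S} = #{S ∈ F | i ∉ S ∧ j ∉ S} := by simp only [and_comm]
  have hp : (n - 3).choose (k - 2) = (n - 4).choose (k - 3) + (n - 4).choose (k - 2) := by
    obtain ⟨p, hp⟩ : ∃ p, n - 3 = p + 1 := ⟨n - 4, by omega⟩
    obtain ⟨q, hq⟩ : ∃ q, k - 2 = q + 1 := ⟨k - 3, by omega⟩
    rw [hp, hq, Nat.choose_succ_succ, show n - 4 = p by omega, show k - 3 = q by omega]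
  have hle : (n - 4).choose (k - 3) ≤ (n - 4).choose (k - 2) :=
    fbd_choose_le (by omega) (by omega)
  have hQ := fbd_crossQ (b := k - 1) _ hG (tr {i}) (tr {j}) (by simpa using h2 {i})
    (by simpa using h2 {j}) (by omega) (by omega) (h3 _ _ (by simpa using hij))
    (by rw [show n - 2 - 2 = n - 4 by omega, show k - 1 - 2 = k - 3 by omega]; omega)
    (by rw [show n - 2 - 2 = n - 4 by omega, show k - 1 - 2 = k - 3 by omega]; omega)
  rw [show n - 2 - 1 = n - 3 by omega, show k - 1 - 1 = k - 2 by omega] at hQ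
  have hPR := fbd_cross1 (a := k - 2) (b := k) (x := n - 4) _ hG (tr {i, j}) (tr ∅)
    (by have := h2 {i, j}; rwa [card_pair hij] at this) (by simpa using h2 ∅) (by omega)
    (h3 _ _ (by simp)) (by omega) (by omega) (by
      rw [c0]
      refine (hR.trans hle).trans (le_of_eq ?_)
      rw [← Nat.choose_symm (by omega)]
      congr 1; omega)
  omega

lemma fbd_main {n k u : ℕ} (hnk : 2 * k < n) (hu3 : 3 ≤ u) (huk : u ≤ k) (w : ℕ) :
    ∀ F : Finset (Finset ℕ), F ⊆ (Icc 1 n).powersetCard k →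
    (∀ A ∈ F, ∀ B ∈ F, (A ∩ B).Nonempty) →
    (∀ i ∈ Icc 1 n, (n - 3).choose (k - 2) < #{S ∈ F | i ∉ S}) →
    ∑ S ∈ F, ∑ x ∈ S, x = w →
    #F + (n - u - 1).choose (k - 1) ≤
      (n - 1).choose (k - 1) + (n - u - 1).choose (n - k - 1) := by
  induction w using Nat.strong_induction_on with
  | _ w ih =>
  intro F hF hint hg hw
  have hM := fbd_M (n := n) (k := k) (u := u) hnk (by omega) huk
  by_cases hsh : ∀ S ∈ F, ∀ x ∈ S, ∀ y ∉ S, 1 ≤ y → y < x → insert y (S.erase x) ∈ F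
  · have := fbd_shifted (by omega) hnk F hF hint hsh (hg 1 (by simp; omega)).le
    omega
  push Not at hsh
  obtain ⟨S₀, hS₀, j, hj, i, hi, hi1, hij, hnot⟩ := hsh
  have hjn := mem_Icc.1 ((mem_powersetCard.1 (hF hS₀)).1 hj)
  have hjI : j ∈ Icc 1 n := mem_Icc.2 hjn
  have hiI : i ∈ Icc 1 n := mem_Icc.2 ⟨hi1, by omega⟩
  set G := F.image (fbdShiftMap i j F) with hGdef
  have hinj := fbd_shift_injOn i j F
  have hGc : #G = #F := card_image_of_injOn hinj
  have hGint := fbd_shift_inter i j (by omega) F hint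
  have hGF : G ⊆ (Icc 1 n).powersetCard k := by
    intro T hT
    obtain ⟨S, hS, rfl⟩ := mem_image.1 hT
    unfold fbdShiftMap
    split_ifs with h
    · obtain ⟨h1, h2⟩ := mem_powersetCard.1 (hF hS)
      refine mem_powersetCard.2 ⟨insert_subset hiI ((erase_subset _ _).trans h1), ?_⟩
      rw [card_insert_of_notMem (by simp [h.2.1]), card_erase_of_mem h.1]
      have := card_pos.2 ⟨j, h.1⟩
      omega
    · exact hF hS
  have hsum : ∀ S, j ∈ S → i ∉ S → ∑ x ∈ insert i (S.erase j), x < ∑ x ∈ S, x := by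
    intro S h1 h2
    rw [sum_insert (by simp [h2]), ← add_sum_erase S (fun x => x) h1]
    omega
  have hGw : ∑ S ∈ G, ∑ x ∈ S, x < w := by
    rw [hGdef, sum_image hinj, ← hw]
    apply sum_lt_sum
    · intro S _
      unfold fbdShiftMap
      split_ifs with h
      · exact (hsum S h.1 h.2.1).le
      · exact le_rfl
    · refine ⟨S₀, hS₀, ?_⟩
      unfold fbdShiftMap
      rw [if_pos ⟨hj, hi, hnot⟩]
      exact hsum S₀ hj hi
  have hGl : ∀ l, l ≠ i → #{S ∈ F | l ∉ S} ≤ #{S ∈ G | l ∉ S} := by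
    intro l hl
    apply card_le_card_of_injOn (fbdShiftMap i j F)
    · intro S hS
      obtain ⟨h1, h2⟩ := mem_filter.1 (mem_coe.1 hS)
      refine mem_coe.2 (mem_filter.2 ⟨mem_image_of_mem _ h1, ?_⟩)
      unfold fbdShiftMap
      split_ifs
      · simp [hl, h2]
      · exact h2
    · exact hinj.mono (by intro S hS; exact (mem_filter.1 (mem_coe.1 hS)).1)
  by_cases hGi : (n - 3).choose (k - 2) < #{S ∈ G | i ∉ S}
  · have := ih _ hGw G hGF hGint (by
      intro l hl
      by_cases h : l = i
      · rw [h]; exact hGi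
      · exact (hg l hl).trans_le (hGl l h)) rfl
    omega
  by_cases hc : (n - u - 1).choose (n - k - 1) ≤ #{S ∈ G | i ∉ S}
  · have := fbd_stepA' hnk hu3 huk G hGF hGint i hiI (by omega) hc
    omega
  have hRG : #{S ∈ F | i ∉ S ∧ j ∉ S} ≤ #{S ∈ G | i ∉ S} := by
    apply card_le_card
    intro S hS
    obtain ⟨h1, h2, h3⟩ := mem_filter.1 hS
    refine mem_filter.2 ⟨mem_image.2 ⟨S, h1, ?_⟩, h2⟩
    unfold fbdShiftMap
    rw [if_neg (fun h => h3 h.1)]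
  have hcc : (n - u - 1).choose (n - k - 1) ≤ (n - 4).choose (k - 3) := by
    rw [← Nat.choose_symm (n := n - 4) (k := k - 3) (by omega),
      show n - 4 - (k - 3) = n - k - 1 by omega]
    exact Nat.choose_le_choose _ (by omega)
  have := fbd_break (by omega) hnk (by omega : i ≠ j) hiI hjI F hF hint (by omega)
    (hg i hiI).le (hg j hjI).le
  omega

/-- Frankl's theorem: if `F ⊆ C([n],k)` is intersecting, `n > 2k > 0`, and
`Δ(F) ≤ C(n-1,k-1) - C(n-u-1,k-1)` for some integer `3 ≤ u ≤ k`, then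
`|F| ≤ C(n-1,k-1) + C(n-u-1,n-k-1) - C(n-u-1,k-1)`. -/
theorem frankl_bounded_degree (n k u : ℕ) (hk : 0 < k) (hnk : 2 * k < n)
    (hu3 : 3 ≤ u) (huk : u ≤ k)
    (F : Finset (Finset ℕ)) (hF : F ⊆ (Finset.Icc 1 n).powersetCard k)
    (hint : ∀ A ∈ F, ∀ B ∈ F, (A ∩ B).Nonempty)
    (hdeg : (maxDeg n F : ℤ) ≤
      ((n - 1).choose (k - 1) : ℤ) - ((n - u - 1).choose (k - 1) : ℤ)) :
    (F.card : ℤ) ≤ ((n - 1).choose (k - 1) : ℤ)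
      + ((n - u - 1).choose (n - k - 1) : ℤ) - ((n - u - 1).choose (k - 1) : ℤ) := by
  have key : F.card + (n - u - 1).choose (k - 1) ≤
      (n - 1).choose (k - 1) + (n - u - 1).choose (n - k - 1) := by
    by_contra hcon
    apply hcon
    refine fbd_main hnk hu3 huk _ F hF hint ?_ rfl
    intro i hi
    by_contra hle
    apply hcon
    refine fbd_stepA' hnk hu3 huk F hF hint i hi (by omega) ?_
    have h1 : deg F i ≤ maxDeg n F := Finset.le_sup (f := deg F) hi
    have h2 : deg F i + #{S ∈ F | i ∉ S} = #F :=
      card_filter_add_card_filter_not (s := F) (fun S => i ∈ S)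
    omega
  omega
end

section
/- Let n > 2k > 0 and let F ⊆ C([n],k) be an intersecting family. If γ(F) ≥ C(n-u-1, n-k-1) for some real number u with 3 ≤ u ≤ k, then |F| ≤ C(n-1,k-1) + C(n-u-1,n-k-1) - C(n-u-1,k-1). -/
open Finset

/-- The diversity `γ(F) = |F| - Δ(F)`. -/
def diversity (n : ℕ) (F : Finset (Finset ℕ)) : ℕ := F.card - maxDeg n F


open scoped FinsetFamily

lemma choose_le_aux {N p q : ℕ} (hpq : p ≤ q) (h : N ≤ p + q) : N.choose q ≤ N.choose p := by
  have mono : ∀ r s : ℕ, r ≤ s → s ≤ N / 2 → N.choose r ≤ N.choose s := by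
    intro r s hrs
    induction s, hrs using Nat.le_induction with
    | base => intro _; exact le_rfl
    | succ s hs ih =>
      intro h'
      exact (ih (by omega)).trans (Nat.choose_le_succ_of_lt_half_left (by omega))
  by_cases hq : N < q
  · rw [Nat.choose_eq_zero_of_lt hq]; exact Nat.zero_le _
  · push Not at hq
    rw [← Nat.choose_symm hq]
    by_cases hp : p ≤ N / 2
    · exact mono _ _ (by omega) hp
    · rw [← Nat.choose_symm (show p ≤ N by omega)]
      exact mono _ _ (by omega) (by omega)

lemma exists_initSeg_card {α : Type*} [LinearOrder α] (r : ℕ) (M : ℕ) :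
    ∀ (A : Finset (Finset α)), Finset.Colex.IsInitSeg A r → A.card = M → ∀ y ≤ M,
      ∃ C : Finset (Finset α), Finset.Colex.IsInitSeg C r ∧ C.card = y := by
  induction M with
  | zero =>
    intro A hA hc y hy
    exact ⟨A, hA, by omega⟩
  | succ M ih =>
    intro A hA hc y hy
    rcases Nat.eq_or_lt_of_le hy with rfl | hy
    · exact ⟨A, hA, hc⟩
    have hne : A.Nonempty := by rw [← Finset.card_pos]; omega
    obtain ⟨x, hx, hmax⟩ := Finset.exists_max_image A (fun s => toColex s) hne
    refine ih (A.erase x) ⟨fun s hs => hA.1 (Finset.mem_of_mem_erase hs), ?_⟩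
      (by rw [Finset.card_erase_of_mem hx]; omega) y (by omega)
    intro s t hs ht
    rw [Finset.mem_erase] at hs ⊢
    refine ⟨?_, hA.2 hs.2 ht⟩
    rintro rfl
    exact absurd (hmax s hs.2) (not_le.2 ht.1)

def ini (m N : ℕ) : Finset (Fin m) := univ.filter (fun x => (x : ℕ) < N)

lemma card_ini {m N : ℕ} (h : N ≤ m) : (ini m N).card = N := by
  have : (ini m N).map Fin.valEmbedding = Finset.range N := by
    ext x
    simp only [ini, mem_map, mem_filter, mem_univ, true_and, Fin.valEmbedding_apply, mem_range]
    constructor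
    · rintro ⟨a, ha, rfl⟩; exact ha
    · intro hx; exact ⟨⟨x, by omega⟩, hx, rfl⟩
  rw [← Finset.card_map Fin.valEmbedding, this, Finset.card_range]

lemma isInitSeg_ini (m N r : ℕ) : Finset.Colex.IsInitSeg (powersetCard r (ini m N)) r := by
  refine ⟨Set.sized_powersetCard _ _, ?_⟩
  intro s t hs ht
  rw [mem_powersetCard] at hs ⊢
  refine ⟨?_, ht.2⟩
  intro x hx
  simp only [ini, mem_filter, mem_univ, true_and]
  have hlt : toColex (image Fin.val t) < toColex (image Fin.val s) := by
    rw [Colex.toColex_image_lt_toColex_image Fin.val_strictMono]; exact ht.1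
  apply Colex.forall_lt_mono hlt.le _ x (mem_image.2 ⟨x, hx, rfl⟩)
  intro b hb
  obtain ⟨a, ha, rfl⟩ := mem_image.1 hb
  have := hs.1 ha
  simpa [ini] using this

/-- iterated local LYM on a ground finset -/
lemma lym_aux {α : Type*} [DecidableEq α] (G : Finset α) (c a : ℕ) (hac : a ≤ c)
    (Y : Finset (Finset α)) (hY : Y ⊆ powersetCard c G) :
    Y.card * G.card.choose a ≤
      ((powersetCard a G).filter (fun t => ∃ s ∈ Y, t ⊆ s)).card * G.card.choose c := by
  set D := (powersetCard a G).filter (fun t => ∃ s ∈ Y, t ⊆ s) with hD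
  by_cases hcG : G.card < c
  · have : Y = ∅ := by
      rw [powersetCard_eq_empty.2 hcG] at hY
      exact Finset.subset_empty.1 hY
    simp [this]
  push Not at hcG
  have key : Y.card * (c.choose a) ≤ D.card * ((G.card - a).choose (c - a)) := by
    refine Finset.card_mul_le_card_mul (fun s t => t ⊆ s) ?_ ?_
    · intro s hs
      have hs' := mem_powersetCard.1 (hY hs)
      rw [← hs'.2, ← card_powersetCard]
      refine card_le_card ?_
      intro t ht
      rw [mem_powersetCard] at ht
      simp only [bipartiteAbove, mem_filter, hD, mem_powersetCard]
      exact ⟨⟨⟨ht.1.trans hs'.1, ht.2⟩, s, hs, ht.1⟩, ht.1⟩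
    · intro t ht
      have ht' := mem_powersetCard.1 (mem_filter.1 ht).1
      have hc : (G \ t).card = G.card - a := by
        rw [card_sdiff_of_subset ht'.1, ht'.2]
      rw [← hc, ← card_powersetCard]
      refine card_le_card_of_injOn (fun s => s \ t) ?_ ?_
      · intro s hs
        have hs := mem_filter.1 (Finset.mem_coe.1 hs)
        have hs' := mem_powersetCard.1 (hY hs.1)
        simp only [mem_coe, mem_powersetCard]
        refine ⟨sdiff_subset_sdiff hs'.1 le_rfl, ?_⟩
        rw [card_sdiff_of_subset hs.2, hs'.2, ht'.2]
      · intro s hs s' hs' h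
        have hs := (mem_filter.1 (Finset.mem_coe.1 hs)).2
        have hs' := (mem_filter.1 (Finset.mem_coe.1 hs')).2
        simp only at h
        rw [← sdiff_union_of_subset hs, h, sdiff_union_of_subset hs']
  have hid := Nat.choose_mul (n := G.card) (k := c) (s := a) hac
  have hpos : 0 < c.choose a := Nat.choose_pos hac
  refine Nat.le_of_mul_le_mul_right (c := c.choose a) ?_ hpos
  calc Y.card * G.card.choose a * c.choose a = (Y.card * c.choose a) * G.card.choose a := by ring
    _ ≤ (D.card * ((G.card - a).choose (c - a))) * G.card.choose a := Nat.mul_le_mul_right _ key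
    _ = D.card * (G.card.choose a * ((G.card - a).choose (c - a))) := by ring
    _ = _ := by rw [← hid]; ring

lemma kk_lin (m N c a : ℕ) (hac : a ≤ c) (hcN : c + 1 ≤ N) (hN : N + 1 ≤ m) (A : Finset (Finset (Fin m)))
    (hA : (A : Set (Finset (Fin m))).Sized (c + 1))
    (h1 : N.choose (c + 1) ≤ A.card) (h2 : A.card ≤ (N + 1).choose (c + 1)) :
    ∃ D, N.choose (a + 1) + D ≤ (∂^[c - a] A).card ∧
      (A.card - N.choose (c + 1)) * N.choose a ≤ D * N.choose c := by
  obtain ⟨C, hC, hCc⟩ := exists_initSeg_card (c + 1) _ _ (isInitSeg_ini m (N + 1) (c + 1))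
    (by rw [card_powersetCard, card_ini hN]) A.card h2
  have hkk : (∂^[c - a] C).card ≤ (∂^[c - a] A).card :=
    iterated_kk hA hCc.le hC
  have hlow : powersetCard (c + 1) (ini m N) ⊆ C := by
    rcases hC.total (isInitSeg_ini m N (c + 1)) with h | h
    · rw [Finset.eq_of_subset_of_card_le h
        (by rw [card_powersetCard, card_ini (by omega), hCc]; exact h1)]
    · exact h
  have hup : C ⊆ powersetCard (c + 1) (ini m (N + 1)) := by
    rcases hC.total (isInitSeg_ini m (N + 1) (c + 1)) with h | h
    · exact h
    · rw [Finset.eq_of_subset_of_card_le h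
        (by rw [card_powersetCard, card_ini (by omega), hCc]; exact h2)]
  let z : Fin m := ⟨N, hN⟩
  have hz : z ∉ ini m N := by simp [ini, z]
  have hins : ini m (N + 1) = insert z (ini m N) := by
    ext x
    simp only [ini, mem_filter, mem_univ, true_and, mem_insert, z, Fin.ext_iff]
    omega
  let Y : Finset (Finset (Fin m)) := (C.filter (fun s => z ∈ s)).image (fun s => s.erase z)
  have hYc : Y.card = (C.filter (fun s => z ∈ s)).card := by
    refine card_image_of_injOn ?_
    intro s hs t ht h
    have hs := (mem_filter.1 (Finset.mem_coe.1 hs)).2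
    have ht := (mem_filter.1 (Finset.mem_coe.1 ht)).2
    simp only at h
    rw [← insert_erase hs, h, insert_erase ht]
  have hnz : C.filter (fun s => z ∉ s) = powersetCard (c + 1) (ini m N) := by
    ext s
    rw [mem_filter]
    constructor
    · rintro ⟨hs, hzs⟩
      have := mem_powersetCard.1 (hup hs)
      rw [mem_powersetCard]
      refine ⟨?_, this.2⟩
      have h3 := this.1
      rw [hins] at h3
      exact (Finset.subset_insert_iff_of_notMem hzs).1 h3
    · intro hs
      exact ⟨hlow hs, fun h => hz ((mem_powersetCard.1 hs).1 h)⟩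
  have hsplit : (C.filter (fun s => z ∈ s)).card + N.choose (c + 1) = A.card := by
    rw [← hCc, ← card_filter_add_card_filter_not (s := C) (fun s => z ∈ s), hnz, card_powersetCard,
      card_ini (by omega)]
  have hYsub : Y ⊆ powersetCard c (ini m N) := by
    intro t ht
    obtain ⟨s, hs, rfl⟩ := mem_image.1 ht
    have hs := mem_filter.1 hs
    have := mem_powersetCard.1 (hup hs.1)
    rw [mem_powersetCard]
    refine ⟨?_, by rw [card_erase_of_mem hs.2, this.2]; rfl⟩
    have h3 := this.1
    rw [hins] at h3
    exact Finset.subset_insert_iff.1 h3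
  have hl := lym_aux (ini m N) c a hac Y hYsub
  rw [card_ini (by omega)] at hl
  set D := (powersetCard a (ini m N)).filter (fun t => ∃ s ∈ Y, t ⊆ s) with hD
  refine ⟨D.card, ?_, ?_⟩
  · refine le_trans ?_ hkk
    have hdisj : Disjoint (powersetCard (a + 1) (ini m N)) (D.image (insert z)) := by
      rw [Finset.disjoint_left]
      intro t ht ht'
      obtain ⟨s, hs, rfl⟩ := mem_image.1 ht'
      exact hz ((mem_powersetCard.1 ht).1 (mem_insert_self _ _))
    have hDc : (D.image (insert z)).card = D.card := by
      refine card_image_of_injOn ?_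
      intro s hs t ht h
      have hs := (mem_powersetCard.1 (mem_filter.1 (Finset.mem_coe.1 hs)).1).1
      have ht := (mem_powersetCard.1 (mem_filter.1 (Finset.mem_coe.1 ht)).1).1
      rw [← erase_insert (fun h => hz (hs h)), h, erase_insert (fun h => hz (ht h))]
    have hcount : N.choose (a + 1) + D.card =
        ((powersetCard (a + 1) (ini m N)) ∪ (D.image (insert z))).card := by
      rw [card_union_of_disjoint hdisj, hDc, card_powersetCard, card_ini (by omega)]
    rw [hcount]
    refine card_le_card (union_subset ?_ ?_)
    · intro t ht
      rw [mem_powersetCard] at ht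
      rw [mem_shadow_iterate_iff_exists_mem_card_add]
      obtain ⟨s, h1, h2, h3⟩ := exists_subsuperset_card_eq (n := c + 1) ht.1 (by omega)
        (by rw [card_ini (by omega)]; omega)
      exact ⟨s, hlow (mem_powersetCard.2 ⟨h2, h3⟩), h1, by omega⟩
    · intro t ht
      obtain ⟨t', ht', rfl⟩ := mem_image.1 ht
      rw [mem_shadow_iterate_iff_exists_mem_card_add]
      obtain ⟨h1, y, hy, hty⟩ := mem_filter.1 ht'
      obtain ⟨s, hs, rfl⟩ := mem_image.1 hy
      have hs := mem_filter.1 hs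
      have hsc := (mem_powersetCard.1 (hup hs.1)).2
      refine ⟨s, hs.1, ?_, ?_⟩
      · exact insert_subset hs.2 (hty.trans (erase_subset _ _))
      · rw [card_insert_of_notMem (fun h => hz ((mem_powersetCard.1 h1).1 h)), hsc,
          (mem_powersetCard.1 h1).2]
        omega
  · have : A.card - N.choose (c + 1) = Y.card := by omega
    rw [this]; exact hl

lemma cross_shadow_fin {m a b c : ℕ} (hbc : b + c = m) (hac : a ≤ c)
    (A B : Finset (Finset (Fin m))) (hA : (A : Set (Finset (Fin m))).Sized a)
    (hB : (B : Set (Finset (Fin m))).Sized b) (hAB : ∀ S ∈ A, ∀ T ∈ B, (S ∩ T).Nonempty) :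
    ∃ C : Finset (Finset (Fin m)), (C : Set (Finset (Fin m))).Sized c ∧ C.card = B.card ∧
      A.card + (∂^[c - a] C).card ≤ m.choose a := by
  refine ⟨B.image compl, ?_, card_image_of_injective _ compl_injective, ?_⟩
  · intro s hs
    obtain ⟨t, ht, rfl⟩ := mem_image.1 (Finset.mem_coe.1 hs)
    rw [card_compl, hB ht, Fintype.card_fin]; omega
  · have hdisj : Disjoint A (∂^[c - a] (B.image compl)) := by
      rw [Finset.disjoint_left]
      intro t ht ht'
      obtain ⟨s, hs, hts, -⟩ := mem_shadow_iterate_iff_exists_sdiff.1 ht'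
      obtain ⟨r, hr, rfl⟩ := mem_image.1 hs
      obtain ⟨x, hx⟩ := hAB t ht r hr
      rw [mem_inter] at hx
      exact (mem_compl.1 (hts hx.1)) hx.2
    rw [← card_union_of_disjoint hdisj]
    have : (m.choose a) = (powersetCard a (univ : Finset (Fin m))).card := by
      rw [card_powersetCard, card_univ, Fintype.card_fin]
    rw [this]
    refine card_le_card (union_subset ?_ ?_)
    · intro t ht
      exact mem_powersetCard.2 ⟨subset_univ _, hA ht⟩
    · intro t ht
      obtain ⟨s, hs, hts, hc⟩ := mem_shadow_iterate_iff_exists_mem_card_add.1 ht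
      obtain ⟨r, hr, rfl⟩ := mem_image.1 hs
      rw [card_compl, hB hr, Fintype.card_fin] at hc
      exact mem_powersetCard.2 ⟨subset_univ _, by omega⟩

lemma cross_lovasz_fin {m a b c N : ℕ} (hbc : b + c = m) (hac : a ≤ c) (hcN : c ≤ N) (hNm : N ≤ m)
    (A B : Finset (Finset (Fin m))) (hA : (A : Set (Finset (Fin m))).Sized a)
    (hB : (B : Set (Finset (Fin m))).Sized b) (hAB : ∀ S ∈ A, ∀ T ∈ B, (S ∩ T).Nonempty)
    (h : N.choose c ≤ B.card) : A.card + N.choose a ≤ m.choose a := by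
  obtain ⟨C, hC, hCB, hle⟩ := cross_shadow_fin hbc hac A B hA hB hAB
  have := kruskal_katona_lovasz_form (i := c - a) (Nat.sub_le _ _) hcN hNm hC (by rw [hCB]; exact h)
  rw [Nat.sub_sub_self hac] at this
  omega

lemma cross_lin_fin {m a b c N T : ℕ} (hbc : b + c = m) (ha : 1 ≤ a) (hac : a ≤ c) (hcN : c ≤ N)
    (hNm : N + 1 ≤ m)
    (A B : Finset (Finset (Fin m))) (hA : (A : Set (Finset (Fin m))).Sized a)
    (hB : (B : Set (Finset (Fin m))).Sized b) (hAB : ∀ S ∈ A, ∀ T ∈ B, (S ∩ T).Nonempty)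
    (h1 : N.choose c ≤ B.card) (h2 : B.card ≤ (N + 1).choose c)
    (hT1 : m.choose a + N.choose c ≤ T + N.choose a)
    (hT2 : m.choose a + (N + 1).choose c ≤ T + (N + 1).choose a) :
    A.card + B.card ≤ T := by
  obtain ⟨C, hC, hCB, hle⟩ := cross_shadow_fin hbc hac A B hA hB hAB
  obtain ⟨a, rfl⟩ : ∃ a', a = a' + 1 := ⟨a - 1, by omega⟩
  obtain ⟨c, rfl⟩ : ∃ a', c = a' + 1 := ⟨c - 1, by omega⟩
  obtain ⟨D, hD1, hD2⟩ := kk_lin m N c a (by omega) hcN hNm C hC (by omega) (by omega)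
  rw [hCB] at hD2
  rw [Nat.choose_succ_succ' N c] at h2 hT2
  rw [Nat.choose_succ_succ' N a] at hT2
  rw [show c + 1 - (a + 1) = c - a by omega] at hle
  obtain ⟨y, hy⟩ : ∃ y, B.card = N.choose (c + 1) + y := ⟨_, (Nat.add_sub_cancel' h1).symm⟩
  rw [hy] at hD2 h2 ⊢
  rw [Nat.add_sub_cancel_left] at hD2
  generalize N.choose c = Y at *
  generalize N.choose a = P at *
  by_cases hyD : y ≤ D
  · omega
  push Not at hyD
  have hyY : y ≤ Y := by omega
  have : y + P ≤ D + Y := by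
    by_contra hcon
    push Not at hcon
    rcases Nat.lt_or_ge Y P with hPY | hPY
    · nlinarith
    · obtain ⟨e, rfl⟩ := Nat.exists_eq_add_of_le hPY
      obtain ⟨d, rfl⟩ := Nat.exists_eq_add_of_lt hyD
      nlinarith
  omega

def pull {m : ℕ} (f : Fin m ↪ ℕ) (A : Finset (Finset ℕ)) : Finset (Finset (Fin m)) :=
  univ.filter (fun S => S.map f ∈ A)

lemma card_pull {m : ℕ} (f : Fin m ↪ ℕ) (M : Finset ℕ) (hf : univ.map f = M)
    (A : Finset (Finset ℕ)) (hA : ∀ S ∈ A, S ⊆ M) : (pull f A).card = A.card := by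
  rw [← card_map (Finset.mapEmbedding f).toEmbedding]
  congr 1
  ext S
  simp only [mem_map, pull, mem_filter, mem_univ, true_and]
  constructor
  · rintro ⟨T, hT, rfl⟩; exact hT
  · intro hS
    have := hA S hS
    rw [← hf, subset_map_iff] at this
    obtain ⟨T, -, rfl⟩ := this
    exact ⟨T, hS, rfl⟩

lemma pull_sized {m : ℕ} (f : Fin m ↪ ℕ) (M : Finset ℕ) (a : ℕ)
    (A : Finset (Finset ℕ)) (hA : A ⊆ powersetCard a M) :
    (pull f A : Set (Finset (Fin m))).Sized a := by
  intro S hS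
  have := (mem_filter.1 (Finset.mem_coe.1 hS)).2
  have := (mem_powersetCard.1 (hA this)).2
  rwa [card_map] at this

lemma pull_cross {m : ℕ} (f : Fin m ↪ ℕ) (A B : Finset (Finset ℕ))
    (hAB : ∀ S ∈ A, ∀ T ∈ B, (S ∩ T).Nonempty) :
    ∀ S ∈ pull f A, ∀ T ∈ pull f B, (S ∩ T).Nonempty := by
  intro S hS T hT
  have := hAB _ (mem_filter.1 hS).2 _ (mem_filter.1 hT).2
  rw [← map_inter] at this
  exact (map_nonempty).1 this

lemma exists_emb (M : Finset ℕ) : ∃ f : Fin M.card ↪ ℕ, univ.map f = M :=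
  ⟨(M.orderEmbOfFin rfl).toEmbedding, by simp⟩

lemma cross_lovasz {a b c N : ℕ} (M : Finset ℕ) (hbc : b + c = M.card) (hac : a ≤ c) (hcN : c ≤ N)
    (hNm : N ≤ M.card) (A B : Finset (Finset ℕ)) (hA : A ⊆ powersetCard a M)
    (hB : B ⊆ powersetCard b M) (hAB : ∀ S ∈ A, ∀ T ∈ B, (S ∩ T).Nonempty)
    (h : N.choose c ≤ B.card) : A.card + N.choose a ≤ M.card.choose a := by
  obtain ⟨f, hf⟩ := exists_emb M
  rw [← card_pull f M hf A (fun S hS => (mem_powersetCard.1 (hA hS)).1)]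
  refine cross_lovasz_fin hbc hac hcN hNm _ (pull f B) (pull_sized f M a A hA)
    (pull_sized f M b B hB) (pull_cross f A B hAB) ?_
  rwa [card_pull f M hf B (fun S hS => (mem_powersetCard.1 (hB hS)).1)]

lemma cross_lin {a b c N T : ℕ} (M : Finset ℕ) (hbc : b + c = M.card) (ha : 1 ≤ a) (hac : a ≤ c)
    (hcN : c ≤ N) (hNm : N + 1 ≤ M.card) (A B : Finset (Finset ℕ)) (hA : A ⊆ powersetCard a M)
    (hB : B ⊆ powersetCard b M) (hAB : ∀ S ∈ A, ∀ T ∈ B, (S ∩ T).Nonempty)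
    (h1 : N.choose c ≤ B.card) (h2 : B.card ≤ (N + 1).choose c)
    (hT1 : M.card.choose a + N.choose c ≤ T + N.choose a)
    (hT2 : M.card.choose a + (N + 1).choose c ≤ T + (N + 1).choose a) :
    A.card + B.card ≤ T := by
  obtain ⟨f, hf⟩ := exists_emb M
  have eA := card_pull f M hf A (fun S hS => (mem_powersetCard.1 (hA hS)).1)
  have eB := card_pull f M hf B (fun S hS => (mem_powersetCard.1 (hB hS)).1)
  rw [← eA, ← eB]
  rw [← eB] at h1 h2
  exact cross_lin_fin hbc ha hac hcN hNm _ (pull f B) (pull_sized f M a A hA)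
    (pull_sized f M b B hB) (pull_cross f A B hAB) h1 h2 hT1 hT2

/-- number of members of `F` whose trace on `P` is `Q` -/
def cnt (F : Finset (Finset ℕ)) (P Q : Finset ℕ) : ℕ := (F.filter (fun S => S ∩ P = Q)).card

def tr (F : Finset (Finset ℕ)) (P Q : Finset ℕ) : Finset (Finset ℕ) :=
  (F.filter (fun S => S ∩ P = Q)).image (fun S => S \ P)

lemma card_tr (F : Finset (Finset ℕ)) (P Q : Finset ℕ) : (tr F P Q).card = cnt F P Q := by
  refine card_image_of_injOn ?_
  intro s hs t ht h
  have hs := (mem_filter.1 (Finset.mem_coe.1 hs)).2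
  have ht := (mem_filter.1 (Finset.mem_coe.1 ht)).2
  simp only at h
  rw [← sdiff_union_inter s P, ← sdiff_union_inter t P, h, hs, ht]

lemma tr_subset {F : Finset (Finset ℕ)} {G P Q : Finset ℕ} {k a : ℕ}
    (hF : F ⊆ powersetCard k G) (ha : a + Q.card = k) : tr F P Q ⊆ powersetCard a (G \ P) := by
  intro t ht
  obtain ⟨s, hs, rfl⟩ := mem_image.1 ht
  have hs := mem_filter.1 hs
  have hk := mem_powersetCard.1 (hF hs.1)
  refine mem_powersetCard.2 ⟨sdiff_subset_sdiff hk.1 le_rfl, ?_⟩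
  have := card_sdiff_add_card_inter s P
  rw [hs.2] at this
  omega

lemma tr_cross {F : Finset (Finset ℕ)} {P Q Q' : Finset ℕ} (hQ : Disjoint Q Q')
    (hint : ∀ A ∈ F, ∀ B ∈ F, (A ∩ B).Nonempty) :
    ∀ S ∈ tr F P Q, ∀ T ∈ tr F P Q', (S ∩ T).Nonempty := by
  intro s hs t ht
  obtain ⟨s, hs1, rfl⟩ := mem_image.1 hs
  obtain ⟨t, ht1, rfl⟩ := mem_image.1 ht
  have hs := mem_filter.1 hs1
  have ht := mem_filter.1 ht1
  obtain ⟨x, hx⟩ := hint s hs.1 t ht.1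
  rw [mem_inter] at hx
  refine ⟨x, ?_⟩
  have hxP : x ∉ P := by
    intro hxP
    have h1 : x ∈ Q := by rw [← hs.2]; exact mem_inter.2 ⟨hx.1, hxP⟩
    have h2 : x ∈ Q' := by rw [← ht.2]; exact mem_inter.2 ⟨hx.2, hxP⟩
    exact (Finset.disjoint_left.1 hQ) h1 h2
  simp [hx.1, hx.2, hxP]

lemma fam_lovasz {F : Finset (Finset ℕ)} {G P Q Q' : Finset ℕ} {k m a b c N : ℕ}
    (hF : F ⊆ powersetCard k G) (hint : ∀ A ∈ F, ∀ B ∈ F, (A ∩ B).Nonempty)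
    (hP : P ⊆ G) (hQ : Disjoint Q Q') (hm : m + P.card = G.card) (ha : a + Q.card = k)
    (hb : b + Q'.card = k) (hbc : b + c = m) (hac : a ≤ c) (hcN : c ≤ N) (hNm : N ≤ m)
    (h : N.choose c ≤ cnt F P Q') : cnt F P Q + N.choose a ≤ m.choose a := by
  have hm' : (G \ P).card = m := by rw [card_sdiff_of_subset hP]; omega
  rw [← card_tr] at h ⊢
  subst hm'
  exact cross_lovasz (G \ P) hbc hac hcN hNm _ _ (tr_subset hF ha) (tr_subset hF hb)
    (tr_cross hQ hint) h

lemma fam_lin {F : Finset (Finset ℕ)} {G P Q Q' : Finset ℕ} {k m a b c T : ℕ} (N₁ N₂ : ℕ)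
    (hF : F ⊆ powersetCard k G) (hint : ∀ A ∈ F, ∀ B ∈ F, (A ∩ B).Nonempty)
    (hP : P ⊆ G) (hQ : Disjoint Q Q') (hm : m + P.card = G.card) (ha : a + Q.card = k)
    (hb : b + Q'.card = k) (hbc : b + c = m) (ha1 : 1 ≤ a) (hac : a ≤ c)
    (hcN : c ≤ N₁) (hN : N₁ < N₂) (hNm : N₂ ≤ m)
    (h1 : N₁.choose c ≤ cnt F P Q') (h2 : cnt F P Q' ≤ N₂.choose c)
    (hT : ∀ N, N₁ ≤ N → N ≤ N₂ → m.choose a + N.choose c ≤ T + N.choose a) :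
    cnt F P Q + cnt F P Q' ≤ T := by
  have hm' : (G \ P).card = m := by rw [card_sdiff_of_subset hP]; omega
  have step : ∀ N, N₁ ≤ N → N + 1 ≤ N₂ → N.choose c ≤ cnt F P Q' →
      cnt F P Q' ≤ (N + 1).choose c → cnt F P Q + cnt F P Q' ≤ T := by
    intro N hN1 hN2 h3 h4
    have hT1 := hT N hN1 (by omega)
    have hT2 := hT (N + 1) (by omega) hN2
    rw [← card_tr] at h3 h4 ⊢
    rw [← card_tr]
    subst hm'
    exact cross_lin (G \ P) hbc ha1 hac (by omega) (by omega) _ _ (tr_subset hF ha)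
      (tr_subset hF hb) (tr_cross hQ hint) h3 h4 hT1 hT2
  have key : ∀ N, N₁ + 1 ≤ N → N ≤ N₂ → cnt F P Q' ≤ N.choose c →
      cnt F P Q + cnt F P Q' ≤ T := by
    intro N hN
    induction N, hN using Nat.le_induction with
    | base => intro h3 h4; exact step N₁ le_rfl h3 h1 h4
    | succ N hN ih =>
      intro h3 h4
      rcases Nat.le_total (cnt F P Q') (N.choose c) with h5 | h5
      · exact ih (by omega) h5
      · exact step N (by omega) h3 h5 h4
  exact key N₂ hN le_rfl h2

def miss (F : Finset (Finset ℕ)) (i : ℕ) : ℕ := (F.filter (fun S => i ∉ S)).card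

lemma inter_single_self (S : Finset ℕ) (i : ℕ) : S ∩ {i} = {i} ↔ i ∈ S := by
  rw [inter_eq_right, singleton_subset_iff]

lemma inter_single_empty (S : Finset ℕ) (i : ℕ) : S ∩ {i} = ∅ ↔ i ∉ S := by
  rw [← disjoint_iff_inter_eq_empty, disjoint_singleton_right]

lemma cnt_single (F : Finset (Finset ℕ)) (i : ℕ) : cnt F {i} {i} + cnt F {i} ∅ = F.card := by
  simp only [cnt, inter_single_self, inter_single_empty]
  exact card_filter_add_card_filter_not _

lemma cnt_single_empty (F : Finset (Finset ℕ)) (i : ℕ) : cnt F {i} ∅ = miss F i := by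
  simp only [cnt, miss, inter_single_empty]

lemma inter_pair_both (S : Finset ℕ) (i j : ℕ) : S ∩ {i, j} = {i, j} ↔ i ∈ S ∧ j ∈ S := by
  rw [inter_eq_right, insert_subset_iff, singleton_subset_iff]

lemma inter_pair_empty (S : Finset ℕ) (i j : ℕ) : S ∩ {i, j} = ∅ ↔ i ∉ S ∧ j ∉ S := by
  rw [← disjoint_iff_inter_eq_empty, disjoint_insert_right, disjoint_singleton_right]

lemma inter_pair_left (S : Finset ℕ) {i j : ℕ} (h : i ≠ j) :
    S ∩ {i, j} = {i} ↔ i ∈ S ∧ j ∉ S := by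
  constructor
  · intro hS
    have h1 : i ∈ S ∩ {i, j} := by rw [hS]; simp
    refine ⟨(mem_inter.1 h1).1, fun hj => ?_⟩
    have h2 : j ∈ S ∩ {i, j} := by simp [hj]
    rw [hS, mem_singleton] at h2
    exact h h2.symm
  · rintro ⟨h1, h2⟩
    ext x
    simp only [mem_inter, mem_insert, mem_singleton]
    constructor
    · rintro ⟨hx, rfl | rfl⟩
      · rfl
      · exact absurd hx h2
    · rintro rfl; exact ⟨h1, Or.inl rfl⟩

lemma inter_pair_right (S : Finset ℕ) {i j : ℕ} (h : i ≠ j) :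
    S ∩ {i, j} = {j} ↔ i ∉ S ∧ j ∈ S := by
  rw [Finset.pair_comm, inter_pair_left S h.symm, and_comm]

lemma cnt_pair (F : Finset (Finset ℕ)) {i j : ℕ} (h : i ≠ j) :
    cnt F {i, j} {i, j} + cnt F {i, j} ∅ + (cnt F {i, j} {i} + cnt F {i, j} {j}) = F.card := by
  simp only [cnt, inter_pair_both, inter_pair_empty, inter_pair_left _ h, inter_pair_right _ h,
    card_filter, ← sum_add_distrib]
  rw [card_eq_sum_ones]
  refine sum_congr rfl fun S _ => ?_
  by_cases h1 : i ∈ S <;> by_cases h2 : j ∈ S <;> simp [h1, h2]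

lemma miss_pair_left (F : Finset (Finset ℕ)) {i j : ℕ} (h : i ≠ j) :
    miss F i = cnt F {i, j} ∅ + cnt F {i, j} {j} := by
  simp only [cnt, miss, inter_pair_empty, inter_pair_right _ h,
    card_filter, ← sum_add_distrib]
  refine sum_congr rfl fun S _ => ?_
  by_cases h1 : i ∈ S <;> by_cases h2 : j ∈ S <;> simp [h1, h2]

lemma miss_pair_right (F : Finset (Finset ℕ)) {i j : ℕ} (h : i ≠ j) :
    miss F j = cnt F {i, j} ∅ + cnt F {i, j} {i} := by
  simp only [cnt, miss, inter_pair_empty, inter_pair_left _ h,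
    card_filter, ← sum_add_distrib]
  refine sum_congr rfl fun S _ => ?_
  by_cases h1 : i ∈ S <;> by_cases h2 : j ∈ S <;> simp [h1, h2]

/-- the shifting operation on sets -/
def shSet (F : Finset (Finset ℕ)) (i j : ℕ) (S : Finset ℕ) : Finset ℕ :=
  if j ∈ S ∧ i ∉ S ∧ insert i (S.erase j) ∉ F then insert i (S.erase j) else S

def sh (F : Finset (Finset ℕ)) (i j : ℕ) : Finset (Finset ℕ) := F.image (shSet F i j)

lemma shift_inj {S T : Finset ℕ} {i j : ℕ} (hS : j ∈ S) (hS' : i ∉ S) (hT : j ∈ T) (hT' : i ∉ T)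
    (h : insert i (S.erase j) = insert i (T.erase j)) : S = T := by
  have h1 : S.erase j = T.erase j := by
    rw [← erase_insert (fun h => hS' (mem_of_mem_erase h)), h,
      erase_insert (fun h => hT' (mem_of_mem_erase h))]
  rw [← insert_erase hS, h1, insert_erase hT]

lemma shSet_injOn (F : Finset (Finset ℕ)) (i j : ℕ) : Set.InjOn (shSet F i j) F := by
  intro S hS T hT h
  unfold shSet at h
  split_ifs at h with h1 h2 h2
  · exact shift_inj h1.1 h1.2.1 h2.1 h2.2.1 h
  · rw [h] at h1; exact absurd hT h1.2.2
  · rw [← h] at h2; exact absurd hS h2.2.2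
  · exact h

lemma card_sh (F : Finset (Finset ℕ)) (i j : ℕ) : (sh F i j).card = F.card :=
  card_image_of_injOn (shSet_injOn F i j)

lemma miss_sh (F : Finset (Finset ℕ)) (i j l : ℕ) :
    miss (sh F i j) l = (F.filter (fun S => l ∉ shSet F i j S)).card := by
  unfold miss sh
  rw [filter_image]
  exact card_image_of_injOn ((shSet_injOn F i j).mono (by
    intro x hx; exact (mem_filter.1 (Finset.mem_coe.1 hx)).1))

lemma miss_sh_ge (F : Finset (Finset ℕ)) {i j l : ℕ} (hl : l ≠ i) :
    miss F l ≤ miss (sh F i j) l := by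
  rw [miss_sh]
  refine card_le_card ?_
  intro S hS
  rw [mem_filter] at hS ⊢
  refine ⟨hS.1, ?_⟩
  unfold shSet
  split_ifs
  · simp [hl, hS.2]
  · exact hS.2

lemma miss_sh_i (F : Finset (Finset ℕ)) (i j : ℕ) : cnt F {i, j} ∅ ≤ miss (sh F i j) i := by
  rw [miss_sh]
  unfold cnt
  refine card_le_card ?_
  intro S hS
  rw [mem_filter, inter_pair_empty] at hS
  rw [mem_filter]
  refine ⟨hS.1, ?_⟩
  unfold shSet
  rw [if_neg (fun h => hS.2.2 h.1)]
  exact hS.2.1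

lemma sh_subset {F : Finset (Finset ℕ)} {G : Finset ℕ} {k i j : ℕ} (hi : i ∈ G)
    (hF : F ⊆ powersetCard k G) : sh F i j ⊆ powersetCard k G := by
  intro T hT
  obtain ⟨S, hS, rfl⟩ := mem_image.1 hT
  have h := mem_powersetCard.1 (hF hS)
  unfold shSet
  split_ifs with h1
  · refine mem_powersetCard.2 ⟨insert_subset hi ((erase_subset _ _).trans h.1), ?_⟩
    rw [card_insert_of_notMem (fun h => h1.2.1 (mem_of_mem_erase h)), card_erase_of_mem h1.1, h.2]
    have : 0 < S.card := card_pos.2 ⟨j, h1.1⟩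
    omega
  · exact hF hS

lemma sh_int_aux {F : Finset (Finset ℕ)} {i j : ℕ} (hij : i ≠ j)
    (hint : ∀ A ∈ F, ∀ B ∈ F, (A ∩ B).Nonempty) {S T : Finset ℕ} (hS : S ∈ F) (hT : T ∈ F)
    (h1 : j ∈ S ∧ i ∉ S ∧ insert i (S.erase j) ∉ F)
    (h2 : ¬ (j ∈ T ∧ i ∉ T ∧ insert i (T.erase j) ∉ F)) :
    (insert i (S.erase j) ∩ T).Nonempty := by
  by_cases hiT : i ∈ T
  · exact ⟨i, by simp [hiT]⟩
  by_cases hjT : j ∈ T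
  · have h3 : insert i (T.erase j) ∈ F := by
      by_contra h3; exact h2 ⟨hjT, hiT, h3⟩
    obtain ⟨x, hx⟩ := hint S hS _ h3
    rw [mem_inter, mem_insert, mem_erase] at hx
    rcases hx with ⟨hxS, rfl | ⟨hxj, hxT⟩⟩
    · exact absurd hxS h1.2.1
    · exact ⟨x, by simp [hxS, hxj, hxT]⟩
  · obtain ⟨x, hx⟩ := hint S hS T hT
    rw [mem_inter] at hx
    have : x ≠ j := by rintro rfl; exact hjT hx.2
    exact ⟨x, by simp [hx.1, hx.2, this]⟩

lemma sh_int {F : Finset (Finset ℕ)} {i j : ℕ} (hij : i ≠ j)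
    (hint : ∀ A ∈ F, ∀ B ∈ F, (A ∩ B).Nonempty) :
    ∀ A ∈ sh F i j, ∀ B ∈ sh F i j, (A ∩ B).Nonempty := by
  intro A hA B hB
  obtain ⟨S, hS, rfl⟩ := mem_image.1 hA
  obtain ⟨T, hT, rfl⟩ := mem_image.1 hB
  unfold shSet
  split_ifs with h1 h2 h2
  · exact ⟨i, by simp⟩
  · exact sh_int_aux hij hint hS hT h1 h2
  · rw [inter_comm]; exact sh_int_aux hij hint hT hS h2 h1
  · exact hint S hS T hT

def wt (F : Finset (Finset ℕ)) : ℕ := ∑ S ∈ F, ∑ x ∈ S, x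

lemma wt_shift {S : Finset ℕ} {i j : ℕ} (hij : i < j) (hj : j ∈ S) (hi : i ∉ S) :
    ∑ x ∈ insert i (S.erase j), x < ∑ x ∈ S, x := by
  rw [sum_insert (fun h => hi (mem_of_mem_erase h)), ← add_sum_erase S (fun x => x) hj]
  omega

lemma wt_sh {F : Finset (Finset ℕ)} {i j : ℕ} (hij : i < j) {S : Finset ℕ} (hS : S ∈ F)
    (hj : j ∈ S) (hi : i ∉ S) (h : insert i (S.erase j) ∉ F) : wt (sh F i j) < wt F := by
  unfold wt sh
  rw [sum_image (shSet_injOn F i j)]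
  refine sum_lt_sum ?_ ⟨S, hS, ?_⟩
  · intro T hT
    unfold shSet
    split_ifs with h1
    · exact (wt_shift hij h1.1 h1.2.1).le
    · exact le_rfl
  · unfold shSet
    rw [if_pos ⟨hj, hi, h⟩]
    exact wt_shift hij hj hi

def Shifted (F : Finset (Finset ℕ)) : Prop :=
  ∀ S ∈ F, ∀ i j, 1 ≤ i → i < j → j ∈ S → i ∉ S → insert i (S.erase j) ∈ F

lemma pas {N r N' r' : ℕ} (h1 : N = N' + 1) (h2 : r = r' + 1) :
    N.choose r = N'.choose r' + N'.choose r := by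
  subst h1 h2; exact Nat.choose_succ_succ' _ _

lemma anti_aux {a c N₁ N₂ : ℕ} (ha : 1 ≤ a) (hac : a ≤ c) (hN : N₁ ≤ N₂) (h2 : N₂ + 1 ≤ a + c) :
    N₂.choose c + N₁.choose a ≤ N₁.choose c + N₂.choose a := by
  induction N₂, hN using Nat.le_induction with
  | base => exact le_rfl
  | succ N hN ih =>
    have := ih (by omega)
    have e1 := pas (N := N + 1) (r := c) (r' := c - 1) rfl (by omega)
    have e2 := pas (N := N + 1) (r := a) (r' := a - 1) rfl (by omega)
    have e3 : N.choose (c - 1) ≤ N.choose (a - 1) := choose_le_aux (by omega) (by omega)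
    omega

lemma small_case {n k u i : ℕ} (hnk : 2 * k < n) (hu3 : 3 ≤ u) (huk : u ≤ k)
    {F : Finset (Finset ℕ)} (hF : F ⊆ powersetCard k (Icc 1 n))
    (hint : ∀ A ∈ F, ∀ B ∈ F, (A ∩ B).Nonempty) (hi : i ∈ Icc 1 n)
    (h1 : (n - u - 1).choose (n - k - 1) ≤ miss F i)
    (h2 : miss F i ≤ (n - 3).choose (n - k - 1)) :
    F.card + (n - u - 1).choose (k - 1) ≤
      (n - 1).choose (k - 1) + (n - u - 1).choose (n - k - 1) := by
  have hle : (n - u - 1).choose (k - 1) ≤ (n - 1).choose (k - 1) :=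
    Nat.choose_le_choose _ (by omega)
  rw [← cnt_single F i]
  rw [← cnt_single_empty] at h1 h2
  have key := fam_lin (F := F) (G := Icc 1 n) (P := {i}) (Q := {i}) (Q' := ∅) (k := k)
    (m := n - 1) (a := k - 1) (b := k) (c := n - k - 1)
    (T := (n - 1).choose (k - 1) + (n - u - 1).choose (n - k - 1) - (n - u - 1).choose (k - 1))
    (n - u - 1) (n - 3) hF hint (by simpa using hi) (by simp)
    (by simp; omega) (by simp; omega) (by simp) (by omega) (by omega) (by omega) (by omega)
    (by omega) (by omega) h1 h2 ?_
  · omega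
  · intro N hN1 hN2
    have := anti_aux (a := k - 1) (c := n - k - 1) (by omega) (by omega) hN1 (by omega)
    omega

lemma cnt_le {F : Finset (Finset ℕ)} {G P Q : Finset ℕ} {k a m : ℕ}
    (hF : F ⊆ powersetCard k G) (hP : P ⊆ G) (hm : m + P.card = G.card) (ha : a + Q.card = k) :
    cnt F P Q ≤ m.choose a := by
  have hm' : (G \ P).card = m := by rw [card_sdiff_of_subset hP]; omega
  rw [← card_tr, ← hm', ← card_powersetCard]
  exact card_le_card (tr_subset hF ha)

lemma half_case {k : ℕ} (hk : 2 ≤ k)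
    {F : Finset (Finset ℕ)} (hF : F ⊆ powersetCard k (Icc 1 (2 * k)))
    (hint : ∀ A ∈ F, ∀ B ∈ F, (A ∩ B).Nonempty) (h1 : 1 ≤ miss F 1) :
    F.card ≤ (2 * k - 1).choose (k - 1) := by
  rw [← cnt_single F 1]
  rw [← cnt_single_empty] at h1
  have hP : ({1} : Finset ℕ) ⊆ Icc 1 (2 * k) := by simp; omega
  have hm : (2 * k - 1) + ({1} : Finset ℕ).card = (Icc 1 (2 * k)).card := by simp; omega
  refine fam_lin (F := F) (G := Icc 1 (2 * k)) (P := {1}) (Q := {1}) (Q' := ∅) (k := k)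
    (m := 2 * k - 1) (a := k - 1) (b := k) (c := k - 1)
    (k - 1) (2 * k - 1) hF hint hP (by simp)
    hm (by simp; omega) (by simp) (by omega) (by omega) (by omega) (by omega)
    (by omega) (by omega) (by simpa using h1) ?_ ?_
  · have := cnt_le (Q := ∅) (a := k) hF hP hm (by simp)
    rwa [← Nat.choose_symm (by omega), show 2 * k - 1 - k = k - 1 by omega] at this
  · intro N _ _; exact le_rfl

lemma two_case {n : ℕ} {F : Finset (Finset ℕ)} (hF : F ⊆ powersetCard 2 (Icc 1 n))
    (hint : ∀ A ∈ F, ∀ B ∈ F, (A ∩ B).Nonempty) (hsh : Shifted F) (h1 : 1 ≤ miss F 1) :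
    F.card ≤ 3 := by
  have hcard : ∀ S ∈ F, S.card = 2 := fun S hS => (mem_powersetCard.1 (hF hS)).2
  have hpos : ∀ S ∈ F, ∀ x ∈ S, 1 ≤ x := fun S hS x hx =>
    (mem_Icc.1 ((mem_powersetCard.1 (hF hS)).1 hx)).1
  obtain ⟨S, hS⟩ := card_pos.1 h1
  rw [mem_filter] at hS
  obtain ⟨S₂, hS₂, h12, h22⟩ : ∃ S ∈ F, 1 ∉ S ∧ 2 ∈ S := by
    by_cases h2 : 2 ∈ S
    · exact ⟨S, hS.1, hS.2, h2⟩
    · obtain ⟨j, hj⟩ : S.Nonempty := card_pos.1 (by rw [hcard S hS.1]; omega)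
      have hj1 := hpos S hS.1 j hj
      have hj2 : j ≠ 1 := by rintro rfl; exact hS.2 hj
      have hj3 : j ≠ 2 := by rintro rfl; exact h2 hj
      refine ⟨_, hsh S hS.1 2 j (by omega) (by omega) hj h2, ?_, by simp⟩
      simp [hS.2]
  obtain ⟨S₃, hS₃, h13, h23, h33⟩ : ∃ S ∈ F, 1 ∉ S ∧ 2 ∈ S ∧ 3 ∈ S := by
    by_cases h3 : 3 ∈ S₂
    · exact ⟨S₂, hS₂, h12, h22, h3⟩
    · obtain ⟨j, hj⟩ : (S₂.erase 2).Nonempty :=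
        card_pos.1 (by rw [card_erase_of_mem h22, hcard S₂ hS₂]; omega)
      rw [mem_erase] at hj
      have hj1 := hpos S₂ hS₂ j hj.2
      have hj2 : j ≠ 1 := by rintro rfl; exact h12 hj.2
      have hj3 : j ≠ 3 := by rintro rfl; exact h3 hj.2
      have := hj.1
      refine ⟨_, hsh S₂ hS₂ 3 j (by omega) (by omega) hj.2 h3, ?_, ?_, by simp⟩
      · simp [h12]
      · simp [h22, hj.1.symm]
  have hS3 : S₃ = {2, 3} := by
    symm
    refine eq_of_subset_of_card_le (by simp [insert_subset_iff, h23, h33]) ?_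
    rw [hcard S₃ hS₃]; simp
  subst hS3
  have hA := hsh _ hS₃ 1 2 le_rfl (by omega) (by simp) (by simp)
  have hB := hsh _ hS₃ 1 3 le_rfl (by omega) (by simp) (by simp)
  have hsub : F ⊆ powersetCard 2 {1, 2, 3} := by
    intro T hT
    refine mem_powersetCard.2 ⟨?_, hcard T hT⟩
    intro x hx
    by_contra hxn
    simp only [mem_insert, mem_singleton, not_or] at hxn
    have hc : (T.erase x).card = 1 := by rw [card_erase_of_mem hx, hcard T hT]
    obtain ⟨y, hy⟩ := card_eq_one.1 hc
    have hTe : ∀ z ∈ T, z ≠ x → z = y := by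
      intro z hz hzx
      have : z ∈ T.erase x := mem_erase.2 ⟨hzx, hz⟩
      rwa [hy, mem_singleton] at this
    obtain ⟨p, hp⟩ := hint T hT _ hS₃
    obtain ⟨q, hq⟩ := hint T hT _ hA
    obtain ⟨r, hr⟩ := hint T hT _ hB
    simp only [mem_inter, mem_insert, mem_singleton, mem_erase] at hp hq hr
    have e1 := hTe p hp.1 (by omega)
    have e2 := hTe q hq.1 (by omega)
    have e3 := hTe r hr.1 (by omega)
    omega
  calc F.card ≤ _ := card_le_card hsub
    _ = 3 := by rw [card_powersetCard]; rfl

lemma shifted_bound (n : ℕ) : ∀ (k : ℕ) (F : Finset (Finset ℕ)), 2 ≤ k → 2 * k ≤ n →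
    F ⊆ powersetCard k (Icc 1 n) → (∀ A ∈ F, ∀ B ∈ F, (A ∩ B).Nonempty) → Shifted F →
    (n - 3).choose (n - k - 1) ≤ miss F 1 →
    F.card + (n - 3).choose (k - 1) ≤ (n - 1).choose (k - 1) + (n - 3).choose (n - k - 1) := by
  induction n with
  | zero => intro k F hk hn; omega
  | succ n ih =>
    intro k F hk hn hF hint hsh hmiss
    have hm1 : 1 ≤ miss F 1 := le_trans (Nat.choose_pos (by omega)) hmiss
    rcases Nat.eq_or_lt_of_le hn with he | hlt
    · rw [← he] at hF ⊢
      have := half_case hk hF hint hm1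
      rw [show 2 * k - k - 1 = k - 1 by omega]
      omega
    rcases Nat.eq_or_lt_of_le hk with rfl | hk3
    · have := two_case hF hint hsh hm1
      have e : (n + 1 - 3).choose (n + 1 - 2 - 1) = 1 := by
        rw [show n + 1 - 2 - 1 = n + 1 - 3 by omega]; exact Nat.choose_self _
      simp only [show 2 - 1 = 1 from rfl, Nat.choose_one_right]
      omega
    have hne : (1 : ℕ) ≠ n + 1 := by omega
    have hP : ({1, n + 1} : Finset ℕ) ⊆ Icc 1 (n + 1) := by
      simp [insert_subset_iff]
    have hPc : ({1, n + 1} : Finset ℕ).card = 2 := card_pair hne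
    have hm : (n - 1) + ({1, n + 1} : Finset ℕ).card = (Icc 1 (n + 1)).card := by
      rw [hPc, Nat.card_Icc]; omega
    have htot := cnt_pair F hne
    have hmis := miss_pair_left F hne
    -- the part avoiding n+1
    have I0 : (n - 3).choose (n - k - 1) ≤ cnt F {1, n + 1} ∅ →
        cnt F {1, n + 1} {1} + cnt F {1, n + 1} ∅ + (n - 3).choose (k - 1) ≤
        (n - 1).choose (k - 1) + (n - 3).choose (n - k - 1) := by
      intro hz
      have hin := ih k (F.filter (fun S => n + 1 ∉ S)) hk (by omega) ?_ ?_ ?_ ?_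
      · have e := miss_pair_right F hne
        unfold miss at e
        rw [e] at hin
        omega
      · intro S hS
        rw [mem_filter] at hS
        have := mem_powersetCard.1 (hF hS.1)
        refine mem_powersetCard.2 ⟨fun x hx => ?_, this.2⟩
        have h1 := mem_Icc.1 (this.1 hx)
        have h2 : x ≠ n + 1 := by rintro rfl; exact hS.2 hx
        rw [mem_Icc]; omega
      · intro A hA B hB
        exact hint A (mem_filter.1 hA).1 B (mem_filter.1 hB).1
      · intro S hS i j hi hij hj hiS
        rw [mem_filter] at hS ⊢
        have := mem_Icc.1 ((mem_powersetCard.1 (hF hS.1)).1 hj)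
        refine ⟨hsh S hS.1 i j hi hij hj hiS, ?_⟩
        rw [mem_insert, mem_erase]
        rintro (h | h)
        · omega
        · exact hS.2 h.2
      · have : miss (F.filter (fun S => n + 1 ∉ S)) 1 = cnt F {1, n + 1} ∅ := by
          unfold miss cnt
          rw [filter_filter]
          simp only [inter_pair_empty, and_comm]
        rw [this]; exact hz
    have I1 : (n - 3).choose (n - k) ≤ cnt F {1, n + 1} {n + 1} →
        cnt F {1, n + 1} {1, n + 1} + cnt F {1, n + 1} {n + 1} + (n - 3).choose (k - 2) ≤
        (n - 1).choose (k - 2) + (n - 3).choose (n - k) := by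
      intro hz
      have hinj : Set.InjOn (fun S : Finset ℕ => S.erase (n + 1))
          (F.filter (fun S => n + 1 ∈ S) : Finset (Finset ℕ)) := by
        intro S hS T hT h
        have hS := (mem_filter.1 (Finset.mem_coe.1 hS)).2
        have hT := (mem_filter.1 (Finset.mem_coe.1 hT)).2
        simp only at h
        rw [← insert_erase hS, h, insert_erase hT]
      have hin := ih (k - 1) ((F.filter (fun S => n + 1 ∈ S)).image (fun S => S.erase (n + 1)))
        (by omega) (by omega) ?_ ?_ ?_ ?_
      · rw [card_image_of_injOn hinj] at hin
        have e : (F.filter (fun S => n + 1 ∈ S)).card =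
            cnt F {1, n + 1} {1, n + 1} + cnt F {1, n + 1} {n + 1} := by
          simp only [cnt, inter_pair_both, inter_pair_right _ hne, card_filter, ← sum_add_distrib]
          refine sum_congr rfl fun S _ => ?_
          by_cases h1 : 1 ∈ S <;> by_cases h2 : n + 1 ∈ S <;> simp [h1, h2]
        rw [e, show k - 1 - 1 = k - 2 by omega, show n - (k - 1) - 1 = n - k by omega] at hin
        exact hin
      · intro T hT
        obtain ⟨S, hS, rfl⟩ := mem_image.1 hT
        rw [mem_filter] at hS
        have := mem_powersetCard.1 (hF hS.1)
        refine mem_powersetCard.2 ⟨fun x hx => ?_, by rw [card_erase_of_mem hS.2, this.2]⟩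
        rw [mem_erase] at hx
        have h1 := mem_Icc.1 (this.1 hx.2)
        have h2 := hx.1
        rw [mem_Icc]; omega
      · intro A hA B hB
        obtain ⟨S, hS, rfl⟩ := mem_image.1 hA
        obtain ⟨T, hT, rfl⟩ := mem_image.1 hB
        rw [mem_filter] at hS hT
        have cS := mem_powersetCard.1 (hF hS.1)
        have cT := mem_powersetCard.1 (hF hT.1)
        by_contra hcon
        rw [not_nonempty_iff_eq_empty] at hcon
        have hST : ∀ x, x ∈ S → x ∈ T → x = n + 1 := by
          intro x hxS hxT
          by_contra hx
          have : x ∈ S.erase (n + 1) ∩ T.erase (n + 1) := by simp [hx, hxS, hxT]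
          rw [hcon] at this
          exact absurd this (notMem_empty _)
        obtain ⟨x, hx, hxn⟩ : ∃ x ∈ Icc 1 (n + 1), x ∉ S ∪ T := by
          by_contra hall
          push Not at hall
          have h1 : (Icc 1 (n + 1)).card ≤ (S ∪ T).card := card_le_card hall
          have h2 := card_union_add_card_inter S T
          rw [Nat.card_Icc] at h1
          omega
        rw [mem_union, not_or] at hxn
        rw [mem_Icc] at hx
        have hxne : x ≠ n + 1 := by rintro rfl; exact hxn.1 hS.2
        have hS' := hsh S hS.1 x (n + 1) hx.1 (by omega) hS.2 hxn.1
        obtain ⟨y, hy⟩ := hint _ hS' T hT.1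
        rw [mem_inter, mem_insert, mem_erase] at hy
        rcases hy with ⟨rfl | hy, hyT⟩
        · exact hxn.2 hyT
        · exact hy.1 (hST y hy.2 hyT)
      · intro T hT i j hi hij hj hiS
        obtain ⟨S, hS, rfl⟩ := mem_image.1 hT
        rw [mem_filter] at hS
        rw [mem_erase] at hj
        have := mem_Icc.1 ((mem_powersetCard.1 (hF hS.1)).1 hj.2)
        have hi' : i ≠ n + 1 := by omega
        have hiS' : i ∉ S := fun h => hiS (mem_erase.2 ⟨hi', h⟩)
        refine mem_image.2 ⟨insert i (S.erase j), mem_filter.2 ⟨hsh S hS.1 i j hi hij hj.2 hiS', ?_⟩, ?_⟩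
        · simp [hS.2, hj.1.symm]
        · rw [erase_insert_of_ne hi', erase_right_comm]
      · have : miss ((F.filter (fun S => n + 1 ∈ S)).image (fun S => S.erase (n + 1))) 1
            = cnt F {1, n + 1} {n + 1} := by
          unfold miss cnt
          rw [filter_image, card_image_of_injOn, filter_filter]
          · simp only [inter_pair_right _ hne, mem_erase, not_and]
            congr 1
            ext S
            simp only [mem_filter]
            constructor
            · rintro ⟨h1, h2, h3⟩; exact ⟨h1, h3 hne, h2⟩
            · rintro ⟨h1, h2, h3⟩; exact ⟨h1, h3, fun _ => h2⟩
          · exact hinj.mono (fun x hx => (mem_filter.1 (Finset.mem_coe.1 hx)).1)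
        rw [this, show n - (k - 1) - 1 = n - k by omega]; exact hz
    have L0 : (n - 3).choose (n - k - 1) ≤ cnt F {1, n + 1} ∅ →
        cnt F {1, n + 1} {1, n + 1} + (n - 3).choose (k - 2) ≤ (n - 1).choose (k - 2) := by
      intro hz
      exact fam_lovasz (b := k) (c := n - k - 1) hF hint hP (by simp) hm (by rw [hPc]; omega)
        (by simp) (by omega) (by omega) (by omega) (by omega) hz
    have L1 : (n - 3).choose (n - k) ≤ cnt F {1, n + 1} {n + 1} →
        cnt F {1, n + 1} {1} + (n - 3).choose (k - 1) ≤ (n - 1).choose (k - 1) := by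
      intro hz
      exact fam_lovasz (b := k - 1) (c := n - k) hF hint hP (by simp; omega) hm (by simp; omega)
        (by simp; omega) (by omega) (by omega) (by omega) (by omega) hz
    have e1 : (n + 1 - 3).choose (k - 1) = (n - 3).choose (k - 2) + (n - 3).choose (k - 1) :=
      pas (by omega) (by omega)
    have e2 : (n + 1 - 3).choose (n + 1 - k - 1) =
        (n - 3).choose (n - k - 1) + (n - 3).choose (n - k) := by
      rw [show n + 1 - k - 1 = n - k by omega]
      exact pas (by omega) (by omega)
    have e3 : (n + 1 - 1).choose (k - 1) = (n - 1).choose (k - 2) + (n - 1).choose (k - 1) :=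
      pas (by omega) (by omega)
    rw [e2] at hmiss
    rw [e1, e2, e3]
    rcases Nat.le_total ((n - 3).choose (n - k - 1)) (cnt F {1, n + 1} ∅) with hz | hz <;>
    rcases Nat.le_total ((n - 3).choose (n - k)) (cnt F {1, n + 1} {n + 1}) with hy | hy
    · have := I0 hz; have := I1 hy; omega
    · have := I0 hz; have := L0 hz; omega
    · have := I1 hy; have := L1 hy; omega
    · have := I0 (by omega); have := L0 (by omega); omega

lemma large_case {n k : ℕ} (hk : 3 ≤ k) (hnk : 2 * k < n) (w : ℕ) :
    ∀ F : Finset (Finset ℕ), wt F = w → F ⊆ powersetCard k (Icc 1 n) →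
    (∀ A ∈ F, ∀ B ∈ F, (A ∩ B).Nonempty) →
    (∀ i ∈ Icc 1 n, (n - 4).choose (n - k - 1) ≤ miss F i) →
    F.card + (n - 3).choose (k - 1) ≤ (n - 1).choose (k - 1) + (n - 3).choose (n - k - 1) := by
  induction w using Nat.strong_induction_on with
  | _ w ih =>
  intro F hw hF hint hmiss
  have e1 : (n - 3).choose (k - 1) = (n - 4).choose (k - 2) + (n - 4).choose (k - 1) :=
    pas (by omega) (by omega)
  have e2 : (n - 3).choose (n - k - 1) =
      (n - 4).choose (n - k - 2) + (n - 4).choose (n - k - 1) := pas (by omega) (by omega)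
  have e3 : (n - 4).choose (n - k - 2) = (n - 4).choose (k - 2) := by
    rw [← Nat.choose_symm (by omega), show n - 4 - (n - k - 2) = k - 2 by omega]
  by_cases hsmall : ∃ i ∈ Icc 1 n, miss F i ≤ (n - 3).choose (n - k - 1)
  · obtain ⟨i, hi, hi2⟩ := hsmall
    have := small_case (u := 3) hnk le_rfl hk hF hint hi
      (by rw [show n - 3 - 1 = n - 4 by omega]; exact hmiss i hi) hi2
    rw [show n - 3 - 1 = n - 4 by omega] at this
    omega
  push Not at hsmall
  by_cases hsh : Shifted F
  · exact shifted_bound n k F (by omega) (by omega) hF hint hsh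
      (hsmall 1 (by rw [mem_Icc]; omega)).le
  unfold Shifted at hsh
  push Not at hsh
  obtain ⟨S, hS, i, j, hi1, hij, hj, hiS, hnot⟩ := hsh
  have hjn := mem_Icc.1 ((mem_powersetCard.1 (hF hS)).1 hj)
  have hi : i ∈ Icc 1 n := by rw [mem_Icc]; omega
  have hjm : j ∈ Icc 1 n := by rw [mem_Icc]; omega
  have hne : i ≠ j := by omega
  by_cases hz : (n - 4).choose (n - k - 1) ≤ cnt F {i, j} ∅
  · rw [← card_sh F i j]
    refine ih (wt (sh F i j)) (hw ▸ wt_sh hij hS hj hiS hnot) (sh F i j) rfl (sh_subset hi hF)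
      (sh_int hne hint) ?_
    intro l hl
    by_cases hli : l = i
    · subst hli
      exact hz.trans (miss_sh_i F l j)
    · exact (hmiss l hl).trans (miss_sh_ge F hli)
  push Not at hz
  have hP : ({i, j} : Finset ℕ) ⊆ Icc 1 n := by
    rw [insert_subset_iff, singleton_subset_iff]; exact ⟨hi, hjm⟩
  have hPc : ({i, j} : Finset ℕ).card = 2 := card_pair hne
  have hm : (n - 2) + ({i, j} : Finset ℕ).card = (Icc 1 n).card := by
    rw [hPc, Nat.card_Icc]; omega
  have htot := cnt_pair F hne
  have hmi := miss_pair_left F hne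
  have hmj := miss_pair_right F hne
  have hi3 := hsmall i hi
  have hj3 := hsmall j hjm
  have hc1 : (n - 4).choose (n - k - 1) ≤ (n - 4).choose (n - k - 2) :=
    choose_le_aux (by omega) (by omega)
  have WZ : cnt F {i, j} {i, j} + cnt F {i, j} ∅ ≤ (n - 2).choose (k - 2) := by
    rcases Nat.eq_zero_or_pos (cnt F {i, j} ∅) with h0 | h0
    · rw [h0]
      exact cnt_le hF hP hm (by rw [hPc]; omega)
    · refine fam_lin (b := k) (c := n - k - 2) (n - k - 2) (n - 4) hF hint hP (by simp) hm
        (a := k - 2) (by rw [hPc]; omega) (by simp) (by omega) (by omega) (by omega) le_rfl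
        (by omega) (by omega) (by rw [Nat.choose_self]; exact h0) (by omega) ?_
      intro N h1 h2
      have : N.choose (n - k - 2) ≤ N.choose (k - 2) := choose_le_aux (by omega) (by omega)
      omega
  have e4 : (n - 2).choose (k - 1) = (n - 3).choose (k - 2) + (n - 3).choose (k - 1) :=
    pas (by omega) (by omega)
  have e5 : (n - 3).choose (k - 2) = (n - 4).choose (k - 3) + (n - 4).choose (k - 2) :=
    pas (by omega) (by omega)
  have e6 : (n - 1).choose (k - 1) = (n - 2).choose (k - 2) + (n - 2).choose (k - 1) :=
    pas (by omega) (by omega)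
  have e7 : (n - 4).choose (n - k - 1) = (n - 4).choose (k - 3) := by
    rw [← Nat.choose_symm (by omega), show n - 4 - (n - k - 1) = k - 3 by omega]
  have lin : ∀ p q, p ≠ q → ({p, q} : Finset ℕ) = {i, j} →
      (n - 4).choose (n - k - 1) ≤ cnt F {i, j} {q} →
      cnt F {i, j} {q} ≤ (n - 3).choose (n - k - 1) →
      cnt F {i, j} {p} + cnt F {i, j} {q} ≤ 2 * (n - 3).choose (k - 2) := by
    intro p q hpq hpq' h1 h2
    refine fam_lin (a := k - 1) (b := k - 1) (c := n - k - 1) (n - 4) (n - 3) hF hint hP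
      (by simpa using hpq) hm
      (by simp; omega) (by simp; omega) (by omega) (by omega) (by omega) (by omega)
      (by omega) (by omega) h1 h2 ?_
    intro N h1 h2
    rcases (show N = n - 4 ∨ N = n - 3 by omega) with rfl | rfl <;> omega
  have XY : cnt F {i, j} {i} + cnt F {i, j} {j} ≤ 2 * (n - 3).choose (k - 2) := by
    rcases Nat.le_total (cnt F {i, j} {j}) ((n - 3).choose (n - k - 1)) with h1 | h1
    · exact lin i j hne rfl (by omega) h1
    · have := fam_lovasz (Q := {i}) (Q' := {j}) (a := k - 1) (b := k - 1) (c := n - k - 1)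
        (N := n - 3) hF hint hP (by simpa using hne) hm (by simp; omega) (by simp; omega)
        (by omega) (by omega) (by omega) (by omega) h1
      have := lin j i hne.symm (pair_comm _ _) (by omega) (by omega)
      omega
  omega

theorem diversity_bound (n k u : ℕ) (hk : 0 < k) (hnk : 2 * k < n)
    (hu3 : 3 ≤ u) (huk : u ≤ k)
    (F : Finset (Finset ℕ)) (hF : F ⊆ (Finset.Icc 1 n).powersetCard k)
    (hint : ∀ A ∈ F, ∀ B ∈ F, (A ∩ B).Nonempty)
    (hdiv : (n - u - 1).choose (n - k - 1) ≤ diversity n F) :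
    (F.card : ℤ) ≤ ((n - 1).choose (k - 1) : ℤ)
      + ((n - u - 1).choose (n - k - 1) : ℤ) - ((n - u - 1).choose (k - 1) : ℤ) := by
  have hmiss : ∀ i ∈ Icc 1 n, (n - u - 1).choose (n - k - 1) ≤ miss F i := by
    intro i hi
    have h1 : deg F i ≤ maxDeg n F := Finset.le_sup (f := deg F) hi
    have h2 : deg F i + miss F i = F.card := card_filter_add_card_filter_not _
    unfold diversity at hdiv
    omega
  suffices h : F.card + (n - u - 1).choose (k - 1) ≤
      (n - 1).choose (k - 1) + (n - u - 1).choose (n - k - 1) by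
    zify at h
    linarith
  by_cases hsmall : ∃ i ∈ Icc 1 n, miss F i ≤ (n - 3).choose (n - k - 1)
  · obtain ⟨i, hi, hi2⟩ := hsmall
    exact small_case hnk hu3 huk hF hint hi (hmiss i hi) hi2
  push Not at hsmall
  have h1 := large_case (by omega) hnk (wt F) F rfl hF hint (fun i hi =>
    (Nat.choose_le_choose _ (by omega)).trans (hsmall i hi).le)
  have h2 := anti_aux (a := k - 1) (c := n - k - 1) (N₁ := n - u - 1) (N₂ := n - 3)
    (by omega) (by omega) (by omega) (by omega)
  omega
end

section
/- Let n > 2k ≥ 8 and let F ⊆ C([n],k) be an intersecting family. Suppose γ(F) > C(n-u-1, n-k-1) for some integer u with 4 ≤ u ≤ k. Then |F| ≤ C(n-1,k-1) + C(n-u-1,n-k-1) - C(n-u-1,k-1) - C(n-k-2,k-2) + 1. -/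
open Finset

open scoped FinsetFamily

namespace DivDrop

/-- all `r`-subsets of members of `A` -/
def sh (r : ℕ) (A : Finset (Finset ℕ)) : Finset (Finset ℕ) := A.biUnion (powersetCard r)

lemma mem_sh {r : ℕ} {A : Finset (Finset ℕ)} {T : Finset ℕ} :
    T ∈ sh r A ↔ ∃ S ∈ A, T ⊆ S ∧ T.card = r := by
  simp [sh, mem_powersetCard]

lemma sh_mono {r : ℕ} {A B : Finset (Finset ℕ)} (h : A ⊆ B) : sh r A ⊆ sh r B :=
  biUnion_subset_biUnion_of_subset_left _ h

/-- pull back to `Fin N` -/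
lemma exists_fin (N : ℕ) (A : Finset (Finset ℕ)) (h : ∀ S ∈ A, S ⊆ range N) :
    ∃ A' : Finset (Finset (Fin N)), A = A'.map (mapEmbedding Fin.valEmbedding).toEmbedding := by
  refine ⟨univ.filter (fun S => S.map Fin.valEmbedding ∈ A), ?_⟩
  ext S
  simp only [mem_map, mem_filter, mem_univ, true_and]
  constructor
  · intro hS
    have : (S.attachFin (fun x hx => by simpa using h S hS hx)).map Fin.valEmbedding = S := by
      ext x; simp
    exact ⟨_, by rw [this]; exact hS, this⟩
  · rintro ⟨T, hT, rfl⟩; exact hT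

lemma sh_map (N s r : ℕ) (hrs : r ≤ s) (A : Finset (Finset (Fin N)))
    (hA : (A : Set (Finset (Fin N))).Sized s) :
    sh r (A.map (mapEmbedding Fin.valEmbedding).toEmbedding) =
      (∂^[s - r] A).map (mapEmbedding Fin.valEmbedding).toEmbedding := by
  ext T
  simp only [mem_sh, mem_map, mem_shadow_iterate_iff_exists_mem_card_add]
  constructor
  · rintro ⟨_, ⟨S, hS, rfl⟩, hT, hc⟩
    obtain ⟨T', hT', rfl⟩ := (Finset.subset_map_iff).1 hT
    have := hA hS
    refine ⟨T', ⟨S, hS, hT', ?_⟩, rfl⟩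
    rw [card_map] at hc
    omega
  · rintro ⟨T', ⟨S, hS, hTS, hc⟩, rfl⟩
    have := hA hS
    refine ⟨_, ⟨S, hS, rfl⟩, ?_, ?_⟩
    · exact (Finset.map_subset_map).2 hTS
    · change (T'.map _).card = r
      rw [card_map]; omega

lemma kk_nat (s r : ℕ) (hrs : r ≤ s) (A C : Finset (Finset ℕ)) (hA : ∀ S ∈ A, S.card = s)
    (hC : Colex.IsInitSeg C s) (hCA : C.card ≤ A.card) : (sh r C).card ≤ (sh r A).card := by
  obtain ⟨N, hN⟩ : ∃ N, ∀ S ∈ A ∪ C, S ⊆ range N := by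
    refine ⟨((A ∪ C).biUnion id).sup id + 1, fun S hS x hx => ?_⟩
    rw [mem_range, Nat.lt_succ_iff]
    exact le_sup (f := id) (mem_biUnion.2 ⟨S, hS, hx⟩)
  obtain ⟨A', rfl⟩ := exists_fin N A (fun S hS => hN S (mem_union_left _ hS))
  obtain ⟨C', rfl⟩ := exists_fin N C (fun S hS => hN S (mem_union_right _ hS))
  have hA' : (A' : Set (Finset (Fin N))).Sized s := by
    intro S hS
    have := hA (S.map Fin.valEmbedding) (mem_map.2 ⟨S, hS, rfl⟩)
    simpa using this
  have hC' : Colex.IsInitSeg C' s := by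
    refine ⟨fun S hS => ?_, fun S T hS hT => ?_⟩
    · have := hC.1 (mem_coe.2 (mem_map.2 ⟨S, hS, rfl⟩))
      rw [← this]; exact (card_map _).symm
    · have := hC.2 (s := S.map Fin.valEmbedding) (t := T.map Fin.valEmbedding)
        (mem_map.2 ⟨S, hS, rfl⟩) ⟨?_, by simpa using hT.2⟩
      · obtain ⟨T', hT', h⟩ := mem_map.1 this
        have : T' = T := (mapEmbedding Fin.valEmbedding).injective h
        rwa [← this]
      · rw [map_eq_image, map_eq_image]
        exact (Colex.toColex_image_lt_toColex_image Fin.val_strictMono).2 hT.1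
  rw [sh_map N s r hrs _ hA', sh_map N s r hrs _ hC'.1, card_map, card_map]
  rw [card_map, card_map] at hCA
  exact iterated_kk hA' hCA hC'

lemma initSeg_full (M s : ℕ) : Colex.IsInitSeg (powersetCard s (range M)) s := by
  refine ⟨fun S hS => (mem_powersetCard.1 hS).2, fun S T hS hT => ?_⟩
  rw [mem_powersetCard] at hS ⊢
  refine ⟨fun x hx => ?_, hT.2⟩
  rw [mem_range]
  exact Colex.forall_lt_mono hT.1.le (fun b hb => by simpa using hS.1 hb) x hx

lemma exists_initSeg (M s : ℕ) : ∀ d ≤ M.choose s, ∃ C ⊆ powersetCard s (range M),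
    C.card = M.choose s - d ∧ Colex.IsInitSeg C s := by
  intro d
  induction d with
  | zero => intro _; exact ⟨_, Subset.rfl, by simp, initSeg_full M s⟩
  | succ d ih =>
    intro hd
    obtain ⟨C, hC, hc, hI⟩ := ih (by omega)
    have hne : C.Nonempty := by rw [← card_pos]; omega
    obtain ⟨S, hS, hmax⟩ := exists_max_image C toColex hne
    refine ⟨C.erase S, (erase_subset _ _).trans hC, by rw [card_erase_of_mem hS]; omega, ?_, ?_⟩
    · intro T hT; exact hI.1 (mem_coe.2 (mem_of_mem_erase (mem_coe.1 hT)))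
    · intro T U hT hU
      have hT' := mem_of_mem_erase hT
      refine mem_erase.2 ⟨?_, hI.2 hT' hU⟩
      rintro rfl
      exact absurd (hmax T hT') (not_le.2 hU.1)

lemma kk_split (m m' s r : ℕ) (hm : m' ≤ m) (hs : s + 1 ≤ m) (hrs : r ≤ s)
    (A : Finset (Finset ℕ))
    (hA : ∀ S ∈ A, S.card = s + 1) (h1 : m.choose (s + 1) ≤ A.card)
    (h2 : A.card ≤ m.choose (s + 1) + m'.choose s) :
    ∃ Y ⊆ powersetCard s (range m'), A.card = m.choose (s + 1) + Y.card ∧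
      m.choose (r + 1) + (sh r Y).card ≤ (sh (r + 1) A).card := by
  obtain ⟨Y, hY, hYc, hYI⟩ := exists_initSeg m' s (m'.choose s - (A.card - m.choose (s + 1)))
    (by omega)
  have hmY : ∀ T ∈ Y, ∀ x ∈ T, x < m := fun T hT x hx => by
    have := (mem_powersetCard.1 (hY hT)).1 hx
    rw [mem_range] at this; omega
  have hmY' : ∀ T ∈ Y, m ∉ T := fun T hT hx => by simpa using hmY T hT m hx
  refine ⟨Y, hY, by omega, ?_⟩
  set C := powersetCard (s + 1) (range m) ∪ Y.image (insert m) with hCdef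
  have hinj : ∀ Z : Finset (Finset ℕ), (∀ T ∈ Z, m ∉ T) → (Z.image (insert m)).card = Z.card := by
    intro Z hZ
    apply card_image_of_injOn
    intro T hT U hU h
    have := congrArg (fun W => W.erase m) h
    simpa [erase_insert (hZ T hT), erase_insert (hZ U hU)] using this
  have hdisj : ∀ (t : ℕ) (Z : Finset (Finset ℕ)),
      Disjoint (powersetCard t (range m)) (Z.image (insert m)) := by
    intro t Z
    rw [disjoint_left]
    intro T hT hT'
    obtain ⟨U, _, rfl⟩ := mem_image.1 hT'
    have := (mem_powersetCard.1 hT).1 (mem_insert_self m U)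
    simp at this
  have hCc : C.card = A.card := by
    rw [hCdef, card_union_of_disjoint (hdisj _ _), hinj Y hmY', card_powersetCard, card_range]
    omega
  have hI : Colex.IsInitSeg C (s + 1) := by
    refine ⟨fun S hS => ?_, fun S T hS hT => ?_⟩
    · rcases mem_union.1 (mem_coe.1 hS) with h | h
      · exact (mem_powersetCard.1 h).2
      · obtain ⟨U, hU, rfl⟩ := mem_image.1 h
        rw [card_insert_of_notMem (hmY' U hU), hYI.1 (mem_coe.2 hU)]
    · rcases mem_union.1 hS with h | h
      · exact mem_union_left _ ((initSeg_full m (s + 1)).2 h hT)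
      · obtain ⟨U, hU, rfl⟩ := mem_image.1 h
        have hle : ∀ x ∈ T, x ≤ m := Colex.forall_le_mono hT.1.le (fun b hb => by
          rcases mem_insert.1 hb with rfl | hb
          · exact le_rfl
          · exact (hmY U hU b hb).le)
        by_cases hmT : m ∈ T
        · refine mem_union_right _ (mem_image.2 ⟨T.erase m, ?_, insert_erase hmT⟩)
          refine hYI.2 hU ⟨?_, by rw [card_erase_of_mem hmT, hT.2]; rfl⟩
          have := (Colex.toColex_sdiff_lt_toColex_sdiff (s := T) (t := insert m U) (u := {m})
            (by simpa using hmT) (by simp)).2 hT.1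
          rwa [sdiff_singleton_eq_erase, sdiff_singleton_eq_erase, erase_insert (hmY' U hU)] at this
        · refine mem_union_left _ (mem_powersetCard.2 ⟨fun x hx => ?_, hT.2⟩)
          rw [mem_range]
          exact lt_of_le_of_ne (hle x hx) (fun h => hmT (h ▸ hx))
  refine le_trans ?_ (kk_nat (s + 1) (r + 1) (by omega) A C hA hI hCc.le)
  have hshm : ∀ T ∈ sh r Y, m ∉ T := by
    intro T hT hmT
    obtain ⟨S, hS, hTS, _⟩ := mem_sh.1 hT
    exact hmY' S hS (hTS hmT)
  rw [← hinj _ hshm]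
  nth_rewrite 1 [← card_range m]
  rw [← card_powersetCard, ← card_union_of_disjoint (hdisj _ _)]
  apply card_le_card
  intro T hT
  rcases mem_union.1 hT with h | h
  · obtain ⟨hTr, hTc⟩ := mem_powersetCard.1 h
    obtain ⟨S, hTS, hSr, hSc⟩ := exists_subsuperset_card_eq hTr (n := s + 1) (by omega)
      (by simpa using hs)
    exact mem_sh.2 ⟨S, mem_union_left _ (mem_powersetCard.2 ⟨hSr, hSc⟩), hTS, hTc⟩
  · obtain ⟨U, hU, rfl⟩ := mem_image.1 h
    obtain ⟨S, hS, hUS, hUc⟩ := mem_sh.1 hU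
    refine mem_sh.2 ⟨insert m S, mem_union_right _ (mem_image_of_mem _ hS),
      insert_subset_insert _ hUS, ?_⟩
    rw [card_insert_of_notMem (hshm U hU), hUc]

/-- bipartite counting -/
lemma exp0 (X : Finset ℕ) (s r : ℕ) (hrs : r ≤ s) (hN : X.card ≤ s + r) (Y : Finset (Finset ℕ))
    (hY : Y ⊆ powersetCard s X) : Y.card ≤ (sh r Y).card := by
  have h := card_mul_le_card_mul (s := Y) (t := sh r Y) (fun S T => T ⊆ S)
    (m := s.choose r) (n := s.choose r) ?_ ?_
  · exact Nat.le_of_mul_le_mul_right h (Nat.choose_pos hrs)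
  · intro S hS
    rw [← (mem_powersetCard.1 (hY hS)).2, ← card_powersetCard]
    apply card_le_card
    intro T hT
    rw [mem_powersetCard] at hT
    rw [mem_bipartiteAbove]
    exact ⟨mem_sh.2 ⟨S, hS, hT⟩, hT.1⟩
  · intro T hT
    obtain ⟨S0, hS0, hTS0, hTc⟩ := mem_sh.1 hT
    have hTX : T ⊆ X := hTS0.trans (mem_powersetCard.1 (hY hS0)).1
    calc _ ≤ (powersetCard (s - r) (X \ T)).card := by
          apply card_le_card_of_injOn (fun S => S \ T)
          · intro S hS
            rw [mem_coe, mem_bipartiteBelow] at hS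
            have := mem_powersetCard.1 (hY hS.1)
            simp only [mem_coe, mem_powersetCard]
            refine ⟨sdiff_subset_sdiff this.1 Subset.rfl, ?_⟩
            rw [card_sdiff_of_subset hS.2]; omega
          · intro S hS S' hS' h
            rw [mem_coe, mem_bipartiteBelow] at hS hS'
            rw [← sdiff_union_of_subset hS.2, ← sdiff_union_of_subset hS'.2]
            simp only at h
            rw [h]
      _ = (X.card - r).choose (s - r) := by
          rw [card_powersetCard, card_sdiff_of_subset hTX, hTc]
      _ ≤ s.choose (s - r) := Nat.choose_le_choose _ (by omega)
      _ = s.choose r := Nat.choose_symm hrs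

lemma exp1 : ∀ (N : ℕ) (X : Finset ℕ) (s r : ℕ), X.card = N → r ≤ s → N < s + r →
    ∀ Y : Finset (Finset ℕ), Y ⊆ powersetCard s X → Y.Nonempty →
      Y.card + s.choose r ≤ (sh r Y).card + 1 := by
  intro N
  induction N with
  | zero =>
    intro X s r hX hrs hN Y hY ⟨S, hS⟩
    have h := mem_powersetCard.1 (hY hS)
    have := card_le_card h.1
    omega
  | succ N ih =>
    intro X s r hX hrs hN Y hY hne
    obtain ⟨S, hS⟩ := hne
    have h := mem_powersetCard.1 (hY hS)
    have hle := card_le_card h.1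
    by_cases hSX : S = X
    · have hYS : Y = {S} := by
        refine eq_singleton_iff_unique_mem.2 ⟨hS, fun T hT => ?_⟩
        have hT := mem_powersetCard.1 (hY hT)
        rw [hSX]
        apply eq_of_subset_of_card_le hT.1
        rw [← hSX]; omega
      rw [hYS]
      simp [sh, h.2]; omega
    · obtain ⟨x, hxX, hxS⟩ : ∃ x ∈ X, x ∉ S := by
        by_contra hcon; push Not at hcon
        exact hSX (Subset.antisymm h.1 hcon)
      have hXe : (X.erase x).card = N := by rw [card_erase_of_mem hxX]; omega
      have hsN : s ≤ N := by
        have : S ⊆ X.erase x := subset_erase.2 ⟨h.1, hxS⟩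
        have := card_le_card this; omega
      obtain ⟨r, rfl⟩ : ∃ q, r = q + 1 := ⟨r - 1, by omega⟩
      obtain ⟨s, rfl⟩ : ∃ q, s = q + 1 := ⟨s - 1, by omega⟩
      set Y0 := Y.filter (fun T => x ∉ T) with hY0
      set Y1 := (Y.filter (fun T => x ∈ T)).image (fun T => T.erase x) with hY1
      have e1 := ih (X.erase x) (s + 1) (r + 1) hXe hrs (by omega) Y0 (by
        intro T hT
        obtain ⟨hT, hx⟩ := mem_filter.1 hT
        have hT := mem_powersetCard.1 (hY hT)
        exact mem_powersetCard.2 ⟨subset_erase.2 ⟨hT.1, hx⟩, hT.2⟩) ⟨S, mem_filter.2 ⟨hS, hxS⟩⟩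
      have e2 := exp0 (X.erase x) s r (by omega) (by omega) Y1 (by
        intro T' hT'
        obtain ⟨T, hT, rfl⟩ := mem_image.1 hT'
        obtain ⟨hT, hx⟩ := mem_filter.1 hT
        have hT := mem_powersetCard.1 (hY hT)
        exact mem_powersetCard.2 ⟨erase_subset_erase _ hT.1, by rw [card_erase_of_mem hx]; omega⟩)
      have c1 : Y1.card = (Y.filter (fun T => x ∈ T)).card := by
        apply card_image_of_injOn
        intro T hT U hU hTU
        rw [mem_coe, mem_filter] at hT hU
        rw [← insert_erase hT.2, ← insert_erase hU.2]
        simp only at hTU; rw [hTU]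
      have c2 := card_filter_add_card_filter_not (s := Y) (fun T => x ∈ T)
      rw [← hY0] at c2
      have hx1 : ∀ T ∈ sh r Y1, x ∉ T := by
        intro T hT hx
        obtain ⟨U, hU, hTU, _⟩ := mem_sh.1 hT
        obtain ⟨V, hV, rfl⟩ := mem_image.1 hU
        simpa using hTU hx
      have c3 : ((sh r Y1).image (insert x)).card = (sh r Y1).card := by
        apply card_image_of_injOn
        intro T hT U hU hTU
        have := congrArg (fun W => W.erase x) hTU
        simpa [erase_insert (hx1 T hT), erase_insert (hx1 U hU)] using this
      have c4 : (sh (r + 1) Y0 ∪ (sh r Y1).image (insert x)).card ≤ (sh (r + 1) Y).card := by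
        apply card_le_card
        apply union_subset (sh_mono (filter_subset _ _))
        intro T hT
        obtain ⟨U, hU, rfl⟩ := mem_image.1 hT
        obtain ⟨V, hV, hUV, hUc⟩ := mem_sh.1 hU
        obtain ⟨W, hW, rfl⟩ := mem_image.1 hV
        obtain ⟨hW, hxW⟩ := mem_filter.1 hW
        refine mem_sh.2 ⟨W, hW, insert_subset hxW (hUV.trans (erase_subset _ _)), ?_⟩
        rw [card_insert_of_notMem (hx1 U hU), hUc]
      rw [card_union_of_disjoint] at c4
      · omega
      · rw [disjoint_left]
        intro T hT hT'
        obtain ⟨U, hU, rfl⟩ := mem_image.1 hT'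
        obtain ⟨V, hV, hUV, _⟩ := mem_sh.1 hT
        exact (mem_filter.1 hV).2 (hUV (mem_insert_self _ _))

/-- cross-intersecting pairs -/
lemma cross (X : Finset ℕ) (b : ℕ) (A B : Finset (Finset ℕ))
    (hB : B ⊆ powersetCard b X) (hAB : ∀ S ∈ A, ∀ T ∈ B, (S ∩ T).Nonempty) :
    B.card + (sh b (A.image (fun S => X \ S))).card ≤ X.card.choose b := by
  rw [← card_powersetCard, ← card_union_of_disjoint]
  · apply card_le_card (union_subset hB _)
    intro T hT
    obtain ⟨S, hS, hTS, hc⟩ := mem_sh.1 hT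
    obtain ⟨S, _, rfl⟩ := mem_image.1 hS
    exact mem_powersetCard.2 ⟨hTS.trans sdiff_subset, hc⟩
  · rw [disjoint_left]
    intro T hT hT'
    obtain ⟨S, hS, hTS, hc⟩ := mem_sh.1 hT'
    obtain ⟨S', hS', rfl⟩ := mem_image.1 hS
    obtain ⟨x, hx⟩ := hAB S' hS' T hT
    rw [mem_inter] at hx
    have := hTS hx.2
    rw [mem_sdiff] at this
    exact this.2 hx.1

lemma card_compl_image (X : Finset ℕ) (A : Finset (Finset ℕ)) (hA : ∀ S ∈ A, S ⊆ X) :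
    (A.image (fun S => X \ S)).card = A.card := by
  apply card_image_of_injOn
  intro S hS T hT h
  simp only at h
  rw [← Finset.sdiff_sdiff_eq_self (hA S hS), ← Finset.sdiff_sdiff_eq_self (hA T hT), h]

lemma cross_kk (X : Finset ℕ) (a b s m m' : ℕ) (A B : Finset (Finset ℕ))
    (hA : A ⊆ powersetCard a X) (hB : B ⊆ powersetCard (b + 1) X)
    (hAB : ∀ S ∈ A, ∀ T ∈ B, (S ∩ T).Nonempty) (hs : X.card = a + (s + 1)) (hbs : b ≤ s)
    (hm : m' ≤ m) (hsm : s + 1 ≤ m) (h1 : m.choose (s + 1) ≤ A.card)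
    (h2 : A.card ≤ m.choose (s + 1) + m'.choose s) :
    ∃ Y ⊆ powersetCard s (range m'), A.card = m.choose (s + 1) + Y.card ∧
      B.card + (m.choose (b + 1) + (sh b Y).card) ≤ X.card.choose (b + 1) := by
  have hc := card_compl_image X A (fun S hS => (mem_powersetCard.1 (hA hS)).1)
  obtain ⟨Y, hY, e1, e2⟩ := kk_split m m' s b hm hsm hbs (A.image (fun S => X \ S)) (by
    intro S hS
    obtain ⟨S', hS', rfl⟩ := mem_image.1 hS
    have := mem_powersetCard.1 (hA hS')
    rw [card_sdiff_of_subset this.1]; omega) (by omega) (by omega)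
  refine ⟨Y, hY, by omega, ?_⟩
  have := cross X (b + 1) A B hB hAB
  omega

lemma cross_lovasz (X : Finset ℕ) (a b s m : ℕ) (A B : Finset (Finset ℕ))
    (hA : A ⊆ powersetCard a X) (hB : B ⊆ powersetCard (b + 1) X)
    (hAB : ∀ S ∈ A, ∀ T ∈ B, (S ∩ T).Nonempty) (hs : X.card = a + (s + 1)) (hbs : b ≤ s)
    (hsm : s + 1 ≤ m) (h1 : m.choose (s + 1) ≤ A.card) :
    B.card + m.choose (b + 1) ≤ X.card.choose (b + 1) := by
  obtain ⟨A', hA', hc⟩ := exists_subset_card_eq h1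
  obtain ⟨Y, _, _, h⟩ := cross_kk X a b s m m A' B (hA'.trans hA) hB
    (fun S hS => hAB S (hA' hS)) hs hbs le_rfl hsm (by omega) (by omega)
  omega


/-- members avoiding `x` -/
def av (F : Finset (Finset ℕ)) (x : ℕ) : Finset (Finset ℕ) := F.filter (fun S => x ∉ S)

/-- the link of `x` -/
def lk (F : Finset (Finset ℕ)) (x : ℕ) : Finset (Finset ℕ) :=
  (F.filter (fun S => x ∈ S)).image (fun S => S.erase x)

lemma mem_av {F : Finset (Finset ℕ)} {x : ℕ} {S : Finset ℕ} : S ∈ av F x ↔ S ∈ F ∧ x ∉ S := by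
  simp [av]

lemma mem_lk {F : Finset (Finset ℕ)} {x : ℕ} {S : Finset ℕ} :
    S ∈ lk F x ↔ x ∉ S ∧ insert x S ∈ F := by
  simp only [lk, mem_image, mem_filter]
  constructor
  · rintro ⟨T, ⟨hT, hx⟩, rfl⟩
    exact ⟨notMem_erase _ _, by rwa [insert_erase hx]⟩
  · rintro ⟨hx, h⟩
    exact ⟨_, ⟨h, mem_insert_self _ _⟩, erase_insert hx⟩

lemma card_lk (F : Finset (Finset ℕ)) (x : ℕ) :
    (lk F x).card = (F.filter (fun S => x ∈ S)).card := by
  apply card_image_of_injOn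
  intro T hT U hU hTU
  rw [mem_coe, mem_filter] at hT hU
  rw [← insert_erase hT.2, ← insert_erase hU.2]
  simp only at hTU; rw [hTU]

lemma card_split (F : Finset (Finset ℕ)) (x : ℕ) : (av F x).card + (lk F x).card = F.card := by
  rw [card_lk, av, add_comm]
  exact card_filter_add_card_filter_not _

lemma av_sub {F : Finset (Finset ℕ)} {X : Finset ℕ} {k : ℕ} (hF : F ⊆ powersetCard k X) (x : ℕ) :
    av F x ⊆ powersetCard k (X.erase x) := by
  intro S hS
  rw [mem_av] at hS
  have := mem_powersetCard.1 (hF hS.1)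
  exact mem_powersetCard.2 ⟨subset_erase.2 ⟨this.1, hS.2⟩, this.2⟩

lemma lk_sub {F : Finset (Finset ℕ)} {X : Finset ℕ} {k : ℕ} (hF : F ⊆ powersetCard (k + 1) X)
    (x : ℕ) : lk F x ⊆ powersetCard k (X.erase x) := by
  intro S hS
  rw [mem_lk] at hS
  have := mem_powersetCard.1 (hF hS.2)
  rw [card_insert_of_notMem hS.1] at this
  exact mem_powersetCard.2 ⟨subset_erase.2 ⟨(subset_insert _ _).trans this.1, hS.1⟩, by omega⟩

lemma choose_anti (q s : ℕ) (h : q ≤ s) : (q + s).choose (s + 1) ≤ (q + s).choose s := by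
  have := Nat.choose_succ_right_eq (q + s) s
  rw [Nat.add_sub_cancel] at this
  have h2 : (q + s).choose (s + 1) * (s + 1) ≤ (q + s).choose s * (s + 1) := by
    rw [this]; exact Nat.mul_le_mul_left _ (by omega)
  exact Nat.le_of_mul_le_mul_right h2 (by omega)

/-- size of the 2-out-of-3 family -/
def MM (q s : ℕ) : ℕ := (q + s + 2).choose q + 2 * (q + s + 1).choose q

lemma gap (q s : ℕ) (hqs : q ≤ s) (X : Finset ℕ) (hX : X.card = q + s + 4)
    (F : Finset (Finset ℕ)) (hF : F ⊆ powersetCard (q + 2) X)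
    (hint : ∀ A ∈ F, ∀ B ∈ F, (A ∩ B).Nonempty) (hM : MM q s < F.card) (x : ℕ) (hx : x ∈ X) :
    (av F x).card ≤ (q + s).choose (s + 1) ∨
      (q + s + 1).choose (s + 1) + (q + s).choose s < (av F x).card := by
  by_contra hcon
  push Not at hcon
  obtain ⟨h1, h2⟩ := hcon
  have hcX : (X.erase x).card = q + s + 3 := by rw [card_erase_of_mem hx]; omega
  have hsp := card_split F x
  have hA := av_sub hF x
  have hB := lk_sub hF x
  have hAB : ∀ S ∈ av F x, ∀ T ∈ lk F x, (S ∩ T).Nonempty := by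
    intro S hS T hT
    rw [mem_av] at hS
    rw [mem_lk] at hT
    have := hint S hS.1 _ hT.2
    rwa [inter_insert_of_notMem hS.2] at this
  have p1 := Nat.choose_succ_succ (q + s) s
  have p2 := Nat.choose_succ_succ (q + s + 2) q
  have p3 := Nat.choose_succ_succ (q + s + 1) q
  have p4 := Nat.choose_succ_succ (q + s) q
  have s1 : (q + s).choose q = (q + s).choose s := Nat.choose_symm_add
  have s2 : (q + s + 1).choose q = (q + s + 1).choose (s + 1) :=
    Nat.choose_symm_add (a := q) (b := s + 1)
  simp only [Nat.succ_eq_add_one] at p1 p2 p3 p4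
  have e3 : q + s + 2 + 1 = q + s + 3 := rfl
  rw [e3] at p2
  have e2 : q + s + 1 + 1 = q + s + 2 := rfl
  rw [e2] at p3
  unfold MM at hM
  by_cases hc : (av F x).card < (q + s + 1).choose (s + 1)
  · have hq : 1 ≤ q := by
      by_contra hq
      obtain rfl : q = 0 := by omega
      simp at hc h1
      simp [hc] at h1
    obtain ⟨Y, hY, hc1, hc2⟩ := cross_kk (X.erase x) (q + 2) q s (q + s) (q + s) _ _ hA hB hAB
      (by omega) hqs le_rfl (by omega) (by omega) (by omega)
    have := exp0 (range (q + s)) s q hqs (by simp; omega) Y hY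
    rw [hcX] at hc2
    omega
  · obtain ⟨Y, hY, hc1, hc2⟩ := cross_kk (X.erase x) (q + 2) q s (q + s + 1) (q + s) _ _ hA hB hAB
      (by omega) hqs (by omega) (by omega) (by omega) (by omega)
    have := exp0 (range (q + s)) s q hqs (by simp; omega) Y hY
    rw [hcX] at hc2
    omega

lemma base_half (q : ℕ) (X : Finset ℕ) (hX : X.card = q + q + 4)
    (F : Finset (Finset ℕ)) (hF : F ⊆ powersetCard (q + 2) X)
    (hint : ∀ A ∈ F, ∀ B ∈ F, (A ∩ B).Nonempty) : F.card ≤ MM q q := by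
  have h := cross X (q + 2) F F hF hint
  have hc := card_compl_image X F (fun S hS => (mem_powersetCard.1 (hF hS)).1)
  have hle : (F.image (fun S => X \ S)).card ≤
      (sh (q + 2) (F.image (fun S => X \ S))).card := by
    apply card_le_card
    intro T hT
    refine mem_sh.2 ⟨T, hT, Subset.rfl, ?_⟩
    obtain ⟨S, hS, rfl⟩ := mem_image.1 hT
    have := mem_powersetCard.1 (hF hS)
    rw [card_sdiff_of_subset this.1]; omega
  have p1 : (q + q + 4).choose (q + 2) = (q + q + 3).choose (q + 1) + (q + q + 3).choose (q + 2) :=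
    Nat.choose_succ_succ _ _
  have p2 : (q + q + 3).choose (q + 1) = (q + q + 2).choose q + (q + q + 2).choose (q + 1) :=
    Nat.choose_succ_succ _ _
  have p3 : (q + q + 2).choose (q + 1) = (q + q + 1).choose q + (q + q + 1).choose (q + 1) :=
    Nat.choose_succ_succ _ _
  have s1 : (q + q + 3).choose (q + 1) = (q + q + 3).choose (q + 2) :=
    Nat.choose_symm_of_eq_add (by omega)
  have s2 : (q + q + 1).choose q = (q + q + 1).choose (q + 1) :=
    Nat.choose_symm_of_eq_add (by omega)
  rw [hX] at h
  unfold MM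
  omega

lemma stable_case : ∀ (t q s : ℕ), q + s = t → q ≤ s → ∀ (X : Finset ℕ), X.card = q + s + 4 →
    ∀ p ∈ X, (∀ x ∈ X, p ≤ x) → ∀ F : Finset (Finset ℕ), F ⊆ powersetCard (q + 2) X →
    (∀ A ∈ F, ∀ B ∈ F, (A ∩ B).Nonempty) →
    (∀ S ∈ F, ∀ j ∈ S, ∀ i ∈ X, i ∉ S → i < j → insert i (S.erase j) ∈ F) →
    (q + s).choose (s + 1) < (av F p).card → F.card ≤ MM q s := by
  intro t
  induction t using Nat.strong_induction_on with
  | _ t ih =>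
  intro q s ht hqs X hX p hp hmin F hF hint hst hdiv
  rcases hqs.eq_or_lt with rfl | hlt
  · exact base_half q X hX F hF hint
  by_contra hcon
  push Not at hcon
  have hgap := (gap q s hqs X hX F hF hint hcon p hp).resolve_left (by omega)
  rcases Nat.eq_zero_or_pos q with rfl | hq
  · have h1 : (av F p).card ≤ 1 := by
      rw [card_le_one]
      intro S hS T hT
      rw [mem_av] at hS hT
      have hS' := mem_powersetCard.1 (hF hS.1)
      have hT' := mem_powersetCard.1 (hF hT.1)
      obtain ⟨x, hx⟩ := hint S hS.1 T hT.1
      rw [mem_inter] at hx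
      have hpx : p < x := lt_of_le_of_ne (hmin x (hS'.1 hx.1)) (fun h => hS.2 (h ▸ hx.1))
      obtain ⟨y, hy⟩ := hint _ (hst S hS.1 x hx.1 p hp hS.2 hpx) T hT.1
      rw [mem_inter, mem_insert, mem_erase] at hy
      obtain ⟨hy | hy, hyT⟩ := hy
      · exact absurd (hy ▸ hyT) hT.2
      have hsub : ∀ U : Finset ℕ, U.card = 2 → x ∈ U → y ∈ U → U = {x, y} := by
        intro U hU hxU hyU
        symm
        apply eq_of_subset_of_card_le
        · intro w hw; simp at hw; rcases hw with rfl | rfl <;> assumption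
        · rw [hU, card_pair hy.1.symm]
      rw [hsub S hS'.2 hx.1 hy.2, hsub T hT'.2 hx.2 hyT]
    simp at hgap
    omega
  obtain ⟨q, rfl⟩ : ∃ q', q = q' + 1 := ⟨q - 1, by omega⟩
  obtain ⟨s, rfl⟩ : ∃ q', s = q' + 1 := ⟨s - 1, by omega⟩
  have hXne : X.Nonempty := ⟨p, hp⟩
  obtain ⟨z, hzX, hzmax⟩ := exists_max_image X id hXne
  simp only [id] at hzmax
  have hpz : p ≠ z := by
    rintro rfl
    have : X ⊆ {p} := fun x hx => by
      rw [mem_singleton]; exact le_antisymm (hzmax x hx) (hmin x hx)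
    have := card_le_card this
    simp at this; omega
  have hXz : (X.erase z).card = q + s + 5 := by rw [card_erase_of_mem hzX]; omega
  have hpXz : p ∈ X.erase z := mem_erase.2 ⟨hpz, hp⟩
  have hXzp : ((X.erase z).erase p).card = q + s + 4 := by
    rw [card_erase_of_mem hpXz]; omega
  have hF1 := av_sub hF z
  have hF2 := lk_sub hF z
  have hlt_z : ∀ i ∈ X, i ≠ z → i < z := fun i hi h => lt_of_le_of_ne (hzmax i hi) h
  have hint1 : ∀ A ∈ av F z, ∀ B ∈ av F z, (A ∩ B).Nonempty :=
    fun A hA B hB => hint A (mem_av.1 hA).1 B (mem_av.1 hB).1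
  have hint2 : ∀ A ∈ lk F z, ∀ B ∈ lk F z, (A ∩ B).Nonempty := by
    intro A hA B hB
    have hA' := mem_powersetCard.1 (hF2 hA)
    have hB' := mem_powersetCard.1 (hF2 hB)
    rw [mem_lk] at hA hB
    by_contra hne
    obtain ⟨y, hyX, hy⟩ : ∃ y ∈ X.erase z, y ∉ A ∪ B := by
      by_contra hc
      push Not at hc
      have h1 := card_le_card (show X.erase z ⊆ A ∪ B from hc)
      have h2 := card_union_le A B
      omega
    rw [mem_union, not_or] at hy
    rw [mem_erase] at hyX
    have h1 := hst _ hA.2 z (mem_insert_self _ _) y hyX.2 (by simp [hyX.1, hy.1])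
      (hlt_z y hyX.2 hyX.1)
    rw [erase_insert hA.1] at h1
    obtain ⟨w, hw⟩ := hint _ h1 _ hB.2
    rw [mem_inter, mem_insert, mem_insert] at hw
    apply hne
    rcases hw with ⟨rfl | hwA, rfl | hwB⟩
    · exact absurd rfl hyX.1
    · exact absurd hwB hy.2
    · exact absurd hwA hA.1
    · exact ⟨w, mem_inter.2 ⟨hwA, hwB⟩⟩
  have hst1 : ∀ S ∈ av F z, ∀ j ∈ S, ∀ i ∈ X.erase z, i ∉ S → i < j →
      insert i (S.erase j) ∈ av F z := by
    intro S hS j hj i hi hiS hij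
    rw [mem_av] at hS ⊢
    rw [mem_erase] at hi
    refine ⟨hst S hS.1 j hj i hi.2 hiS hij, ?_⟩
    simp [hS.2, hi.1.symm]
  have hst2 : ∀ S ∈ lk F z, ∀ j ∈ S, ∀ i ∈ X.erase z, i ∉ S → i < j →
      insert i (S.erase j) ∈ lk F z := by
    intro S hS j hj i hi hiS hij
    rw [mem_lk] at hS ⊢
    rw [mem_erase] at hi
    refine ⟨by simp [hS.1, hi.1.symm], ?_⟩
    have hjz : j ≠ z := fun h => hS.1 (h ▸ hj)
    have := hst _ hS.2 j (mem_insert_of_mem hj) i hi.2 (by simp [hi.1, hiS]) hij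
    rwa [erase_insert_of_ne hjz.symm, insert_comm] at this
  have hcomm1 : av (av F p) z = av (av F z) p := by
    ext S; simp only [mem_av]; tauto
  have hcomm2 : lk (av F p) z = av (lk F z) p := by
    ext S; simp only [mem_av, mem_lk, mem_insert]; tauto
  have hab := card_split (av F p) z
  rw [hcomm1, hcomm2] at hab
  have hsplit := card_split F z
  have hF1p := av_sub hF1 p
  have hF2p := av_sub hF2 p
  -- comparison of the two degrees
  have hba : (av (lk F z) p).card ≤ (av (av F z) p).card := by
    have h := card_mul_le_card_mul (s := av (lk F z) p) (t := av (av F z) p) (fun T S => T ⊆ S)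
      (m := s + 2) (n := s + 2) ?_ ?_
    · exact Nat.le_of_mul_le_mul_right h (by omega)
    · intro T hT
      have hT' := mem_powersetCard.1 (hF2p hT)
      rw [mem_av, mem_lk] at hT
      have hcs : (((X.erase z).erase p) \ T).card = s + 2 := by
        rw [card_sdiff_of_subset hT'.1, hXzp, hT'.2]; omega
      rw [← hcs]
      apply card_le_card_of_injOn (fun y => insert y T)
      · intro y hy
        simp only [mem_coe, mem_sdiff, mem_erase] at hy
        simp only [mem_coe, mem_bipartiteAbove, mem_av, mem_insert, not_or]
        have h1 := hst _ hT.1.2 z (mem_insert_self _ _) y hy.1.2.2 (by simp [hy.1.2.1, hy.2])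
          (hlt_z y hy.1.2.2 hy.1.2.1)
        rw [erase_insert hT.1.1] at h1
        exact ⟨⟨⟨h1, fun h => hy.1.2.1 h.symm, hT.1.1⟩, fun h => hy.1.1 h.symm, hT.2⟩,
          subset_insert _ _⟩
      · intro y hy y' hy' hyy
        simp only [mem_coe, mem_sdiff] at hy hy'
        simp only at hyy
        have : y ∈ insert y' T := hyy ▸ mem_insert_self _ _
        rcases mem_insert.1 this with h | h
        · exact h
        · exact absurd h hy.2
    · intro S hS
      have hS' := mem_powersetCard.1 (hF1p hS)
      calc _ ≤ (powersetCard (q + 2) S).card := by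
            apply card_le_card
            intro T hT
            rw [mem_bipartiteBelow] at hT
            exact mem_powersetCard.2 ⟨hT.2, (mem_powersetCard.1 (hF2p hT.1)).2⟩
        _ = q + 3 := by
            rw [card_powersetCard, hS'.2]
            exact Nat.choose_succ_self_right (q + 2)
        _ ≤ s + 2 := by omega
  -- arithmetic of binomials
  have n1 : q + 1 + (s + 1) = q + s + 2 := by omega
  have n2 : q + 1 + (s + 1) + 1 = q + s + 3 := by omega
  have n3 : q + 1 + (s + 1) + 2 = q + s + 4 := by omega
  have n4 : q + 1 + s = q + s + 1 := by omega
  have n5 : q + (s + 1) = q + s + 1 := by omega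
  have p1 : (q + s + 3).choose (s + 2) = (q + s + 2).choose (s + 1) + (q + s + 2).choose (s + 2) :=
    Nat.choose_succ_succ _ _
  have p2 : (q + s + 2).choose (s + 1) = (q + s + 1).choose s + (q + s + 1).choose (s + 1) :=
    Nat.choose_succ_succ _ _
  have p3 : (q + s + 2).choose (s + 2) = (q + s + 1).choose (s + 1) + (q + s + 1).choose (s + 2) :=
    Nat.choose_succ_succ _ _
  have p4 : (q + s + 4).choose (q + 1) = (q + s + 3).choose q + (q + s + 3).choose (q + 1) :=
    Nat.choose_succ_succ _ _
  have p5 : (q + s + 3).choose (q + 1) = (q + s + 2).choose q + (q + s + 2).choose (q + 1) :=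
    Nat.choose_succ_succ _ _
  have s1 : (q + s + 2).choose q = (q + s + 2).choose (s + 2) :=
    Nat.choose_symm_of_eq_add (by omega)
  rw [n2, n1] at hgap
  rw [show s + 1 + 1 = s + 2 from rfl] at hgap
  have hM1 : (av F z).card ≤ MM (q + 1) s := by
    refine ih (q + 1 + s) (by omega) (q + 1) s rfl (by omega) (X.erase z) (by omega) p hpXz
      (fun x hx => hmin x (mem_of_mem_erase hx)) (av F z) hF1 hint1 hst1 ?_
    rw [n4]; omega
  have hM2 : (lk F z).card ≤ MM q (s + 1) := by
    by_cases hb : (q + (s + 1)).choose (s + 1 + 1) < (av (lk F z) p).card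
    · exact ih (q + (s + 1)) (by omega) q (s + 1) rfl (by omega) (X.erase z) (by omega) p hpXz
        (fun x hx => hmin x (mem_of_mem_erase hx)) (lk F z) hF2 hint2 hst2 hb
    · rw [n5, show s + 1 + 1 = s + 2 from rfl] at hb
      have hB := lk_sub hF2 p
      have hcr := cross_lovasz ((X.erase z).erase p) (q + 3) q s (q + s + 2)
        (av (av F z) p) (lk (lk F z) p) hF1p hB (by
          intro S hS T hT
          simp only [mem_av, mem_lk] at hS hT
          obtain ⟨w, hw⟩ := hint S hS.1.1 _ hT.2.2
          simp only [mem_inter, mem_insert] at hw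
          rcases hw with ⟨hwS, rfl | rfl | hwT⟩
          · exact absurd hwS hS.1.2
          · exact absurd hwS hS.2
          · exact ⟨w, mem_inter.2 ⟨hwS, hwT⟩⟩) (by omega) (by omega) (by omega) (by omega)
      rw [hXzp] at hcr
      have hsp2 := card_split (lk F z) p
      unfold MM
      rw [show q + (s + 1) + 2 = q + s + 3 by omega, show q + (s + 1) + 1 = q + s + 2 by omega]
      omega
  unfold MM at hcon hM1 hM2
  rw [n2, n3] at hcon
  rw [show q + (s + 1) + 2 = q + s + 3 by omega, show q + (s + 1) + 1 = q + s + 2 by omega] at hM2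
  rw [show q + 1 + s + 2 = q + s + 3 by omega, show q + 1 + s + 1 = q + s + 2 by omega] at hM1
  omega

/-- the `(i,j)`-shift of a set relative to `F` -/
def sft (F : Finset (Finset ℕ)) (i j : ℕ) (S : Finset ℕ) : Finset ℕ :=
  if j ∈ S ∧ i ∉ S ∧ insert i (S.erase j) ∉ F then insert i (S.erase j) else S

lemma sft_cases (F : Finset (Finset ℕ)) (i j : ℕ) (S : Finset ℕ) :
    (j ∈ S ∧ i ∉ S ∧ insert i (S.erase j) ∉ F ∧ sft F i j S = insert i (S.erase j)) ∨
    ((j ∈ S → i ∉ S → insert i (S.erase j) ∈ F) ∧ sft F i j S = S) := by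
  unfold sft
  split_ifs with h
  · exact Or.inl ⟨h.1, h.2.1, h.2.2, rfl⟩
  · right; refine ⟨fun h1 h2 => ?_, rfl⟩
    by_contra h3; exact h ⟨h1, h2, h3⟩

lemma sft_inj (F : Finset (Finset ℕ)) (i j : ℕ) : Set.InjOn (sft F i j) (F : Set (Finset ℕ)) := by
  intro S hS T hT h
  rw [mem_coe] at hS hT
  rcases sft_cases F i j S with ⟨a1, a2, a3, a4⟩ | ⟨a1, a2⟩ <;>
  rcases sft_cases F i j T with ⟨b1, b2, b3, b4⟩ | ⟨b1, b2⟩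
  · rw [a4, b4] at h
    have := congrArg (fun W => insert j (W.erase i)) h
    simpa [erase_insert, a2, b2, insert_erase, a1, b1] using this
  · rw [a4, b2] at h; exact absurd (h ▸ hT) a3
  · rw [a2, b4] at h; exact absurd (h ▸ hS) b3
  · rwa [a2, b2] at h

lemma sft_int (F : Finset (Finset ℕ)) (i j : ℕ) (hij : i ≠ j)
    (hint : ∀ A ∈ F, ∀ B ∈ F, (A ∩ B).Nonempty) (S T : Finset ℕ) (hS : S ∈ F) (hT : T ∈ F) :
    (sft F i j S ∩ sft F i j T).Nonempty := by
  have key : ∀ S ∈ F, ∀ T ∈ F, j ∈ S → i ∉ S →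
      (j ∈ T → i ∉ T → insert i (T.erase j) ∈ F) → (insert i (S.erase j) ∩ T).Nonempty := by
    intro S hS T hT h1 h2 h3
    by_cases hiT : i ∈ T
    · exact ⟨i, by simp [hiT]⟩
    by_cases hjT : j ∈ T
    · obtain ⟨y, hy⟩ := hint S hS _ (h3 hjT hiT)
      simp only [mem_inter, mem_insert, mem_erase] at hy
      rcases hy with ⟨hyS, rfl | hy⟩
      · exact absurd hyS h2
      · exact ⟨y, by simp [hyS, hy]⟩
    · obtain ⟨y, hy⟩ := hint S hS T hT
      rw [mem_inter] at hy
      have : y ≠ j := fun h => hjT (h ▸ hy.2)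
      exact ⟨y, by simp [hy, this]⟩
  rcases sft_cases F i j S with ⟨a1, a2, a3, a4⟩ | ⟨a1, a2⟩ <;>
  rcases sft_cases F i j T with ⟨b1, b2, b3, b4⟩ | ⟨b1, b2⟩
  · rw [a4, b4]; exact ⟨i, by simp⟩
  · rw [a4, b2]; exact key S hS T hT a1 a2 b1
  · rw [a2, b4, inter_comm]; exact key T hT S hS b1 b2 a1
  · rw [a2, b2]; exact hint S hS T hT

lemma jump (q s : ℕ) (hqs : q ≤ s) (X : Finset ℕ) (hX : X.card = q + s + 4)
    (F : Finset (Finset ℕ)) (hF : F ⊆ powersetCard (q + 2) X)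
    (hint : ∀ A ∈ F, ∀ B ∈ F, (A ∩ B).Nonempty) (hM : MM q s < F.card)
    (hdiv : ∀ x ∈ X, (q + s).choose (s + 1) < (av F x).card)
    (i j : ℕ) (hi : i ∈ X) (hj : j ∈ X) (hij : i ≠ j) :
    (q + s).choose (s + 1) < (av (av F i) j).card := by
  by_contra hcon
  push Not at hcon
  have g1 := (gap q s hqs X hX F hF hint hM i hi).resolve_left (by have := hdiv i hi; omega)
  have g2 := (gap q s hqs X hX F hF hint hM j hj).resolve_left (by have := hdiv j hj; omega)
  have c1 := card_split (av F i) j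
  have c2 := card_split (av F j) i
  have hcomm : av (av F j) i = av (av F i) j := by
    ext S; simp only [mem_av]; tauto
  rw [hcomm] at c2
  have hc := choose_anti q s hqs
  have hP := lk_sub (av_sub hF i) j
  have hQ := lk_sub (av_sub hF j) i
  rw [erase_right_comm] at hQ
  have hcard : ((X.erase i).erase j).card = q + s + 2 := by
    rw [card_erase_of_mem (mem_erase.2 ⟨hij.symm, hj⟩), card_erase_of_mem hi]; omega
  have hcr := cross_lovasz ((X.erase i).erase j) (q + 1) q s (q + s + 1) _ _ hP hQ (by
    intro S hS T hT
    simp only [mem_lk, mem_av, mem_insert, not_or] at hS hT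
    obtain ⟨y, hy⟩ := hint _ hS.2.1 _ hT.2.1
    simp only [mem_inter, mem_insert] at hy
    rcases hy with ⟨rfl | hyS, rfl | hyT⟩
    · exact absurd rfl hij
    · exact absurd hyT hT.2.2.2
    · exact absurd hyS hS.2.2.2
    · exact ⟨y, mem_inter.2 ⟨hyS, hyT⟩⟩) (by omega) hqs (by omega) (by omega)
  rw [hcard] at hcr
  have p1 : (q + s + 2).choose (q + 1) = (q + s + 1).choose q + (q + s + 1).choose (q + 1) :=
    Nat.choose_succ_succ _ _
  have s1 : (q + s + 1).choose q = (q + s + 1).choose (s + 1) :=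
    Nat.choose_symm_of_eq_add (by omega)
  omega

lemma large (q s : ℕ) (hqs : q ≤ s) (X : Finset ℕ) (hX : X.card = q + s + 4) :
    ∀ (w : ℕ) (F : Finset (Finset ℕ)), ∑ S ∈ F, ∑ x ∈ S, x = w → F ⊆ powersetCard (q + 2) X →
    (∀ A ∈ F, ∀ B ∈ F, (A ∩ B).Nonempty) → MM q s < F.card →
    ∃ x ∈ X, (av F x).card ≤ (q + s).choose (s + 1) := by
  intro w
  induction w using Nat.strong_induction_on with
  | _ w ih =>
  intro F hw hF hint hM
  by_contra hdiv
  push Not at hdiv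
  by_cases hst : ∀ S ∈ F, ∀ j ∈ S, ∀ i ∈ X, i ∉ S → i < j → insert i (S.erase j) ∈ F
  · have hXne : X.Nonempty := by rw [← card_pos]; omega
    have := stable_case _ q s rfl hqs X hX (X.min' hXne) (min'_mem _ _)
      (fun x hx => min'_le _ _ hx) F hF hint hst (hdiv _ (min'_mem _ _))
    omega
  push Not at hst
  obtain ⟨S0, hS0, j, hj, i, hi, hiS, hij, hnot⟩ := hst
  have hjX : j ∈ X := (mem_powersetCard.1 (hF hS0)).1 hj
  have hinj := sft_inj F i j
  have hwt : ∀ S, j ∈ S → i ∉ S → ∑ x ∈ insert i (S.erase j), x < ∑ x ∈ S, x := by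
    intro S h1 h2
    rw [sum_insert (by simp [h2]), ← add_sum_erase S _ h1]
    omega
  have hlt : ∑ S ∈ F.image (sft F i j), ∑ x ∈ S, x < w := by
    rw [sum_image hinj, ← hw]
    apply sum_lt_sum
    · intro S hS
      rcases sft_cases F i j S with ⟨a1, a2, a3, a4⟩ | ⟨a1, a2⟩
      · rw [a4]; exact (hwt S a1 a2).le
      · rw [a2]
    · refine ⟨S0, hS0, ?_⟩
      rcases sft_cases F i j S0 with ⟨a1, a2, a3, a4⟩ | ⟨a1, a2⟩
      · rw [a4]; exact hwt S0 a1 a2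
      · exact absurd (a1 hj hiS) hnot
  obtain ⟨x, hx, hxc⟩ := ih _ hlt (F.image (sft F i j)) rfl (by
      intro T hT
      obtain ⟨S, hS, rfl⟩ := mem_image.1 hT
      have hS' := mem_powersetCard.1 (hF hS)
      rcases sft_cases F i j S with ⟨a1, a2, a3, a4⟩ | ⟨a1, a2⟩
      · rw [a4]
        refine mem_powersetCard.2 ⟨insert_subset hi ((erase_subset _ _).trans hS'.1), ?_⟩
        rw [card_insert_of_notMem (by simp [a2]), card_erase_of_mem a1, hS'.2]; rfl
      · rw [a2]; exact hF hS) (by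
      intro A hA B hB
      obtain ⟨S, hS, rfl⟩ := mem_image.1 hA
      obtain ⟨T, hT, rfl⟩ := mem_image.1 hB
      exact sft_int F i j hij.ne hint S T hS hT) (by rw [card_image_of_injOn hinj]; exact hM)
  by_cases hxi : x = i
  · subst hxi
    have h1 := jump q s hqs X hX F hF hint hM hdiv x j hi hjX hij.ne
    have h2 : av (av F x) j ⊆ av (F.image (sft F x j)) x := by
      intro S hS
      simp only [mem_av] at hS
      refine mem_av.2 ⟨mem_image.2 ⟨S, hS.1.1, ?_⟩, hS.1.2⟩
      simp [sft, hS.2]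
    have := card_le_card h2
    omega
  · have h1 := hdiv x hx
    have h2 : (av F x).card ≤ (av (F.image (sft F i j)) x).card := by
      apply card_le_card_of_injOn (sft F i j)
      · intro S hS
        rw [mem_coe, mem_av] at hS
        rw [mem_coe, mem_av]
        refine ⟨mem_image_of_mem _ hS.1, ?_⟩
        rcases sft_cases F i j S with ⟨a1, a2, a3, a4⟩ | ⟨a1, a2⟩
        · rw [a4]; simp [hxi, hS.2]
        · rw [a2]; exact hS.2
      · exact hinj.mono (fun S hS => (mem_av.1 hS).1)
    omega

lemma choose_le0 (m q s : ℕ) (hqs : q ≤ s) (hm : m ≤ s + q) : m.choose s ≤ m.choose q := by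
  have h := exp0 (range m) s q hqs (by simpa using hm) (powersetCard s (range m)) Subset.rfl
  rw [card_powersetCard, card_range] at h
  refine h.trans ?_
  nth_rewrite 2 [← card_range m]
  rw [← card_powersetCard]
  apply card_le_card
  intro T hT
  obtain ⟨S, hS, hTS, hc⟩ := mem_sh.1 hT
  exact mem_powersetCard.2 ⟨hTS.trans (mem_powersetCard.1 hS).1, hc⟩

lemma choose_le1 (m q s : ℕ) (hqs : q ≤ s) (hm : m < s + q) (hsm : s ≤ m) :
    m.choose s + s.choose q ≤ m.choose q + 1 := by
  have h := exp1 m (range m) s q (by simp) hqs hm (powersetCard s (range m)) Subset.rfl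
    (powersetCard_nonempty.2 (by simpa using hsm))
  rw [card_powersetCard, card_range] at h
  refine h.trans ?_
  have : (sh q (powersetCard s (range m))).card ≤ m.choose q := by
    nth_rewrite 2 [← card_range m]
    rw [← card_powersetCard]
    apply card_le_card
    intro T hT
    obtain ⟨S, hS, hTS, hc⟩ := mem_sh.1 hT
    exact mem_powersetCard.2 ⟨hTS.trans (mem_powersetCard.1 hS).1, hc⟩
  omega

lemma e_mono (q s m : ℕ) (hqs : q ≤ s) : ∀ d, m + d ≤ q + s →
    (m + d).choose (s + 1) + m.choose (q + 1) ≤ m.choose (s + 1) + (m + d).choose (q + 1) := by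
  intro d
  induction d with
  | zero => intro _; simp [add_comm]
  | succ d ih =>
    intro h
    have h1 := ih (by omega)
    have h2 := choose_le0 (m + d) q s hqs (by omega)
    have p1 : (m + (d + 1)).choose (s + 1) = (m + d).choose s + (m + d).choose (s + 1) :=
      Nat.choose_succ_succ _ _
    have p2 : (m + (d + 1)).choose (q + 1) = (m + d).choose q + (m + d).choose (q + 1) :=
      Nat.choose_succ_succ _ _
    omega

lemma find_level (s a m : ℕ) : ∀ d, m.choose (s + 1) < a → a ≤ (m + d).choose (s + 1) →
    ∃ e < d, (m + e).choose (s + 1) < a ∧ a ≤ (m + e + 1).choose (s + 1) := by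
  intro d
  induction d with
  | zero => intro h1 h2; simp at h2; omega
  | succ d ih =>
    intro h1 h2
    by_cases h : a ≤ (m + d).choose (s + 1)
    · obtain ⟨e, he, h3⟩ := ih h1 h
      exact ⟨e, by omega, h3⟩
    · exact ⟨d, by omega, by omega, h2⟩

lemma main (q s m : ℕ) (hq : 2 ≤ q) (hqs : q ≤ s) (hm : s + 1 ≤ m) (hm2 : m + 1 ≤ q + s)
    (X : Finset ℕ) (hX : X.card = q + s + 4)
    (F : Finset (Finset ℕ)) (hF : F ⊆ powersetCard (q + 2) X)
    (hint : ∀ A ∈ F, ∀ B ∈ F, (A ∩ B).Nonempty)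
    (hdiv : ∀ x ∈ X, m.choose (s + 1) < (av F x).card) :
    F.card + m.choose (q + 1) + s.choose q ≤
      (q + s + 3).choose (q + 1) + m.choose (s + 1) + 1 := by
  by_cases hM : F.card ≤ MM q s
  · obtain ⟨d, hd⟩ : ∃ d, q + s = m + d + 1 := ⟨q + s - m - 1, by omega⟩
    have h1 := e_mono q s m hqs d (by omega)
    have h2 := choose_le1 (m + d) q s hqs (by omega) (by omega)
    unfold MM at hM
    have p1 : (q + s + 3).choose (q + 1) = (q + s + 2).choose q + (q + s + 2).choose (q + 1) :=
      Nat.choose_succ_succ _ _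
    have p2 : (q + s + 2).choose (q + 1) = (q + s + 1).choose q + (q + s + 1).choose (q + 1) :=
      Nat.choose_succ_succ _ _
    have p3 : (q + s + 1).choose (q + 1) = (q + s).choose q + (q + s).choose (q + 1) :=
      Nat.choose_succ_succ _ _
    have p4 : (q + s + 1).choose (s + 1) = (q + s).choose s + (q + s).choose (s + 1) :=
      Nat.choose_succ_succ _ _
    have s1 : (q + s + 1).choose q = (q + s + 1).choose (s + 1) :=
      Nat.choose_symm_of_eq_add (by omega)
    have s2 : (q + s).choose q = (q + s).choose s := Nat.choose_symm_add
    have p5 : (q + s).choose (q + 1) = (m + d).choose q + (m + d).choose (q + 1) := by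
      rw [hd]; exact Nat.choose_succ_succ _ _
    have p6 : (q + s).choose (s + 1) = (m + d).choose s + (m + d).choose (s + 1) := by
      rw [hd]; exact Nat.choose_succ_succ _ _
    omega
  · obtain ⟨x, hx, hxc⟩ := large q s hqs X hX _ F rfl hF hint (by omega)
    have hdx := hdiv x hx
    obtain ⟨e, he, h1, h2⟩ := find_level s (av F x).card m (q + s - m) hdx
      (by rwa [show m + (q + s - m) = q + s by omega])
    have p0 : (m + e + 1).choose (s + 1) = (m + e).choose s + (m + e).choose (s + 1) :=
      Nat.choose_succ_succ _ _
    have hcX : (X.erase x).card = q + s + 3 := by rw [card_erase_of_mem hx]; omega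
    obtain ⟨Y, hY, hc1, hc2⟩ := cross_kk (X.erase x) (q + 2) q s (m + e) (m + e) _ _
      (av_sub hF x) (lk_sub hF x) (by
        intro S hS T hT
        rw [mem_av] at hS
        rw [mem_lk] at hT
        have := hint S hS.1 _ hT.2
        rwa [inter_insert_of_notMem hS.2] at this) (by omega) hqs le_rfl (by omega) (by omega)
        (by omega)
    have hYne : Y.Nonempty := by rw [← card_pos]; omega
    have hE := exp1 (m + e) (range (m + e)) s q (by simp) hqs (by omega) Y hY hYne
    have hmn := e_mono q s m hqs e (by omega)
    have hsp := card_split F x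
    rw [hcX] at hc2
    omega

end DivDrop

/-- If `n > 2k ≥ 8`, `F ⊆ C([n],k)` is intersecting and `γ(F) > C(n-u-1,n-k-1)` for some
integer `4 ≤ u ≤ k`, then
`|F| ≤ C(n-1,k-1) + C(n-u-1,n-k-1) - C(n-u-1,k-1) - C(n-k-2,k-2) + 1`. -/
theorem diversity_drop (n k u : ℕ) (hk : 4 ≤ k) (hnk : 2 * k < n)
    (hu4 : 4 ≤ u) (huk : u ≤ k)
    (F : Finset (Finset ℕ)) (hF : F ⊆ (Finset.Icc 1 n).powersetCard k)
    (hint : ∀ A ∈ F, ∀ B ∈ F, (A ∩ B).Nonempty)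
    (hdiv : (n - u - 1).choose (n - k - 1) < diversity n F) :
    (F.card : ℤ) ≤ ((n - 1).choose (k - 1) : ℤ)
      + ((n - u - 1).choose (n - k - 1) : ℤ) - ((n - u - 1).choose (k - 1) : ℤ)
      - ((n - k - 2).choose (k - 2) : ℤ) + 1 := by
  obtain ⟨q, rfl⟩ : ∃ q, k = q + 2 := ⟨k - 2, by omega⟩
  obtain ⟨s, rfl⟩ : ∃ s, n = q + s + 4 := ⟨n - q - 4, by omega⟩
  obtain ⟨m, hm⟩ : ∃ m, q + s + 3 = m + u := ⟨q + s + 3 - u, by omega⟩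
  have a1 : q + s + 4 - u - 1 = m := by omega
  have a2 : q + s + 4 - (q + 2) - 1 = s + 1 := by omega
  have a3 : q + s + 4 - 1 = q + s + 3 := by omega
  have a4 : q + 2 - 1 = q + 1 := by omega
  have a5 : q + s + 4 - (q + 2) - 2 = s := by omega
  have a6 : q + 2 - 2 = q := by omega
  rw [a1, a2] at hdiv ⊢
  rw [a3, a4, a5, a6]
  have h := DivDrop.main q s m (by omega) (by omega) (by omega) (by omega)
    (Finset.Icc 1 (q + s + 4)) (by simp) F hF hint (by
      intro x hx
      have h1 : deg F x ≤ maxDeg (q + s + 4) F := Finset.le_sup hx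
      have h2 := DivDrop.card_split F x
      rw [DivDrop.card_lk] at h2
      unfold deg at h1
      unfold diversity at hdiv
      omega)
  have h' : ((F.card + m.choose (q + 1) + s.choose q : ℕ) : ℤ) ≤
      (((q + s + 3).choose (q + 1) + m.choose (s + 1) + 1 : ℕ) : ℤ) := by exact_mod_cast h
  push_cast at h'
  linarith
end
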